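/- arXiv:2401.00441 — 2 statements merged into one kernel-verified Lean document; each statement's English description precedes it below -/
import Mathlib

section
/- Maximum-principle consequence for nodal structure: Let ε > 0 satisfy the smallness condition ε + ε^{2/(2+δ)}‖W₁‖_{L^∞} + ε‖W₂‖_{L^∞} + ε²‖V‖_{L^∞} ≤ c. Let u ∈ H¹(B(x,ε)) ∩ C⁰(closure of B(x,ε)) be a real-valued weak solution of −Δu − ∇·(W₁u) + W₂·∇u + Vu = 0 in B(x,ε). If u > 0 on ∂B(x,ε), then u > 0 in B(x,ε). -/
open MeasureTheory Metric
open scoped RealInnerProductSpace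

noncomputable section

abbrev V2 := EuclideanSpace ℝ (Fin 2)

/-- Smooth compactly supported functions in `Ω`, a proxy for `H¹₀(Ω)`. -/
def H10c (Ω : Set V2) (u : V2 → ℝ) : Prop :=
  ContDiff ℝ (⊤ : ℕ∞) u ∧ HasCompactSupport u ∧ tsupport u ⊆ Ω

/-- `u` is a weak solution of `-Δu - ∇·(W₁u) + W₂·∇u + Vu = 0` in `Ω`. -/
def IsWeakSol (Ω : Set V2) (W₁ W₂ : V2 → V2) (V u : V2 → ℝ) : Prop :=
  ∀ v, H10c Ω v →
    (∫ x in Ω, ⟪gradient u x, gradient v x⟫)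
      + (∫ x in Ω, u x * ⟪W₁ x, gradient v x⟫)
      + (∫ x in Ω, ⟪W₂ x, gradient u x⟫ * v x)
      + (∫ x in Ω, V x * u x * v x) = 0

/-! Since the Bochner integral of a non-integrable function is `0`, the weak formulation does not by
itself say that `∇u` is locally square integrable. This follows from the differentiability of `u`:
by Baire, `u` is Lipschitz from the points of a relatively open piece of any exceptional closed set,
and Caccioppoli estimates with cut-offs vanishing near that piece bound the energy around it.

Testing with `(u⁻)³` and the Poincaré inequality on a small ball gives `u ≥ 0`. If `u` vanished at a
point `p`, then testing with `(β - u)₊² / (u + r)`, where `β` is less than the boundary values,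
would bound the energy of a truncation of `-log (u + r)` uniformly in `r`, while this truncation is
of size `-log r` on `ball p r` because `u` is differentiable at `p`. Points having zero logarithmic
capacity in the plane, with rate `1 / log (1 / r)`, the energy would have to be of order
`log (1 / r)`. -/

open Set Filter Topology Function
open scoped Convolution Gradient ENNReal ContDiff

variable {E : Type*} [NormedAddCommGroup E] [InnerProductSpace ℝ E]

lemma integrable_inner_of_memLp {α H : Type*} [MeasurableSpace α] {μ : Measure α}
    [NormedAddCommGroup H] [InnerProductSpace ℝ H] {F G : α → H} (hF : MemLp F 2 μ)
    (hG : MemLp G 2 μ) : Integrable (fun y => ⟪F y, G y⟫) μ := by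
  refine (hF.norm.integrable_mul hG.norm).mono
    (hF.aestronglyMeasurable.inner hG.aestronglyMeasurable) (.of_forall fun y => ?_)
  simpa using norm_inner_le_norm (𝕜 := ℝ) (F y) (G y)

section Gradient

variable [FiniteDimensional ℝ E] {f g : E → ℝ} {y : E}

lemma norm_gradient (f : E → ℝ) (y : E) : ‖∇ f y‖ = ‖fderiv ℝ f y‖ :=
  LinearIsometryEquiv.norm_map _ _

lemma norm_gradient_le_of_lipschitzWith {K : NNReal} (hf : LipschitzWith K f) (y : E) :
    ‖∇ f y‖ ≤ K :=
  (norm_gradient f y).trans_le (norm_fderiv_le_of_lipschitz ℝ hf)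

lemma gradient_eq_zero_of_notMem_tsupport (hy : y ∉ tsupport f) : ∇ f y = 0 := by
  rw [gradient, fderiv_of_notMem_tsupport ℝ hy, map_zero]

lemma gradient_fun_sub (hf : DifferentiableAt ℝ f y) (hg : DifferentiableAt ℝ g y) :
    ∇ (fun y => f y - g y) y = ∇ f y - ∇ g y := by
  simp only [gradient, fderiv_fun_sub hf hg, map_sub]

lemma gradient_fun_mul (hf : DifferentiableAt ℝ f y) (hg : DifferentiableAt ℝ g y) :
    ∇ (fun y => f y * g y) y = f y • ∇ g y + g y • ∇ f y := by
  simp [gradient, fderiv_fun_mul hf hg, map_add]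

lemma gradient_comp {Φ : ℝ → ℝ} {d : ℝ} (hΦ : HasDerivAt Φ d (f y))
    (hf : DifferentiableAt ℝ f y) : ∇ (fun y => Φ (f y)) y = d • ∇ f y := by
  have h : HasFDerivAt (fun y => Φ (f y)) (d • fderiv ℝ f y) y :=
    hΦ.comp_hasFDerivAt y hf.hasFDerivAt
  simp [gradient, h.fderiv]

lemma continuous_gradient (hf : ContDiff ℝ 1 f) : Continuous (∇ f) :=
  (InnerProductSpace.toDual ℝ E).symm.continuous.comp (hf.continuous_fderiv one_ne_zero)

lemma inner_gradient_add_mul_eq_indicator {P : E → E} {c v : E → ℝ} {K : Set E}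
    (hK : tsupport v ⊆ K) (y : E) :
    ⟪P y, ∇ v y⟫ + c y * v y = ⟪K.indicator P y, ∇ v y⟫ + ⟪K.indicator c y, v y⟫ := by
  by_cases hy : y ∈ K
  · simp [hy, mul_comm]
  · have hy' : y ∉ tsupport v := fun h => hy (hK h)
    simp [image_eq_zero_of_notMem_tsupport hy', gradient_eq_zero_of_notMem_tsupport hy']

lemma measurable_gradient [MeasurableSpace E] [BorelSpace E] (f : E → ℝ) : Measurable (∇ f) :=
  (InnerProductSpace.toDual ℝ E).symm.continuous.measurable.comp (measurable_fderiv ℝ f)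

lemma memLp_gradient_of_hasCompactSupport [MeasurableSpace E] [BorelSpace E] {μ : Measure E}
    [IsFiniteMeasureOnCompacts μ] {f : E → ℝ} (hc : HasCompactSupport f) (hf : ContDiff ℝ 1 f)
    (p : ℝ≥0∞) : MemLp (∇ f) p μ :=
  (continuous_gradient hf).memLp_of_hasCompactSupport <|
    HasCompactSupport.of_support_subset_isCompact hc fun _ hy => by
      by_contra h; exact hy (gradient_eq_zero_of_notMem_tsupport h)

end Gradient

section TestFunctions

variable [FiniteDimensional ℝ E] [MeasurableSpace E] [BorelSpace E]

section Mollification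

variable {H : Type*} [NormedAddCommGroup H] [InnerProductSpace ℝ H] {P F : E → H}

lemma continuous_integral_inner_comp_sub (hP : MemLp P 2) (hF : MemLp F 2) :
    Continuous fun t : E => ∫ y, ⟪P y, F (y - t)⟫ := by
  have hsub (t : E) : MeasurePreserving (fun y : E => y - t) :=
    measurePreserving_sub_right volume t
  let τ : E → C(E, E) := fun t => ⟨fun y => y - t, by fun_prop⟩
  have hτ : Continuous τ := ContinuousMap.continuous_of_continuous_uncurry τ <|
    show Continuous fun p : E × E => p.2 - p.1 by fun_prop
  have htranslate : Continuous fun t => Lp.compMeasurePreserving (τ t) (hsub t) (hF.toLp F) :=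
    continuous_const.compMeasurePreservingLp hτ hsub ENNReal.ofNat_ne_top
  refine ((continuous_const (y := hP.toLp P)).inner htranslate).congr fun t => ?_
  rw [L2.inner_def]
  refine integral_congr_ae ?_
  filter_upwards [hP.coeFn_toLp, Lp.coeFn_compMeasurePreserving (hF.toLp F) (hsub t),
    (hsub t).quasiMeasurePreserving.ae_eq_comp hF.coeFn_toLp] with y hPy hcomp hFy
  have hτF : Lp.compMeasurePreserving (τ t) (hsub t) (hF.toLp F) y = F (y - t) := hcomp.trans hFy
  rw [hPy, hτF]

lemma integrable_mul_inner_comp_sub {φ : E → ℝ} (hP : MemLp P 2) (hF : MemLp F 2)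
    (hφ : Integrable φ) : Integrable (fun p : E × E => φ p.2 * ⟪P p.1, F (p.1 - p.2)⟫)
      (volume.prod volume) := by
  have hP2 : Integrable (fun p : E × E => ‖P p.1‖ ^ 2 * |φ p.2|) (volume.prod volume) :=
    (hP.integrable_norm_pow two_ne_zero).mul_prod hφ.abs
  have hF2 : Integrable (fun p : E × E => |φ p.2| * ‖F (p.1 - p.2)‖ ^ 2)
      (volume.prod volume) := by
    simpa using Integrable.convolution_integrand (ContinuousLinearMap.mul ℝ ℝ)
      hφ.abs (hF.integrable_norm_pow two_ne_zero) (μ := volume) (ν := volume)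
  have hsmul : AEStronglyMeasurable (fun p : E × E => φ p.2 • F (p.1 - p.2))
      (volume.prod volume) := by
    simpa using AEStronglyMeasurable.convolution_integrand (ContinuousLinearMap.lsmul ℝ ℝ)
      hφ.aestronglyMeasurable hF.aestronglyMeasurable (μ := volume) (ν := volume)
  have hmeas : AEStronglyMeasurable (fun p : E × E => φ p.2 * ⟪P p.1, F (p.1 - p.2)⟫)
      (volume.prod volume) :=
    (hP.aestronglyMeasurable.comp_fst.inner hsmul).congr <| .of_forall fun p => by
      simp only [inner_smul_right]
  refine (hP2.add hF2).mono hmeas (.of_forall fun p => ?_)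
  have hCS := abs_real_inner_le_norm (P p.1) (F (p.1 - p.2))
  have hAMGM := two_mul_le_add_sq ‖P p.1‖ ‖F (p.1 - p.2)‖
  have hinner : |⟪P p.1, F (p.1 - p.2)⟫| ≤ ‖P p.1‖ ^ 2 + ‖F (p.1 - p.2)‖ ^ 2 := by
    nlinarith [sq_nonneg ‖P p.1‖, sq_nonneg ‖F (p.1 - p.2)‖]
  simp only [Pi.add_apply, norm_mul, Real.norm_eq_abs]
  rw [abs_of_nonneg (a := _ + _) (by positivity)]
  linarith [mul_le_mul_of_nonneg_left hinner (abs_nonneg (φ p.2))]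

lemma integral_inner_convolution [CompleteSpace H] {φ : E → ℝ} (hP : MemLp P 2)
    (hF : MemLp F 2) (hφ : Continuous φ) (hc : HasCompactSupport φ) :
    ∫ y, ⟪P y, (φ ⋆[ContinuousLinearMap.lsmul ℝ ℝ] F) y⟫
      = ∫ t, φ t * ∫ y, ⟪P y, F (y - t)⟫ := by
  have hinner (y : E) : ⟪P y, (φ ⋆[ContinuousLinearMap.lsmul ℝ ℝ] F) y⟫
      = ∫ t, φ t * ⟪P y, F (y - t)⟫ := by
    have hi : Integrable fun t => φ t • F (y - t) :=
      hc.convolutionExists_left (ContinuousLinearMap.lsmul ℝ ℝ) hφ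
        (hF.locallyIntegrable one_le_two) y
    simp only [convolution_def, ContinuousLinearMap.lsmul_apply, ← integral_inner hi,
      inner_smul_right]
  simp_rw [hinner]
  rw [integral_integral_swap
    (integrable_mul_inner_comp_sub hP hF (hφ.integrable_of_hasCompactSupport hc))]
  simp_rw [integral_const_mul]

lemma tendsto_integral_inner_convolution [CompleteSpace H] {ι : Type*} {l : Filter ι}
    {φ : ι → ContDiffBump (0 : E)} (hφ : Tendsto (fun i => (φ i).rOut) l (𝓝 0))
    (hP : MemLp P 2) (hF : MemLp F 2) :
    Tendsto (fun i => ∫ y, ⟪P y, ((φ i).normed volume ⋆[ContinuousLinearMap.lsmul ℝ ℝ] F) y⟫)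
      l (𝓝 (∫ y, ⟪P y, F y⟫)) := by
  have hcont : Continuous fun t : E => ∫ y, ⟪P y, F (y - -t)⟫ :=
    (continuous_integral_inner_comp_sub hP hF).comp continuous_neg
  have hlim := ContDiffBump.convolution_tendsto_right_of_continuous (μ := volume) hφ hcont 0
  simp only [convolution_def, zero_sub, neg_neg, neg_zero, sub_zero] at hlim
  refine hlim.congr fun i => ?_
  rw [integral_inner_convolution hP hF (φ i).continuous_normed (φ i).hasCompactSupport_normed]
  rfl

end Mollification

lemma gradient_convolution {φ v : E → ℝ} (hφ : ContDiff ℝ 1 φ) (hφc : HasCompactSupport φ)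
    (hv : Differentiable ℝ v) (hgv : LocallyIntegrable (∇ v)) :
    ∇ (φ ⋆[ContinuousLinearMap.lsmul ℝ ℝ] v) = φ ⋆[ContinuousLinearMap.lsmul ℝ ℝ] ∇ v := by
  ext1 y
  have hvL : LocallyIntegrable v := hv.continuous.locallyIntegrable
  have hφcont := hφ.continuous
  have hφ'cont := hφ.continuous_fderiv one_ne_zero
  have hi : Integrable fun t => φ t • ∇ v (y - t) :=
    hφc.convolutionExists_left (ContinuousLinearMap.lsmul ℝ ℝ) hφcont hgv y
  have hconv := hφc.hasFDerivAt_convolution_left (ContinuousLinearMap.lsmul ℝ ℝ) hφ hvL y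
  have hflip (t : E) : HasFDerivAt (fun t => v (y - t)) (-(fderiv ℝ v (y - t))) t := by
    simpa using! (hv (y - t)).hasFDerivAt.comp t ((hasFDerivAt_id t).const_sub y)
  refine ext_inner_right ℝ fun a => ?_
  have hφ' : (fderiv ℝ φ ⋆[(ContinuousLinearMap.lsmul ℝ ℝ).precompL E] v) y a
      = ∫ t, fderiv ℝ φ t a * v (y - t) := by
    have hi' : ConvolutionExistsAt (fderiv ℝ φ) v y
        ((ContinuousLinearMap.lsmul ℝ ℝ).precompL E) volume :=
      (hφc.fderiv ℝ).convolutionExists_left _ hφ'cont hvL y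
    rw [convolution_def, ContinuousLinearMap.integral_apply hi'.integrable]
    simp [ContinuousLinearMap.precompL_apply]
  have hv' : ⟪(φ ⋆[ContinuousLinearMap.lsmul ℝ ℝ] ∇ v) y, a⟫
      = -∫ t, φ t * (-fderiv ℝ v (y - t)) a := by
    rw [real_inner_comm, convolution_def]
    simp [← integral_inner hi, inner_smul_right, inner_gradient_right, integral_neg]
  have hparts := integral_bilinear_hasFDerivAt_right_eq_neg_left_of_integrable (μ := volume)
    (f := φ) (f' := fderiv ℝ φ) (g := fun t => v (y - t)) (v := a)
    (B := ContinuousLinearMap.mul ℝ ℝ)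
    (Continuous.integrable_of_hasCompactSupport
      (by have := hv.continuous; simp only [ContinuousLinearMap.mul_apply']; fun_prop)
      (hφc.fderiv_apply ℝ a).mul_right)
    ((hi.const_inner a).neg.congr <| .of_forall fun t => by
      simp [inner_smul_right, inner_gradient_right])
    (Continuous.integrable_of_hasCompactSupport
      (by have := hv.continuous; simp only [ContinuousLinearMap.mul_apply']; fun_prop)
      hφc.mul_right)
    (fun t _ => (hφ.differentiable one_ne_zero t).hasFDerivAt) (fun t _ => hflip t)
  rw [inner_gradient_left, hconv.fderiv, hφ', hv']
  simpa only [ContinuousLinearMap.mul_apply', neg_neg] using (congrArg Neg.neg hparts).symm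

/-- `F` is square integrable on the compact subsets of `Ω`: the condition `F ∈ L²_loc(Ω)`. -/
def IsLocL2 {H : Type*} [NormedAddCommGroup H] (Ω : Set E) (F : E → H) : Prop :=
  ∀ K, IsCompact K → K ⊆ Ω → MemLp F 2 (volume.restrict K)

/-- Admissible test functions in `Ω`: differentiable functions with compact support in `Ω` and
square integrable gradient. They play the role of `H¹₀(Ω)`. -/
structure IsTest (Ω : Set E) (v : E → ℝ) : Prop where
  differentiable : Differentiable ℝ v
  hasCompactSupport : HasCompactSupport v
  tsupport_subset : tsupport v ⊆ Ω
  memLp_gradient : MemLp (∇ v) 2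

variable {Ω : Set E} {v : E → ℝ}

lemma IsTest.memLp (hv : IsTest Ω v) : MemLp v 2 :=
  hv.differentiable.continuous.memLp_of_hasCompactSupport hv.hasCompactSupport

lemma exists_contDiffBump_seq {F : Type*} [NormedAddCommGroup F] [NormedSpace ℝ F] {δ : ℝ}
    (hδ : 0 < δ) : ∃ φ : ℕ → ContDiffBump (0 : F),
      (∀ n, (φ n).rOut ≤ δ) ∧ Tendsto (fun n => (φ n).rOut) atTop (𝓝 0) := by
  have hpos (n : ℕ) : (0 : ℝ) < n + 2 := by positivity
  refine ⟨fun n => ⟨δ / (n + 2) / 2, δ / (n + 2), by have := hpos n; positivity,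
    half_lt_self (by have := hpos n; positivity)⟩, fun n => ?_, ?_⟩
  · exact div_le_self hδ.le (by have := Nat.cast_nonneg (α := ℝ) n; linarith)
  · exact tendsto_const_nhds.div_atTop
      (tendsto_atTop_add_const_right _ _ tendsto_natCast_atTop_atTop)

lemma tsupport_convolution_subset_cthickening {δ : ℝ} {φ : ContDiffBump (0 : E)}
    (hφ : φ.rOut ≤ δ) :
    tsupport (φ.normed volume ⋆[ContinuousLinearMap.lsmul ℝ ℝ] v) ⊆ cthickening δ (tsupport v) := by
  refine closure_minimal ((support_convolution_subset _).trans ?_) isClosed_cthickening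
  rintro _ ⟨a, ha, b, hb, rfl⟩
  rw [φ.support_normed_eq, mem_ball_zero_iff] at ha
  refine mem_cthickening_of_dist_le (a + b) b δ _ (subset_tsupport _ hb) ?_
  simpa only [dist_eq_norm, add_sub_cancel_right] using ha.le.trans hφ

lemma IsTest.exists_seq_contDiff_tendsto (hv : IsTest Ω v) (hΩ : IsOpen Ω) :
    ∃ K, IsCompact K ∧ K ⊆ Ω ∧ tsupport v ⊆ K ∧ ∃ w : ℕ → E → ℝ,
      (∀ n, ContDiff ℝ ∞ (w n)) ∧ (∀ n, tsupport (w n) ⊆ K) ∧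
      (∀ P : E → E, MemLp P 2 →
        Tendsto (fun n => ∫ y, ⟪P y, ∇ (w n) y⟫) atTop (𝓝 (∫ y, ⟪P y, ∇ v y⟫))) ∧
      ∀ c : E → ℝ, MemLp c 2 →
        Tendsto (fun n => ∫ y, ⟪c y, w n y⟫) atTop (𝓝 (∫ y, ⟪c y, v y⟫)) := by
  obtain ⟨δ, hδ, hδΩ⟩ :=
    hv.hasCompactSupport.isCompact.exists_cthickening_subset_open hΩ hv.tsupport_subset
  obtain ⟨φ, hφδ, hφ0⟩ := exists_contDiffBump_seq (F := E) hδ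
  have hgrad (n : ℕ) : ∇ ((φ n).normed volume ⋆[ContinuousLinearMap.lsmul ℝ ℝ] v)
      = (φ n).normed volume ⋆[ContinuousLinearMap.lsmul ℝ ℝ] ∇ v :=
    gradient_convolution (φ n).contDiff_normed (φ n).hasCompactSupport_normed hv.differentiable
      (hv.memLp_gradient.locallyIntegrable one_le_two)
  refine ⟨cthickening δ (tsupport v), hv.hasCompactSupport.isCompact.cthickening, hδΩ,
    self_subset_cthickening _,
    fun n => (φ n).normed volume ⋆[ContinuousLinearMap.lsmul ℝ ℝ] v, fun n => ?_,
    fun n => tsupport_convolution_subset_cthickening (hφδ n), fun P hP => ?_, fun c hc => ?_⟩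
  · exact (φ n).hasCompactSupport_normed.contDiff_convolution_left _ (φ n).contDiff_normed
      hv.differentiable.continuous.locallyIntegrable
  · simp only [hgrad]
    exact tendsto_integral_inner_convolution hφ0 hP hv.memLp_gradient
  · exact tendsto_integral_inner_convolution hφ0 hc hv.memLp

lemma isTest_of_contDiff {w : E → ℝ} (hw : ContDiff ℝ 1 w) (hc : HasCompactSupport w)
    (hΩ : tsupport w ⊆ Ω) : IsTest Ω w :=
  ⟨hw.differentiable one_ne_zero, hc, hΩ, memLp_gradient_of_hasCompactSupport hc hw 2⟩

section Functional

variable {P : E → E} {c : E → ℝ} {K : Set E}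

lemma IsTest.integrable_and_integral_eq (hv : IsTest Ω v) (hK : tsupport v ⊆ K)
    (hP : MemLp (K.indicator P) 2) (hc : MemLp (K.indicator c) 2) :
    Integrable (fun y => ⟪P y, ∇ v y⟫ + c y * v y) ∧
      ∫ y, (⟪P y, ∇ v y⟫ + c y * v y)
        = (∫ y, ⟪K.indicator P y, ∇ v y⟫) + ∫ y, ⟪K.indicator c y, v y⟫ := by
  simp_rw [inner_gradient_add_mul_eq_indicator hK]
  have hPv := integrable_inner_of_memLp hP hv.memLp_gradient
  have hcv := integrable_inner_of_memLp hc hv.memLp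
  exact ⟨hPv.add hcv, integral_add hPv hcv⟩

lemma IsTest.integrable_and_integral_eq_zero_of_smooth (hv : IsTest Ω v) (hΩ : IsOpen Ω)
    (hP : IsLocL2 Ω P) (hc : IsLocL2 Ω c)
    (hsmooth : ∀ w, ContDiff ℝ ∞ w → HasCompactSupport w → tsupport w ⊆ Ω →
      ∫ y, (⟪P y, ∇ w y⟫ + c y * w y) = 0) :
    Integrable (fun y => ⟪P y, ∇ v y⟫ + c y * v y) ∧
      ∫ y, (⟪P y, ∇ v y⟫ + c y * v y) = 0 := by
  obtain ⟨K, hK, hKΩ, hvK, w, hw, hwK, hPw, hcw⟩ := hv.exists_seq_contDiff_tendsto hΩ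
  have hPK := (memLp_indicator_iff_restrict hK.measurableSet).2 (hP K hK hKΩ)
  have hcK := (memLp_indicator_iff_restrict hK.measurableSet).2 (hc K hK hKΩ)
  obtain ⟨hint, hval⟩ := hv.integrable_and_integral_eq hvK hPK hcK
  refine ⟨hint, hval.trans (tendsto_nhds_unique ((hPw _ hPK).add (hcw _ hcK)) ?_)⟩
  refine tendsto_const_nhds.congr fun n => ?_
  have hwc : HasCompactSupport (w n) :=
    .of_support_subset_isCompact hK ((subset_tsupport _).trans (hwK n))
  have hwtest : IsTest Ω (w n) :=
    isTest_of_contDiff ((hw n).of_le (by simp)) hwc ((hwK n).trans hKΩ)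
  rw [← (hwtest.integrable_and_integral_eq (hwK n) hPK hcK).2,
    hsmooth _ (hw n) hwc ((hwK n).trans hKΩ)]

end Functional

end TestFunctions

section JunkIntegrals

variable {ι X T : Type*} [Fintype ι] [MeasurableSpace X] {μ : Measure X} [AddCommGroup T]
  [Module ℝ T]

/-- The real vector space of integrable functions (not classes) for `μ`. -/
def integrableSubmodule (μ : Measure X) : Submodule ℝ (X → ℝ) where
  carrier := {f | Integrable f μ}
  add_mem' := Integrable.add
  zero_mem' := integrable_zero X ℝ μ
  smul_mem' r _ hf := hf.smul r

/-- The integral as a linear form on the integrable functions. -/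
def integralₗ (μ : Measure X) : integrableSubmodule μ →ₗ[ℝ] ℝ where
  toFun f := ∫ x, f.1 x ∂μ
  map_add' f g := integral_add f.2 g.2
  map_smul' r f := integral_smul r f.1

open Classical in
/- The Bochner integral of a non-integrable function is `0`, so an identity between integrals that
are not known to converge carries hidden case distinctions. Each term that is not always integrable
is integrable only on a proper subspace of `T`; off these subspaces such a term contributes `0`, and
a real vector space is not a finite union of proper subspaces. -/
lemma sum_integral_integrable_eq_zero (t : ι → T →ₗ[ℝ] X → ℝ)
    (h : ∀ v, ∑ j, ∫ x, t j v x ∂μ = 0) (v : T) :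
    ∑ j with ∀ w, Integrable (t j w) μ, ∫ x, t j v x ∂μ = 0 := by
  let A (j : ι) : Submodule ℝ T := (integrableSubmodule μ).comap (t j)
  let L : T →ₗ[ℝ] ℝ := ∑ j : {j // ∀ w, Integrable (t j w) μ},
    integralₗ μ ∘ₗ (t j.1).codRestrict (integrableSubmodule μ) j.2
  have hL (w : T) : L w = ∑ j with ∀ w, Integrable (t j w) μ, ∫ x, t j w x ∂μ := by
    simp only [L, LinearMap.sum_apply]
    refine (Finset.sum_subtype _ (fun j => ?_) fun j => ∫ x, t j w x ∂μ).symm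
    exact Finset.mem_filter_univ j
  let p : Option {j // A j ≠ ⊤} → Subspace ℝ T := fun o => o.elim L.ker fun j => A j
  have hcover : ⋃ o, (p o : Set T) = univ := by
    refine eq_univ_of_forall fun w => ?_
    by_cases hw : ∃ j, A j ≠ ⊤ ∧ w ∈ A j
    · obtain ⟨j, hj, hwj⟩ := hw
      exact mem_iUnion.2 ⟨some ⟨j, hj⟩, hwj⟩
    · push Not at hw
      refine mem_iUnion.2 ⟨none, (hL w).trans <| (Finset.sum_filter _ _).trans ?_⟩
      refine (Finset.sum_congr rfl fun j _ => ?_).trans (h w)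
      refine ite_eq_left_iff.2 fun hj => (integral_undef fun hjw => hj fun w' => ?_).symm
      have htop : A j = ⊤ := by_contra fun hne => hw j hne hjw
      exact (htop ▸ Submodule.mem_top : w' ∈ A j)
  obtain ⟨_ | j, ho⟩ := Subspace.exists_eq_top_of_iUnion_eq_univ hcover
  · rw [← hL]
    exact (Submodule.eq_top_iff'.1 ho) v
  · exact absurd ho j.2

end JunkIntegrals

section WeakSolutions

variable [FiniteDimensional ℝ E]

lemma exists_contDiff_eventuallyEq_one {Ω K : Set E} (hΩ : IsOpen Ω) (hK : IsCompact K)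
    (hKΩ : K ⊆ Ω) : ∃ χ : E → ℝ, ContDiff ℝ ∞ χ ∧ HasCompactSupport χ ∧ tsupport χ ⊆ Ω ∧
      ∀ y ∈ K, χ =ᶠ[𝓝 y] 1 := by
  obtain ⟨K', hK', hKK', hK'Ω⟩ := exists_compact_between hK hΩ hKΩ
  obtain ⟨χ, hone, hzero, -⟩ := exists_contMDiffMap_one_nhds_of_subset_interior
    (modelWithCornersSelf ℝ E) (n := (⊤ : ℕ∞)) hK.isClosed hKK'
  have hsupp : support χ ⊆ K' := fun y hy => by_contra fun h => hy (hzero y h)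
  exact ⟨χ, χ.contMDiff.contDiff, .of_support_subset_isCompact hK' hsupp,
    (closure_minimal hsupp hK'.isClosed).trans hK'Ω, eventually_nhdsSet_iff_forall.1 hone⟩

variable [MeasurableSpace E] [BorelSpace E]

section Measurability

variable {Ω K : Set E}

lemma aestronglyMeasurable_of_forall_integrable_mul {c : E → ℝ} (hΩ : IsOpen Ω)
    (hK : IsCompact K) (hKΩ : K ⊆ Ω)
    (hc : ∀ v : E → ℝ, ContDiff ℝ ∞ v → HasCompactSupport v → tsupport v ⊆ Ω →
      IntegrableOn (fun y => c y * v y) Ω) : AEStronglyMeasurable c (volume.restrict K) := by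
  obtain ⟨χ, hχ, hχc, hχΩ, hone⟩ := exists_contDiff_eventuallyEq_one hΩ hK hKΩ
  refine ((hc χ hχ hχc hχΩ).mono_set hKΩ).aestronglyMeasurable.congr ?_
  filter_upwards [ae_restrict_mem hK.measurableSet] with y hy
  simp [(hone y hy).eq_of_nhds]

lemma aestronglyMeasurable_of_forall_integrable_inner_gradient {b : E → E} (hΩ : IsOpen Ω)
    (hK : IsCompact K) (hKΩ : K ⊆ Ω)
    (hb : ∀ v : E → ℝ, ContDiff ℝ ∞ v → HasCompactSupport v → tsupport v ⊆ Ω →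
      IntegrableOn (fun y => ⟪b y, ∇ v y⟫) Ω) : AEStronglyMeasurable b (volume.restrict K) := by
  obtain ⟨χ, hχ, hχc, hχΩ, hone⟩ := exists_contDiff_eventuallyEq_one hΩ hK hKΩ
  have hcoord (a : E) : AEStronglyMeasurable (fun y => ⟪b y, a⟫) (volume.restrict K) := by
    have hint := hb (fun y => χ y * ⟪a, y⟫) (hχ.mul (innerSL ℝ a).contDiff) hχc.mul_right
      (tsupport_mul_subset_left.trans hχΩ)
    refine (hint.mono_set hKΩ).aestronglyMeasurable.congr ?_
    filter_upwards [ae_restrict_mem hK.measurableSet] with y hy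
    have hlin : (fun y : E => χ y * ⟪a, y⟫) =ᶠ[𝓝 y] innerSL ℝ a := by
      filter_upwards [hone y hy] with z hz
      simp [hz]
    rw [inner_gradient_right, hlin.fderiv_eq, ContinuousLinearMap.fderiv]
    simp [real_inner_comm]
  let e := stdOrthonormalBasis ℝ E
  have hsum : b = fun y => ∑ i, ⟪b y, e i⟫ • e i := by
    ext1 y
    conv_lhs => rw [← e.sum_repr' (b y)]
    simp only [real_inner_comm (e _)]
  rw [hsum]
  exact Finset.aestronglyMeasurable_fun_sum _ fun i _ => (hcoord (e i)).smul_const _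

end Measurability

section LocL2

variable {H H' : Type*} [NormedAddCommGroup H] [NormedAddCommGroup H'] {Ω Ω' : Set E} {F G : E → H}

lemma isLocL2_of_continuousOn (hF : ContinuousOn F Ω) : IsLocL2 Ω F := fun K hK hKΩ => by
  have : IsFiniteMeasure (volume.restrict K) := ⟨by simpa using hK.measure_lt_top⟩
  obtain ⟨C, hC⟩ := hK.exists_bound_of_continuousOn (hF.mono hKΩ)
  refine .of_bound ((hF.mono hKΩ).aestronglyMeasurable_of_isCompact hK hK.measurableSet) C ?_
  filter_upwards [ae_restrict_mem hK.measurableSet] with y hy using hC y hy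

lemma IsLocL2.mono_set (hF : IsLocL2 Ω F) (h : Ω' ⊆ Ω) : IsLocL2 Ω' F :=
  fun K hK hKΩ => hF K hK (hKΩ.trans h)

lemma IsLocL2.add (hF : IsLocL2 Ω F) (hG : IsLocL2 Ω G) : IsLocL2 Ω (fun y => F y + G y) :=
  fun K hK hKΩ => (hF K hK hKΩ).add (hG K hK hKΩ)

lemma IsLocL2.of_norm_le {b : E → H'} {g : E → ℝ} (hg : IsLocL2 Ω g)
    (hb : ∀ K, IsCompact K → K ⊆ Ω → AEStronglyMeasurable b (volume.restrict K))
    (h : ∀ y ∈ Ω, ‖b y‖ ≤ g y) : IsLocL2 Ω b := fun K hK hKΩ =>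
  (hg K hK hKΩ).mono' (hb K hK hKΩ) <| by
    filter_upwards [ae_restrict_mem hK.measurableSet] with y hy using h y (hKΩ hy)

end LocL2

/-- `u` solves `-div (∇u + b) + c = 0` weakly in `Ω`, tested against all of `IsTest Ω`, where the
lower-order terms obey `‖b‖ ≤ M₁ |u|` and `|c| ≤ M₂ ‖∇u‖ + M₀ |u|`. The equation of `IsWeakSol` has
this form with `b = u W₁` and `c = W₂ · ∇u + V u`; only the bounds matter for the estimates. -/
structure SolvesWith (Ω : Set E) (M₁ M₂ M₀ : ℝ) (u : E → ℝ) (b : E → E) (c : E → ℝ) : Prop where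
  norm_le : ∀ y ∈ Ω, ‖b y‖ ≤ M₁ * |u y|
  abs_le : ∀ y ∈ Ω, |c y| ≤ M₂ * ‖∇ u y‖ + M₀ * |u y|
  integrable : ∀ v, IsTest Ω v → Integrable fun y => ⟪∇ u y + b y, ∇ v y⟫ + c y * v y
  integral_eq_zero : ∀ v, IsTest Ω v → ∫ y, (⟪∇ u y + b y, ∇ v y⟫ + c y * v y) = 0

/-- The smooth test functions `H10c Ω` as a real vector space. -/
def smoothTests (Ω : Set V2) : Submodule ℝ (V2 → ℝ) where
  carrier := {v | H10c Ω v}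
  add_mem' := fun ⟨hv, hvc, hvΩ⟩ ⟨hw, hwc, hwΩ⟩ =>
    ⟨hv.add hw, hvc.add hwc, (tsupport_add _ _).trans (union_subset hvΩ hwΩ)⟩
  zero_mem' := ⟨contDiff_const, .zero, by simp [tsupport]⟩
  smul_mem' := fun r v ⟨hv, hvc, hvΩ⟩ =>
    ⟨contDiff_const.smul hv, hvc.smul_left (f := fun _ => r),
      (tsupport_smul_subset_right (fun _ => r) v).trans hvΩ⟩

/-- The gradient as a linear map on smooth test functions. -/
def gradientₗ (Ω : Set V2) : smoothTests Ω →ₗ[ℝ] V2 → V2 where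
  toFun v := ∇ v.1
  map_add' v w := funext fun y => by
    simp [gradient, fderiv_add (v.2.1.differentiable (by simp) y)
      (w.2.1.differentiable (by simp) y)]
  map_smul' r v := funext fun y => by
    simp [gradient, fderiv_const_smul (v.2.1.differentiable (by simp) y)]

/-- The four integrands of `IsWeakSol`, linear in the test function. -/
def weakTerm (Ω : Set V2) (W₁ W₂ : V2 → V2) (V u : V2 → ℝ) :
    Fin 4 → smoothTests Ω →ₗ[ℝ] V2 → ℝ := ![
  { toFun := fun v y => ⟪∇ u y, gradientₗ Ω v y⟫
    map_add' := fun v w => funext fun y => by simp [inner_add_right]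
    map_smul' := fun r v => funext fun y => by simp [inner_smul_right] },
  { toFun := fun v y => u y * ⟪W₁ y, gradientₗ Ω v y⟫
    map_add' := fun v w => funext fun y => by simp [inner_add_right, mul_add]
    map_smul' := fun r v => funext fun y => by simp [inner_smul_right]; ring },
  { toFun := fun v y => ⟪W₂ y, ∇ u y⟫ * v.1 y
    map_add' := fun v w => funext fun y => by simp [mul_add]
    map_smul' := fun r v => funext fun y => by simp; ring },
  { toFun := fun v y => V y * u y * v.1 y
    map_add' := fun v w => funext fun y => by simp [mul_add]
    map_smul' := fun r v => funext fun y => by simp; ring }]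

namespace IsWeakSol

variable {Ω Ω' : Set V2} {W₁ W₂ : V2 → V2} {V u : V2 → ℝ}

lemma mono (h : IsWeakSol Ω W₁ W₂ V u) (hΩ : MeasurableSet Ω) (hΩ' : Ω' ⊆ Ω) :
    IsWeakSol Ω' W₁ W₂ V u := fun v ⟨hv, hvc, hvΩ⟩ => by
  have hgrad (y : V2) (hy : y ∈ Ω \ Ω') : ∇ v y = 0 :=
    gradient_eq_zero_of_notMem_tsupport fun h => hy.2 (hvΩ h)
  have hval (y : V2) (hy : y ∈ Ω \ Ω') : v y = 0 :=
    image_eq_zero_of_notMem_tsupport fun h => hy.2 (hvΩ h)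
  rw [← h v ⟨hv, hvc, hvΩ.trans hΩ'⟩]
  congr 1
  · congr 1
    · congr 1 <;> exact (setIntegral_eq_of_subset_of_forall_sdiff_eq_zero hΩ hΩ'
        fun y hy => by simp [hgrad y hy]).symm
    · exact (setIntegral_eq_of_subset_of_forall_sdiff_eq_zero hΩ hΩ'
        fun y hy => by simp [hval y hy]).symm
  · exact (setIntegral_eq_of_subset_of_forall_sdiff_eq_zero hΩ hΩ'
      fun y hy => by simp [hval y hy]).symm

open Classical in
lemma exists_integrable_coefficients (h : IsWeakSol Ω W₁ W₂ V u)
    (hgrad : ∀ v, H10c Ω v → IntegrableOn (fun y => ⟪∇ u y, ∇ v y⟫) Ω) :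
    ∃ W₁' W₂' V', (W₁' = W₁ ∨ W₁' = 0) ∧ (W₂' = W₂ ∨ W₂' = 0) ∧ (V' = V ∨ V' = 0) ∧
      IsWeakSol Ω W₁' W₂' V' u ∧ ∀ v, H10c Ω v →
        IntegrableOn (fun y => u y * ⟪W₁' y, ∇ v y⟫) Ω ∧
        IntegrableOn (fun y => ⟪W₂' y, ∇ u y⟫ * v y) Ω ∧
        IntegrableOn (fun y => V' y * u y * v y) Ω := by
  let P (j : Fin 4) : Prop := ∀ v, IntegrableOn (weakTerm Ω W₁ W₂ V u j v) Ω
  have hsum (v : V2 → ℝ) (hv : H10c Ω v) : (∫ y in Ω, ⟪∇ u y, ∇ v y⟫)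
      + (if P 1 then ∫ y in Ω, u y * ⟪W₁ y, ∇ v y⟫ else 0)
      + (if P 2 then ∫ y in Ω, ⟪W₂ y, ∇ u y⟫ * v y else 0)
      + (if P 3 then ∫ y in Ω, V y * u y * v y else 0) = 0 := by
    have hv' := sum_integral_integrable_eq_zero (μ := volume.restrict Ω) (weakTerm Ω W₁ W₂ V u)
      (fun v => by rw [Fin.sum_univ_four]; exact h v v.2) ⟨v, hv⟩
    have hP : ∀ w, Integrable (weakTerm Ω W₁ W₂ V u 0 w) (volume.restrict Ω) :=
      fun w => hgrad w.1 w.2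
    rw [Finset.sum_filter, Fin.sum_univ_four, if_pos hP] at hv'
    exact hv'
  refine ⟨if P 1 then W₁ else 0, if P 2 then W₂ else 0, if P 3 then V else 0,
    by split_ifs <;> simp, by split_ifs <;> simp, by split_ifs <;> simp, fun v hv => ?_,
    fun v hv => ⟨?_, ?_, ?_⟩⟩
  · rw [← hsum v hv]
    split_ifs <;> simp
  · split_ifs with hP
    · exact hP ⟨v, hv⟩
    · simp
  · split_ifs with hP
    · exact hP ⟨v, hv⟩
    · simp
  · split_ifs with hP
    · exact hP ⟨v, hv⟩
    · simp

lemma integral_eq_zero_of_integrable (h : IsWeakSol Ω W₁ W₂ V u) {v : V2 → ℝ} (hv : H10c Ω v)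
    (hint : IntegrableOn (fun y => ⟪∇ u y, ∇ v y⟫) Ω ∧
      IntegrableOn (fun y => u y * ⟪W₁ y, ∇ v y⟫) Ω ∧
      IntegrableOn (fun y => ⟪W₂ y, ∇ u y⟫ * v y) Ω ∧ IntegrableOn (fun y => V y * u y * v y) Ω) :
    ∫ y, (⟪∇ u y + u y • W₁ y, ∇ v y⟫ + (⟪W₂ y, ∇ u y⟫ + V y * u y) * v y) = 0 := by
  obtain ⟨h₀, h₁, h₂, h₃⟩ := hint
  rw [← h v hv, ← integral_add h₀ h₁, ← integral_add (h₀.fun_add h₁) h₂,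
    ← integral_add ((h₀.fun_add h₁).fun_add h₂) h₃,
    ← setIntegral_eq_integral_of_forall_compl_eq_zero (s := Ω)]
  · simp only [inner_add_left, real_inner_smul_left, add_mul, add_assoc]
  · intro y hy
    have hy' : y ∉ tsupport v := fun hy' => hy (hv.2.2 hy')
    simp [gradient_eq_zero_of_notMem_tsupport hy', image_eq_zero_of_notMem_tsupport hy']

lemma solvesWith {M₁ M₂ M₀ : ℝ} (h : IsWeakSol Ω W₁ W₂ V u) (hΩ : IsOpen Ω)
    (hu : ContinuousOn u Ω) (hgrad : IsLocL2 Ω (∇ u)) (hW₁ : ∀ y ∈ Ω, ‖W₁ y‖ ≤ M₁)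
    (hW₂ : ∀ y ∈ Ω, ‖W₂ y‖ ≤ M₂) (hV : ∀ y ∈ Ω, |V y| ≤ M₀)
    (hint : ∀ v, H10c Ω v → IntegrableOn (fun y => ⟪∇ u y, ∇ v y⟫) Ω ∧
      IntegrableOn (fun y => u y * ⟪W₁ y, ∇ v y⟫) Ω ∧
      IntegrableOn (fun y => ⟪W₂ y, ∇ u y⟫ * v y) Ω ∧ IntegrableOn (fun y => V y * u y * v y) Ω) :
    SolvesWith Ω M₁ M₂ M₀ u (fun y => u y • W₁ y) fun y => ⟪W₂ y, ∇ u y⟫ + V y * u y := by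
  have hb (y : V2) (hy : y ∈ Ω) : ‖u y • W₁ y‖ ≤ M₁ * |u y| := by
    rw [norm_smul, Real.norm_eq_abs, mul_comm]
    gcongr
    exact hW₁ y hy
  have hc (y : V2) (hy : y ∈ Ω) : |⟪W₂ y, ∇ u y⟫ + V y * u y|
      ≤ M₂ * ‖∇ u y‖ + M₀ * |u y| := by
    refine (abs_add_le _ _).trans (add_le_add ((abs_real_inner_le_norm _ _).trans ?_) ?_)
    · gcongr
      exact hW₂ y hy
    · rw [abs_mul]
      gcongr
      exact hV y hy
  have hbloc : IsLocL2 Ω fun y => u y • W₁ y := by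
    refine .of_norm_le (isLocL2_of_continuousOn (hu.abs.const_mul M₁)) (fun K hK hKΩ => ?_) hb
    refine aestronglyMeasurable_of_forall_integrable_inner_gradient hΩ hK hKΩ
      fun v hv hvc hvΩ => ?_
    simpa only [real_inner_smul_left] using (hint v ⟨hv, hvc, hvΩ⟩).2.1
  have hcloc : IsLocL2 Ω fun y => ⟪W₂ y, ∇ u y⟫ + V y * u y := by
    refine .of_norm_le (.add (fun K hK hKΩ => (hgrad K hK hKΩ).norm.const_mul M₂)
      (isLocL2_of_continuousOn (hu.abs.const_mul M₀))) (fun K hK hKΩ => ?_) hc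
    refine aestronglyMeasurable_of_forall_integrable_mul hΩ hK hKΩ fun v hv hvc hvΩ => ?_
    have hv' := (hint v ⟨hv, hvc, hvΩ⟩).2.2
    simpa only [add_mul] using hv'.1.fun_add hv'.2
  have hweak (v : V2 → ℝ) (hv : IsTest Ω v) :=
    hv.integrable_and_integral_eq_zero_of_smooth hΩ (hgrad.add hbloc) hcloc
      fun w hw hwc hwΩ => h.integral_eq_zero_of_integrable ⟨hw, hwc, hwΩ⟩
        (hint w ⟨hw, hwc, hwΩ⟩)
  exact ⟨hb, hc, fun v hv => (hweak v hv).1, fun v hv => (hweak v hv).2⟩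

lemma exists_solvesWith {M₁ M₂ M₀ : ℝ} (h : IsWeakSol Ω W₁ W₂ V u) (hΩ : IsOpen Ω)
    (hu : ContinuousOn u Ω) (hgrad : IsLocL2 Ω (∇ u)) (hW₁ : ∀ y ∈ Ω, ‖W₁ y‖ ≤ M₁)
    (hW₂ : ∀ y ∈ Ω, ‖W₂ y‖ ≤ M₂) (hV : ∀ y ∈ Ω, |V y| ≤ M₀) :
    ∃ b c, SolvesWith Ω M₁ M₂ M₀ u b c := by
  have hgradint (v : V2 → ℝ) (hv : H10c Ω v) : IntegrableOn (fun y => ⟪∇ u y, ∇ v y⟫) Ω := by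
    have hv' : IsTest Ω v := isTest_of_contDiff (hv.1.of_le (by simp)) hv.2.1 hv.2.2
    have hK := (memLp_indicator_iff_restrict hv.2.1.measurableSet).2 (hgrad _ hv.2.1 hv.2.2)
    simpa using (hv'.integrable_and_integral_eq (c := 0) subset_rfl hK
      (by simp)).1.integrableOn
  obtain ⟨W₁', W₂', V', hW₁', hW₂', hV', hsol, hint⟩ :=
    h.exists_integrable_coefficients hgradint
  refine ⟨fun y => u y • W₁' y, fun y => ⟪W₂' y, ∇ u y⟫ + V' y * u y,
    hsol.solvesWith hΩ hu hgrad (fun y hy => ?_) (fun y hy => ?_) (fun y hy => ?_)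
      (fun v hv => ⟨hgradint v hv, hint v hv⟩)⟩
  · rcases hW₁' with rfl | rfl
    exacts [hW₁ y hy, by simpa using (norm_nonneg _).trans (hW₁ y hy)]
  · rcases hW₂' with rfl | rfl
    exacts [hW₂ y hy, by simpa using (norm_nonneg _).trans (hW₂ y hy)]
  · rcases hV' with rfl | rfl
    exacts [hV y hy, by simpa using (abs_nonneg _).trans (hV y hy)]

end IsWeakSol

section LipschitzCutoff

lemma exists_contDiff_lipschitzWith_abs_sub_le {K : NNReal} {f : E → ℝ} (hf : LipschitzWith K f)
    {κ : ℝ} (hκ : 0 < κ) :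
    ∃ g : E → ℝ, ContDiff ℝ ∞ g ∧ LipschitzWith K g ∧ ∀ y, |g y - f y| ≤ K * κ := by
  let φ : ContDiffBump (0 : E) := ⟨κ / 2, κ, by positivity, by linarith⟩
  let g : E → ℝ := φ.normed volume ⋆[ContinuousLinearMap.lsmul ℝ ℝ] f
  have hg (y : E) : g y = ∫ t, φ.normed volume t * f (y - t) := by simp [g, convolution_def]
  have hint (y : E) : Integrable fun t => φ.normed volume t * f (y - t) :=
    ((φ.contDiff_normed (n := 0)).continuous.mul (hf.continuous.comp
      (continuous_const.sub continuous_id))).integrable_of_hasCompactSupport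
      φ.hasCompactSupport_normed.mul_right
  refine ⟨g, φ.hasCompactSupport_normed.contDiff_convolution_left _ φ.contDiff_normed
    hf.continuous.locallyIntegrable, .of_dist_le_mul fun y z => ?_, fun y => ?_⟩
  · have hb (t : E) : ‖φ.normed volume t * f (y - t) - φ.normed volume t * f (z - t)‖
        ≤ φ.normed volume t * (K * dist y z) := by
      rw [← mul_sub, norm_mul, Real.norm_of_nonneg (φ.nonneg_normed t)]
      refine mul_le_mul_of_nonneg_left ?_ (φ.nonneg_normed t)
      simpa only [dist_sub_right] using hf.norm_sub_le_of_le (dist_eq_norm (y - t) (z - t)).ge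
    rw [Real.dist_eq, hg, hg, ← integral_sub (hint y) (hint z)]
    refine (norm_integral_le_of_norm_le (φ.integrable_normed.mul_const _)
      (Eventually.of_forall hb)).trans_eq ?_
    rw [integral_mul_const, φ.integral_normed, one_mul]
  · refine ContDiffBump.dist_normed_convolution_le hf.continuous.aestronglyMeasurable
      fun z hz => (hf.dist_le_mul z y).trans ?_
    gcongr
    exact (mem_ball.1 hz).le

lemma exists_contDiff_cutoff_infDist : ∃ C : ℝ, 0 ≤ C ∧ ∀ (A : Set E) {κ : ℝ}, 0 < κ →
    ∃ χ : E → ℝ, ContDiff ℝ ∞ χ ∧ (∀ y, χ y ∈ Icc 0 1) ∧ (∀ y, infDist y A ≤ κ → χ y = 0) ∧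
      (∀ y, 4 * κ ≤ infDist y A → χ y = 1) ∧ ∀ y, ‖∇ χ y‖ * (infDist y A + κ) ≤ C := by
  let φ : ContDiffBump (0 : ℝ) := ⟨2, 3, by norm_num, by norm_num⟩
  obtain ⟨C, hC⟩ := ContDiff.lipschitzWith_of_hasCompactSupport φ.hasCompactSupport φ.contDiff
    (n := 1) one_ne_zero
  refine ⟨C * 5, by positivity, fun A κ hκ => ?_⟩
  obtain ⟨d, hd, hdLip, hdA⟩ :=
    exists_contDiff_lipschitzWith_abs_sub_le (lipschitz_infDist_pt A) hκ
  replace hdA (y : E) : |d y - infDist y A| ≤ κ := by simpa using hdA y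
  have hχone (y : E) (hy : 4 * κ ≤ infDist y A) : 1 - φ (κ⁻¹ * d y) = 1 := by
    rw [φ.zero_of_le_dist, sub_zero]
    have h3 : 3 ≤ κ⁻¹ * d y := by
      rw [le_inv_mul_iff₀ hκ]
      linarith [(abs_le.1 (hdA y)).1]
    simpa using h3.trans (le_abs_self _)
  refine ⟨fun y => 1 - φ (κ⁻¹ * d y), contDiff_const.sub
    (φ.contDiff.comp (contDiff_const.mul hd)), fun y => ⟨by linarith [φ.le_one (x := κ⁻¹ * d y)],
      by linarith [φ.nonneg (x := κ⁻¹ * d y)]⟩, fun y hy => ?_, hχone, fun y => ?_⟩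
  · beta_reduce
    rw [φ.one_of_mem_closedBall, sub_self]
    have hdy := abs_le.1 (hdA y)
    have h0 := infDist_nonneg (x := y) (s := A)
    rw [mem_closedBall_zero_iff, Real.norm_eq_abs, abs_mul, abs_of_pos (inv_pos.2 hκ),
      inv_mul_le_iff₀ hκ, abs_le]
    constructor <;> linarith
  · rcases le_or_gt (4 * κ) (infDist y A) with hy | hy
    · have hmax : IsLocalMax (fun y => 1 - φ (κ⁻¹ * d y)) y := .of_forall fun z => by
        beta_reduce
        rw [hχone y hy]
        linarith [φ.nonneg (x := κ⁻¹ * d z)]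
      rw [norm_gradient, hmax.fderiv_eq_zero, norm_zero, zero_mul]
      positivity
    · have hLip : LipschitzWith (C * ‖κ⁻¹‖₊) fun y => 1 - φ (κ⁻¹ * d y) := by
        simpa using (LipschitzWith.const (1 : ℝ)).sub
          (hC.comp ((lipschitzWith_smul κ⁻¹).comp hdLip))
      have hgrad : ‖∇ (fun y => 1 - φ (κ⁻¹ * d y)) y‖ ≤ C * κ⁻¹ := by
        simpa [abs_of_pos hκ] using norm_gradient_le_of_lipschitzWith hLip y
      calc ‖∇ (fun y => 1 - φ (κ⁻¹ * d y)) y‖ * (infDist y A + κ)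
          ≤ C * κ⁻¹ * (5 * κ) := by
            have := infDist_nonneg (x := y) (s := A)
            gcongr
            linarith
        _ = C * 5 := by field_simp

end LipschitzCutoff

end WeakSolutions

section Caccioppoli

variable [FiniteDimensional ℝ E]

/-- `ξ` is a cut-off function supported in the compact set `S`, on which `u` stays so close to the
Lipschitz comparison function `ζ` that `|u - ζ| ‖∇ξ‖` is bounded by `K`. Testing with `ξ² (u - ζ)`
then bounds the energy of `u` by constants independent of the size of `∇ξ`. -/
structure IsAdaptedCutoff (S : Set E) (u ξ ζ : E → ℝ) (K n Z : ℝ) : Prop where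
  isCompact : IsCompact S
  differentiable_cutoff : Differentiable ℝ ξ
  support_cutoff_subset : support ξ ⊆ S
  abs_cutoff_le : ∀ y, |ξ y| ≤ 1
  differentiable_comparison : Differentiable ℝ ζ
  norm_gradient_comparison_le : ∀ y ∈ S, ‖∇ ζ y‖ ≤ n
  abs_sub_le : ∀ y ∈ S, |u y - ζ y| ≤ Z
  norm_gradient_mul_abs_sub_le : ∀ y ∈ S, ‖∇ ξ y‖ * |u y - ζ y| ≤ K

namespace IsAdaptedCutoff

variable {S G : Set E} {u ξ ζ : E → ℝ} {K n Z : ℝ} {y : E}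

lemma tsupport_subset (h : IsAdaptedCutoff S u ξ ζ K n Z) :
    tsupport (fun y => ξ y ^ 2 * (u y - ζ y)) ⊆ S :=
  closure_minimal (fun y hy => h.support_cutoff_subset fun h0 => hy (by simp [h0]))
    h.isCompact.isClosed

lemma gradient_eq (h : IsAdaptedCutoff S u ξ ζ K n Z) (hu : DifferentiableAt ℝ u y) :
    ∇ (fun y => ξ y ^ 2 * (u y - ζ y)) y
      = (2 * ξ y * (u y - ζ y)) • ∇ ξ y + ξ y ^ 2 • (∇ u y - ∇ ζ y) := by
  have hξ := h.differentiable_cutoff y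
  have hζ := h.differentiable_comparison y
  rw [gradient_fun_mul (hξ.fun_pow 2) (hu.fun_sub hζ), gradient_fun_sub hu hζ,
    gradient_comp (hasDerivAt_pow 2 (ξ y)) hξ, smul_smul, add_comm]
  congr 2
  push_cast
  ring

lemma norm_gradient_le (h : IsAdaptedCutoff S u ξ ζ K n Z) (hu : DifferentiableAt ℝ u y)
    (hy : y ∈ S) : ‖∇ (fun y => ξ y ^ 2 * (u y - ζ y)) y‖ ≤ ‖∇ u y‖ + (2 * K + n) := by
  have : 0 ≤ K := le_trans (by positivity) (h.norm_gradient_mul_abs_sub_le y hy)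
  rw [h.gradient_eq hu]
  calc _ ≤ 2 * |ξ y| * (‖∇ ξ y‖ * |u y - ζ y|) + |ξ y| ^ 2 * ‖∇ u y - ∇ ζ y‖ := by
        refine (norm_add_le _ _).trans_eq ?_
        simp only [norm_smul, norm_mul, norm_pow, Real.norm_eq_abs, abs_two]
        ring
    _ ≤ 2 * 1 * K + 1 ^ 2 * (‖∇ u y‖ + n) := by
        gcongr
        exacts [h.abs_cutoff_le y, h.norm_gradient_mul_abs_sub_le y hy, h.abs_cutoff_le y,
          (norm_sub_le _ _).trans (by gcongr; exact h.norm_gradient_comparison_le y hy)]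
    _ = _ := by ring

lemma isTest [MeasurableSpace E] [BorelSpace E] (h : IsAdaptedCutoff S u ξ ζ K n Z) (hSG : S ⊆ G)
    (hu : ∀ y ∈ S, DifferentiableAt ℝ u y) (hgrad : IsLocL2 G (∇ u)) :
    IsTest G fun y => ξ y ^ 2 * (u y - ζ y) := by
  refine ⟨fun y => ?_, .of_support_subset_isCompact h.isCompact
    ((subset_tsupport _).trans h.tsupport_subset), h.tsupport_subset.trans hSG, ?_⟩
  · by_cases hy : y ∈ tsupport fun y => ξ y ^ 2 * (u y - ζ y)
    · exact ((h.differentiable_cutoff y).pow 2).fun_mul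
        ((hu y (h.tsupport_subset hy)).fun_sub (h.differentiable_comparison y))
    · exact (notMem_tsupport_iff_eventuallyEq.1 hy).differentiableAt_iff.2
        (differentiableAt_const 0)
  · have hS := h.isCompact.measurableSet
    have hdom : MemLp (S.indicator fun y => ‖∇ u y‖ + (2 * K + n)) 2 := by
      have : IsFiniteMeasure (volume.restrict S) := ⟨by simpa using h.isCompact.measure_lt_top⟩
      exact (memLp_indicator_iff_restrict hS).2
        ((hgrad S h.isCompact hSG).norm.add (memLp_const _))
    refine hdom.mono' (measurable_gradient _).aestronglyMeasurable (.of_forall fun y => ?_)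
    by_cases hy : y ∈ S
    · simpa [hy] using h.norm_gradient_le (hu y hy) hy
    · simp [gradient_eq_zero_of_notMem_tsupport fun h' => hy (h.tsupport_subset h'), hy]

end IsAdaptedCutoff

/-- The constant of the Caccioppoli inequality `SolvesWith.lintegral_cutoff_le`. -/
def caccioppoliConst (β M γ K n Z : ℝ) : ℝ :=
  (2 * K + n + β + M * Z) ^ 2 + 2 * (2 * β * K + β * n + γ * Z)

lemma sq_mul_norm_sq_le_add_caccioppoliConst {H : Type*} [NormedAddCommGroup H]
    [InnerProductSpace ℝ H] {g b h w : H} {ξ z c β M γ K n Z : ℝ} (hξ : |ξ| ≤ 1)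
    (hh : ‖h‖ * |z| ≤ K) (hw : ‖w‖ ≤ n) (hb : ‖b‖ ≤ β) (hM : 0 ≤ M) (hγ : 0 ≤ γ)
    (hc : |c| ≤ M * ‖g‖ + γ) (hz : |z| ≤ Z) :
    ξ ^ 2 * ‖g‖ ^ 2 ≤ 2 * (⟪g + b, (2 * ξ * z) • h + ξ ^ 2 • (g - w)⟫ + c * (ξ ^ 2 * z))
      + caccioppoliConst β M γ K n Z := by
  have hβ : 0 ≤ β := (norm_nonneg b).trans hb
  have hZ : 0 ≤ Z := (abs_nonneg z).trans hz
  set X := |ξ| * ‖g‖ with hX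
  have hX2 : ξ ^ 2 * ‖g‖ ^ 2 = X ^ 2 := by rw [hX, mul_pow, sq_abs]
  set q := (2 * z) • h - ξ • w with hq
  have hqle : ‖q‖ ≤ 2 * K + n := calc
    _ ≤ 2 * (‖h‖ * |z|) + |ξ| * ‖w‖ := by
      refine (norm_sub_le _ _).trans_eq ?_
      simp only [norm_smul, norm_mul, Real.norm_eq_abs, abs_two]
      ring
    _ ≤ 2 * K + 1 * n := by gcongr
    _ = _ := by ring
  have hinner : ⟪g + b, (2 * ξ * z) • h + ξ ^ 2 • (g - w)⟫
      = X ^ 2 + ξ * ⟪g, q⟫ + ξ ^ 2 * ⟪b, g⟫ + ξ * ⟪b, q⟫ := by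
    simp only [← hX2, hq, inner_add_left, inner_add_right, inner_smul_right, inner_sub_right,
      real_inner_self_eq_norm_sq]
    ring
  have hgq : |ξ * ⟪g, q⟫| ≤ X * (2 * K + n) := calc
    _ ≤ |ξ| * (‖g‖ * ‖q‖) := by rw [abs_mul]; gcongr; exact abs_real_inner_le_norm g q
    _ ≤ _ := by rw [hX, mul_assoc]; gcongr
  have hbg : |ξ ^ 2 * ⟪b, g⟫| ≤ X * β := calc
    _ ≤ |ξ| ^ 2 * (‖b‖ * ‖g‖) := by rw [abs_mul, abs_pow]; gcongr; exact abs_real_inner_le_norm b g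
    _ = |ξ| * (X * ‖b‖) := by rw [hX]; ring
    _ ≤ 1 * (X * β) := by gcongr
    _ = _ := one_mul _
  have hbq : |ξ * ⟪b, q⟫| ≤ β * (2 * K + n) := calc
    _ ≤ |ξ| * (‖b‖ * ‖q‖) := by rw [abs_mul]; gcongr; exact abs_real_inner_le_norm b q
    _ ≤ 1 * (β * (2 * K + n)) := by gcongr
    _ = _ := one_mul _
  have hcz : |c * (ξ ^ 2 * z)| ≤ M * X * Z + γ * Z := calc
    _ ≤ (M * ‖g‖ + γ) * (|ξ| ^ 2 * Z) := by rw [abs_mul, abs_mul, abs_pow]; gcongr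
    _ = |ξ| * (M * X * Z) + |ξ| ^ 2 * (γ * Z) := by rw [hX]; ring
    _ ≤ 1 * (M * X * Z) + 1 ^ 2 * (γ * Z) := by gcongr
    _ = _ := by ring
  rw [hinner, hX2, caccioppoliConst]
  linarith [sq_nonneg (X - (2 * K + n + β + M * Z)), (abs_le.1 hgq).1, (abs_le.1 hbg).1,
    (abs_le.1 hbq).1, (abs_le.1 hcz).1]

section Measure

variable [MeasurableSpace E] [BorelSpace E]
variable {G S : Set E} {u ξ ζ : E → ℝ} {b : E → E} {c : E → ℝ} {M₁ M₂ M₀ U K n Z : ℝ}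

lemma SolvesWith.lintegral_cutoff_le (h : SolvesWith G M₁ M₂ M₀ u b c)
    (hM₁ : 0 ≤ M₁) (hM₂ : 0 ≤ M₂) (hM₀ : 0 ≤ M₀) (hgrad : IsLocL2 G (∇ u))
    (hcut : IsAdaptedCutoff S u ξ ζ K n Z) (hSG : S ⊆ G)
    (hu : ∀ y ∈ S, DifferentiableAt ℝ u y) (hU : ∀ y ∈ S, |u y| ≤ U) :
    ∫⁻ y, ENNReal.ofReal (ξ y ^ 2 * ‖∇ u y‖ ^ 2)
      ≤ ENNReal.ofReal (volume.real S * caccioppoliConst (M₁ * U) M₂ (M₀ * U) K n Z) := by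
  set C := caccioppoliConst (M₁ * U) M₂ (M₀ * U) K n Z
  set v : E → ℝ := fun y => ξ y ^ 2 * (u y - ζ y) with hv
  have hvtest : IsTest G v := hcut.isTest hSG hu hgrad
  set e : E → ℝ := fun y => ⟪∇ u y + b y, ∇ v y⟫ + c y * v y with he
  have hle (y : E) : ξ y ^ 2 * ‖∇ u y‖ ^ 2 ≤ 2 * e y + S.indicator (fun _ => C) y := by
    by_cases hy : y ∈ S
    · have hU0 : 0 ≤ U := (abs_nonneg _).trans (hU y hy)
      simp only [he, hv, indicator_of_mem hy, hcut.gradient_eq (hu y hy)]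
      exact sq_mul_norm_sq_le_add_caccioppoliConst (hcut.abs_cutoff_le y)
        (hcut.norm_gradient_mul_abs_sub_le y hy) (hcut.norm_gradient_comparison_le y hy)
        ((h.norm_le y (hSG hy)).trans (by gcongr; exact hU y hy)) hM₂ (mul_nonneg hM₀ hU0)
        ((h.abs_le y (hSG hy)).trans (by gcongr; exact hU y hy)) (hcut.abs_sub_le y hy)
    · have hξ : ξ y = 0 := by_contra fun h' => hy (hcut.support_cutoff_subset h')
      have hgv : ∇ v y = 0 :=
        gradient_eq_zero_of_notMem_tsupport fun h' => hy (hcut.tsupport_subset h')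
      have he0 : e y = 0 := by
        rw [congrFun he y, hgv]
        simp [hv, hξ]
      simp [he0, hξ, hy]
  have hint_e : Integrable fun y => 2 * e y := (h.integrable v hvtest).const_mul 2
  have hint_S : Integrable (S.indicator fun _ => C) :=
    (integrable_indicator_iff hcut.isCompact.measurableSet).2
      (integrableOn_const hcut.isCompact.measure_lt_top.ne)
  have hnonneg (y : E) : 0 ≤ ξ y ^ 2 * ‖∇ u y‖ ^ 2 := by positivity
  have hint : Integrable fun y => ξ y ^ 2 * ‖∇ u y‖ ^ 2 :=
    (hint_e.add hint_S).mono' ((hcut.differentiable_cutoff.continuous.measurable.pow_const 2).mul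
      ((measurable_gradient u).norm.pow_const 2)).aestronglyMeasurable
      (.of_forall fun y => by simpa [abs_of_nonneg (hnonneg y)] using hle y)
  rw [← ofReal_integral_eq_lintegral_ofReal hint (.of_forall hnonneg)]
  refine ENNReal.ofReal_le_ofReal ((integral_mono hint (hint_e.add hint_S) hle).trans_eq ?_)
  rw [integral_add' hint_e hint_S, integral_const_mul, h.integral_eq_zero v hvtest,
    integral_indicator_const _ hcut.isCompact.measurableSet]
  simp

end Measure

end Caccioppoli

section LipschitzFrom

/-- The Lipschitz estimate for `u` with constant `n`, between points of `A` and points of `T`. -/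
def IsLipschitzFrom (n : NNReal) (u : E → ℝ) (A T : Set E) : Prop :=
  ∀ p ∈ A, ∀ y ∈ T, |u y - u p| ≤ n * dist y p

variable [FiniteDimensional ℝ E] {n : NNReal} {u : E → ℝ} {A B F T : Set E}

lemma exists_nat_forall_dist_le_of_differentiableAt {X Y : Type*} [NormedAddCommGroup X]
    [NormedSpace ℝ X] [NormedAddCommGroup Y] [NormedSpace ℝ Y] {f : X → Y} {p : X}
    (hf : DifferentiableAt ℝ f p) :
    ∃ m : ℕ, ∀ y, dist y p < 1 / (m + 1) → dist (f y) (f p) ≤ (m + 1) * dist y p := by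
  obtain ⟨C, hC⟩ := hf.hasFDerivAt.isBigO_sub.bound
  obtain ⟨r, hr, hrC⟩ := Metric.eventually_nhds_iff.1 hC
  obtain ⟨m, hm⟩ := exists_nat_ge (max C (1 / r))
  refine ⟨m, fun y hyp => ?_⟩
  have hmr : 1 / ((m : ℝ) + 1) < r := by
    rw [one_div_lt (by positivity) hr]
    linarith [(le_max_right C (1 / r)).trans hm]
  have hyC := hrC (hyp.trans hmr)
  rw [← dist_eq_norm, ← dist_eq_norm] at hyC
  refine hyC.trans ?_
  gcongr
  linarith [(le_max_left C (1 / r)).trans hm]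

/- Baire: `F` is the union over `m` of the closed sets of points at which the Lipschitz estimate
with constant `m + 1` holds up to distance `1 / (m + 1)`. -/
lemma exists_isLipschitzFrom_ball (hB : IsOpen B) (hu : ∀ y ∈ B, DifferentiableAt ℝ u y)
    (hF : IsLocallyClosed F) (hFB : F ⊆ B) (hne : F.Nonempty) :
    ∃ p ∈ F, ∃ ρ > 0, ball p ρ ⊆ B ∧ ∃ n, IsLipschitzFrom n u (F ∩ ball p ρ) (ball p ρ) := by
  have : LocallyCompactSpace F := hF.locallyCompactSpace
  have : Nonempty F := hne.to_subtype
  have huF : Continuous fun p : F => u p :=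
    continuousOn_iff_continuous_domRestrict.1 fun y hy =>
      (hu y (hFB hy)).continuousAt.continuousWithinAt
  let s (m : ℕ) : Set F := {p | ∀ y ∈ B, dist y p < 1 / (m + 1) → |u y - u p| ≤ (m + 1) * dist y p}
  have hs (m : ℕ) : IsClosed (s m) := by
    have hsm : s m = ⋂ y ∈ B, ({p : F | 1 / ((m : ℝ) + 1) ≤ dist y p} ∪
        {p : F | |u y - u p| ≤ (m + 1) * dist y p}) := by
      ext p
      simp only [s, mem_ofPred_eq, mem_iInter, mem_union, imp_iff_not_or, not_lt]
    have hdist (y : E) : Continuous fun p : F => dist y p := by fun_prop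
    rw [hsm]
    exact isClosed_biInter fun y _ => (isClosed_le continuous_const (hdist y)).union
      (isClosed_le (continuous_const.sub huF).abs (continuous_const.mul (hdist y)))
  have hsU : ⋃ m, s m = univ := eq_univ_of_forall fun p => by
    obtain ⟨m, hm⟩ := exists_nat_forall_dist_le_of_differentiableAt (hu p (hFB p.2))
    exact mem_iUnion.2 ⟨m, fun y _ hy => hm y hy⟩
  obtain ⟨m, p, hp⟩ := nonempty_interior_of_iUnion_of_closed hs hsU
  obtain ⟨ρ₁, hρ₁, hρs⟩ := Metric.mem_nhds_iff.1 (mem_interior_iff_mem_nhds.1 hp)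
  obtain ⟨ρ₂, hρ₂, hρB⟩ := Metric.isOpen_iff.1 hB p (hFB p.2)
  set ρ := min (min ρ₁ ρ₂) (1 / (m + 1) / 2) with hρ
  have hρle : ρ ≤ ρ₁ ∧ ρ ≤ ρ₂ ∧ ρ ≤ 1 / (m + 1) / 2 := by simp [hρ]
  have hρB' : ball p.1 ρ ⊆ B := (ball_subset_ball hρle.2.1).trans hρB
  refine ⟨p, p.2, ρ, by positivity, hρB', m + 1, fun q hq y hy => ?_⟩
  have hqs : (⟨q, hq.1⟩ : F) ∈ s m := hρs (hq.2.out.trans_le hρle.1)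
  have hyq : dist y q < 1 / (m + 1) := by
    linarith [dist_triangle_right y q p, mem_ball.1 hy, mem_ball.1 hq.2]
  exact_mod_cast hqs y (hρB' hy) hyq

lemma IsLipschitzFrom.exists_comparison [MeasurableSpace E] [BorelSpace E]
    (h : IsLipschitzFrom n u A T) (hA : A.Nonempty) (hAT : A ⊆ T) {κ : ℝ} (hκ : 0 < κ) :
    ∃ ζ : E → ℝ, ContDiff ℝ ∞ ζ ∧ (∀ y, ‖∇ ζ y‖ ≤ n) ∧
      ∀ y ∈ T, |u y - ζ y| ≤ 2 * n * infDist y A + n * κ := by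
  obtain ⟨f, hf, hfA⟩ := LipschitzOnWith.extend_real
    (LipschitzOnWith.of_dist_le_mul fun y hy p hp => h p hp y (hAT hy))
  obtain ⟨ζ, hζ, hζLip, hζf⟩ := exists_contDiff_lipschitzWith_abs_sub_le hf hκ
  refine ⟨ζ, hζ, norm_gradient_le_of_lipschitzWith hζLip, fun y hy => ?_⟩
  have hclosure : closure A ⊆ {p | |u y - f y| ≤ 2 * n * dist y p} :=
    closure_minimal (fun p hp => by
      have hfp : |u p - f y| ≤ n * dist y p := by
        simpa only [← hfA hp, Real.dist_eq, dist_comm y] using hf.dist_le_mul p y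
      calc |u y - f y| ≤ |u y - u p| + |u p - f y| := abs_sub_le _ _ _
        _ ≤ n * dist y p + n * dist y p := add_le_add (h p hp y hy) hfp
        _ = 2 * n * dist y p := by ring)
      (isClosed_le continuous_const (by fun_prop))
  obtain ⟨p, hp, hpy⟩ := isClosed_closure.exists_infDist_eq_dist hA.closure y
  rw [infDist_closure] at hpy
  calc |u y - ζ y| ≤ |u y - f y| + |f y - ζ y| := abs_sub_le _ _ _
    _ ≤ 2 * n * infDist y A + n * κ :=
        add_le_add (hpy ▸ hclosure hp) (abs_sub_comm (f y) _ ▸ hζf y)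

end LipschitzFrom

section FiniteEnergy

variable [FiniteDimensional ℝ E] {n : NNReal} {u : E → ℝ} {A T G : Set E} {p : E} {ρ : ℝ}

lemma IsLipschitzFrom.norm_gradient_le (h : IsLipschitzFrom n u A T) (hp : p ∈ A) (hT : T ∈ 𝓝 p)
    (hu : DifferentiableAt ℝ u p) : ‖∇ u p‖ ≤ n := by
  rw [norm_gradient]
  refine hu.hasFDerivAt.le_of_lip' n.2 ?_
  filter_upwards [hT] with y hy
  simpa [dist_eq_norm] using h p hp y hy

variable [MeasurableSpace E] [BorelSpace E]

lemma exists_cutoff_closedBall_infDist (hρ : 0 < ρ) (hp : p ∈ A) :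
    ∃ C : ℝ, ∀ κ, 0 < κ → κ ≤ ρ → ∃ ξ : E → ℝ, Differentiable ℝ ξ ∧ (∀ y, ξ y ∈ Icc 0 1) ∧
      support ξ ⊆ closedBall p (ρ / 2) ∩ {y | κ ≤ infDist y A} ∧
      (∀ y ∈ closedBall p (ρ / 4), 4 * κ ≤ infDist y A → ξ y = 1) ∧
      ∀ y ∈ closedBall p (ρ / 2), ‖∇ ξ y‖ * (infDist y A + κ) ≤ C := by
  let η : ContDiffBump p := ⟨ρ / 4, ρ / 2, by positivity, by linarith⟩
  obtain ⟨L, hL⟩ := ContDiff.lipschitzWith_of_hasCompactSupport η.hasCompactSupport η.contDiff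
    (n := 1) one_ne_zero
  obtain ⟨C, -, hcut⟩ := exists_contDiff_cutoff_infDist (E := E)
  refine ⟨C + L * (2 * ρ), fun κ hκ hκρ => ?_⟩
  obtain ⟨χ, hχ, hχIcc, hχzero, hχone, hχgrad⟩ := hcut A hκ
  have hηd : Differentiable ℝ η := η.contDiff.differentiable (n := 1) one_ne_zero
  have hχd : Differentiable ℝ χ := hχ.differentiable (by simp)
  refine ⟨fun y => η y * χ y, hηd.mul hχd, fun y => ⟨mul_nonneg η.nonneg (hχIcc y).1,
    mul_le_one₀ η.le_one (hχIcc y).1 (hχIcc y).2⟩, fun y hy => ⟨?_, ?_⟩, fun y hy hyA => ?_,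
    fun y hy => ?_⟩
  · exact ball_subset_closedBall (η.support_eq ▸ left_ne_zero_of_mul hy)
  · exact not_lt.1 fun hlt => right_ne_zero_of_mul hy (hχzero y hlt.le)
  · simp only [η.one_of_mem_closedBall hy, hχone y hyA, one_mul]
  · have hgrad : ‖∇ (fun y => η y * χ y) y‖ ≤ ‖∇ χ y‖ + L := by
      rw [gradient_fun_mul (hηd y) (hχd y)]
      refine (norm_add_le _ _).trans ?_
      rw [norm_smul, norm_smul, Real.norm_of_nonneg η.nonneg, Real.norm_of_nonneg (hχIcc y).1]
      exact add_le_add (mul_le_of_le_one_left (norm_nonneg _) η.le_one)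
        ((mul_le_of_le_one_left (norm_nonneg _) (hχIcc y).2).trans
          (norm_gradient_le_of_lipschitzWith hL y))
    have hdist : infDist y A ≤ ρ / 2 := (infDist_le_dist_of_mem hp).trans hy
    have hinf : 0 ≤ infDist y A := infDist_nonneg
    calc _ ≤ (‖∇ χ y‖ + L) * (infDist y A + κ) := by gcongr
      _ = ‖∇ χ y‖ * (infDist y A + κ) + L * (infDist y A + κ) := add_mul _ _ _
      _ ≤ C + L * (2 * ρ) := by
        gcongr
        exacts [hχgrad y, by linarith]

lemma IsLipschitzFrom.exists_isAdaptedCutoff (h : IsLipschitzFrom n u A (ball p ρ))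
    (hp : p ∈ A) (hA : A ⊆ ball p ρ) :
    ∃ K : ℝ, ∀ κ, 0 < κ → κ ≤ ρ → ∃ ξ ζ : E → ℝ,
      IsAdaptedCutoff (closedBall p (ρ / 2) ∩ {y | κ ≤ infDist y A}) u ξ ζ K n (2 * n * ρ) ∧
      ∀ y ∈ closedBall p (ρ / 4), 4 * κ ≤ infDist y A → ξ y = 1 := by
  have hρ : 0 < ρ := pos_of_mem_ball (hA hp)
  obtain ⟨C, hC⟩ := exists_cutoff_closedBall_infDist hρ hp
  refine ⟨2 * n * C, fun κ hκ hκρ => ?_⟩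
  obtain ⟨ξ, hξ, hξIcc, hξsupp, hξone, hξgrad⟩ := hC κ hκ hκρ
  obtain ⟨ζ, hζ, hζn, hζu⟩ := h.exists_comparison ⟨p, hp⟩ hA hκ
  have hsub : ∀ y ∈ closedBall p (ρ / 2), |u y - ζ y| ≤ 2 * n * infDist y A + n * κ := fun y hy =>
    hζu y (closedBall_subset_ball (by linarith) hy)
  refine ⟨ξ, ζ, ⟨?_, hξ, hξsupp, fun y => ?_, hζ.differentiable (by simp), fun y _ => hζn y,
    fun y hy => (hsub y hy.1).trans ?_, fun y hy => ?_⟩, hξone⟩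
  · exact (isCompact_closedBall p _).inter_right
      (isClosed_le continuous_const (continuous_infDist_pt A))
  · rw [abs_of_nonneg (hξIcc y).1]
    exact (hξIcc y).2
  · have hdist : infDist y A ≤ ρ / 2 := (infDist_le_dist_of_mem hp).trans hy.1
    calc 2 * n * infDist y A + n * κ ≤ 2 * n * (ρ / 2) + n * ρ := by gcongr
      _ = 2 * n * ρ := by ring
  · calc ‖∇ ξ y‖ * |u y - ζ y| ≤ ‖∇ ξ y‖ * (2 * n * (infDist y A + κ)) := by
          gcongr
          exact (hsub y hy.1).trans (by nlinarith [n.2])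
      _ = 2 * n * (‖∇ ξ y‖ * (infDist y A + κ)) := by ring
      _ ≤ 2 * n * C := by
        gcongr
        exact hξgrad y hy.1

lemma SolvesWith.exists_setLIntegral_enorm_gradient_le {b : E → E} {c : E → ℝ} {M₁ M₂ M₀ : ℝ}
    (hsol : SolvesWith G M₁ M₂ M₀ u b c) (hM₁ : 0 ≤ M₁) (hM₂ : 0 ≤ M₂) (hM₀ : 0 ≤ M₀)
    (hgrad : IsLocL2 G (∇ u)) (hu : ∀ y ∈ G, DifferentiableAt ℝ u y)
    (h : IsLipschitzFrom n u A (ball p ρ)) (hp : p ∈ A) (hA : A ⊆ ball p ρ)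
    (hAG : ball p ρ \ A ⊆ G) :
    ∃ C : ℝ, ∀ κ, 0 < κ → κ ≤ ρ →
      ∫⁻ y in closedBall p (ρ / 4) ∩ {y | 4 * κ ≤ infDist y A}, ‖∇ u y‖ₑ ^ 2
        ≤ ENNReal.ofReal C := by
  have hρ : 0 < ρ := pos_of_mem_ball (hA hp)
  obtain ⟨K, hK⟩ := h.exists_isAdaptedCutoff hp hA
  set Θ := caccioppoliConst (M₁ * (|u p| + n * ρ)) M₂ (M₀ * (|u p| + n * ρ)) K n (2 * n * ρ)
  refine ⟨volume.real (closedBall p ρ) * |Θ|, fun κ hκ hκρ => ?_⟩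
  obtain ⟨ξ, ζ, hcut, hξone⟩ := hK κ hκ hκρ
  set S := closedBall p (ρ / 2) ∩ {y | κ ≤ infDist y A}
  have hSball : S ⊆ ball p ρ := inter_subset_left.trans (closedBall_subset_ball (by linarith))
  have hSG : S ⊆ G := fun y hy => hAG ⟨hSball hy, fun hyA => by
    have hκy : κ ≤ infDist y A := hy.2
    rw [infDist_zero_of_mem hyA] at hκy
    exact hκ.not_ge hκy⟩
  have hU : ∀ y ∈ S, |u y| ≤ |u p| + n * ρ := fun y hy => by
    have hLip : |u y - u p| ≤ n * ρ := (h p hp y (hSball hy)).trans (by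
      gcongr
      exact (hSball hy).out.le)
    linarith [abs_sub_abs_le_abs_sub (u y) (u p)]
  have hξmeas : Measurable fun y => ENNReal.ofReal (ξ y ^ 2 * ‖∇ u y‖ ^ 2) :=
    ((hcut.differentiable_cutoff.continuous.measurable.pow_const 2).mul
      ((measurable_gradient u).norm.pow_const 2)).ennreal_ofReal
  calc ∫⁻ y in closedBall p (ρ / 4) ∩ {y | 4 * κ ≤ infDist y A}, ‖∇ u y‖ₑ ^ 2
      ≤ ∫⁻ y in closedBall p (ρ / 4) ∩ {y | 4 * κ ≤ infDist y A},
          ENNReal.ofReal (ξ y ^ 2 * ‖∇ u y‖ ^ 2) := setLIntegral_mono hξmeas fun y hy => by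
        rw [hξone y hy.1 hy.2, one_pow, one_mul, ENNReal.ofReal_pow (norm_nonneg _), ofReal_norm]
    _ ≤ ∫⁻ y, ENNReal.ofReal (ξ y ^ 2 * ‖∇ u y‖ ^ 2) := setLIntegral_le_lintegral _ _
    _ ≤ ENNReal.ofReal (volume.real S * Θ) :=
        hsol.lintegral_cutoff_le hM₁ hM₂ hM₀ hgrad hcut hSG (fun y hy => hu y (hSG hy)) hU
    _ ≤ ENNReal.ofReal (volume.real (closedBall p ρ) * |Θ|) := by
        refine ENNReal.ofReal_le_ofReal ?_
        have hvol : volume.real S ≤ volume.real (closedBall p ρ) :=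
          measureReal_mono (hSball.trans ball_subset_closedBall) measure_closedBall_lt_top.ne
        exact (mul_le_mul_of_nonneg_left (le_abs_self Θ) measureReal_nonneg).trans
          (mul_le_mul_of_nonneg_right hvol (abs_nonneg Θ))

lemma SolvesWith.setLIntegral_enorm_gradient_diff_lt_top {b : E → E} {c : E → ℝ} {M₁ M₂ M₀ : ℝ}
    (hsol : SolvesWith G M₁ M₂ M₀ u b c) (hM₁ : 0 ≤ M₁) (hM₂ : 0 ≤ M₂) (hM₀ : 0 ≤ M₀)
    (hgrad : IsLocL2 G (∇ u)) (hu : ∀ y ∈ G, DifferentiableAt ℝ u y)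
    (h : IsLipschitzFrom n u A (ball p ρ)) (hp : p ∈ A) (hA : A ⊆ ball p ρ)
    (hAG : ball p ρ \ A ⊆ G) :
    ∫⁻ y in ball p (ρ / 4) \ closure A, ‖∇ u y‖ₑ ^ 2 < ⊤ := by
  have hρ : 0 < ρ := pos_of_mem_ball (hA hp)
  obtain ⟨C, hC⟩ := hsol.exists_setLIntegral_enorm_gradient_le hM₁ hM₂ hM₀ hgrad hu h hp hA hAG
  let D (k : ℕ) : Set E := closedBall p (ρ / 4) ∩ {y | 4 * (ρ / (k + 1)) ≤ infDist y A}
  have hDmono : Monotone D := fun k l hkl y hy => ⟨hy.1, le_trans (by gcongr) hy.2.out⟩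
  have hcover : ball p (ρ / 4) \ closure A ⊆ ⋃ k, D k := by
    rintro y ⟨hyp, hyA⟩
    have hpos : 0 < infDist y A := infDist_nonneg.lt_of_ne fun h0 =>
      hyA ((mem_closure_iff_infDist_zero ⟨p, hp⟩).2 h0.symm)
    obtain ⟨k, hk⟩ := exists_nat_ge (4 * ρ / infDist y A)
    refine mem_iUnion.2 ⟨k, ball_subset_closedBall hyp, ?_⟩
    rw [div_le_iff₀ hpos] at hk
    rw [mem_ofPred_eq, mul_div_assoc', div_le_iff₀ (by positivity)]
    linarith
  calc ∫⁻ y in ball p (ρ / 4) \ closure A, ‖∇ u y‖ₑ ^ 2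
      ≤ ∫⁻ y in ⋃ k, D k, ‖∇ u y‖ₑ ^ 2 := lintegral_mono_set hcover
    _ = ⨆ k, ∫⁻ y in D k, ‖∇ u y‖ₑ ^ 2 := setLIntegral_iUnion_of_directed _ hDmono.directed_le
    _ ≤ ENNReal.ofReal C := iSup_le fun k => hC _ (by positivity)
        (div_le_self hρ.le (by linarith [k.cast_nonneg (α := ℝ)]))
    _ < ⊤ := ENNReal.ofReal_lt_top

/-- The set of points near which `u` has finite Dirichlet energy. -/
def finiteEnergySet (u : E → ℝ) : Set E :=
  {p | ∃ r > 0, ∫⁻ y in ball p r, ‖∇ u y‖ₑ ^ 2 < ⊤}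

lemma isOpen_finiteEnergySet (u : E → ℝ) : IsOpen (finiteEnergySet u) := by
  rw [Metric.isOpen_iff]
  rintro p ⟨r, hr, hlt⟩
  refine ⟨r / 2, half_pos hr, fun q hq => ⟨r / 2, half_pos hr,
    (lintegral_mono_set (ball_subset_ball' ?_)).trans_lt hlt⟩⟩
  linarith [mem_ball.1 hq]

lemma isLocL2_gradient_finiteEnergySet (u : E → ℝ) : IsLocL2 (finiteEnergySet u) (∇ u) := by
  intro K hK hKu
  let μ : Measure E := volume.withDensity fun y => ‖∇ u y‖ₑ ^ 2
  have hμ : μ K < ⊤ := hK.measure_lt_top_of_nhdsWithin fun p hp => by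
    obtain ⟨r, hr, hlt⟩ := hKu hp
    refine ⟨ball p r, mem_nhdsWithin_of_mem_nhds (ball_mem_nhds p hr), ?_⟩
    rwa [withDensity_apply _ measurableSet_ball]
  rw [withDensity_apply _ hK.measurableSet] at hμ
  refine ⟨(measurable_gradient u).aestronglyMeasurable, ?_⟩
  rw [eLpNorm_lt_top_iff_lintegral_rpow_enorm_lt_top (by norm_num) (by norm_num)]
  simpa using hμ

/- If the finite-energy set were smaller than `B`, Baire would provide a ball in which `u` is
Lipschitz from its complement; the Caccioppoli inequality with cut-offs vanishing near that
complement then bounds the energy in a smaller ball. -/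
lemma IsWeakSol.isLocL2_gradient {B : Set V2} {W₁ W₂ : V2 → V2} {V u : V2 → ℝ} {M₁ M₂ M₀ : ℝ}
    (h : IsWeakSol B W₁ W₂ V u) (hB : IsOpen B) (hu : ∀ y ∈ B, DifferentiableAt ℝ u y)
    (hW₁ : ∀ y ∈ B, ‖W₁ y‖ ≤ M₁) (hW₂ : ∀ y ∈ B, ‖W₂ y‖ ≤ M₂) (hV : ∀ y ∈ B, |V y| ≤ M₀) :
    IsLocL2 B (∇ u) := by
  suffices hBu : B ⊆ finiteEnergySet u from (isLocL2_gradient_finiteEnergySet u).mono_set hBu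
  by_contra hne
  have hopen := isOpen_finiteEnergySet u
  set G := B ∩ finiteEnergySet u
  have hGB : G ⊆ B := inter_subset_left
  have hgrad : IsLocL2 G (∇ u) := (isLocL2_gradient_finiteEnergySet u).mono_set inter_subset_right
  obtain ⟨b, c, hsol⟩ := (h.mono hB.measurableSet hGB).exists_solvesWith (hB.inter hopen)
    (fun y hy => (hu y hy.1).continuousAt.continuousWithinAt) hgrad (fun y hy => hW₁ y hy.1)
    (fun y hy => hW₂ y hy.1) (fun y hy => hV y hy.1)
  set F := B \ finiteEnergySet u
  obtain ⟨p, hpF, ρ, hρ, hρB, n, hLip⟩ := exists_isLipschitzFrom_ball hB hu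
    (hB.isLocallyClosed.inter hopen.isClosed_compl.isLocallyClosed : IsLocallyClosed F)
    sdiff_subset (sdiff_nonempty.2 hne)
  set A := F ∩ ball p ρ
  have hdiff := hsol.setLIntegral_enorm_gradient_diff_lt_top ((norm_nonneg _).trans (hW₁ p hpF.1))
    ((norm_nonneg _).trans (hW₂ p hpF.1)) ((abs_nonneg _).trans (hV p hpF.1)) hgrad
    (fun y hy => hu y hy.1) hLip ⟨hpF, mem_ball_self hρ⟩ inter_subset_right
    fun y hy => ⟨hρB hy.1, by_contra fun hyu => hy.2 ⟨⟨hρB hy.1, hyu⟩, hy.1⟩⟩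
  have hclosure : ball p (ρ / 4) ∩ closure A ⊆ A := fun y hy => by
    have hyρ : y ∈ ball p ρ := ball_subset_ball (by linarith) hy.1
    exact ⟨⟨hρB hyρ, closure_minimal (inter_subset_left.trans inter_subset_right)
      hopen.isClosed_compl hy.2⟩, hyρ⟩
  have hA : ∫⁻ y in ball p (ρ / 4) ∩ closure A, ‖∇ u y‖ₑ ^ 2 < ⊤ := calc
    _ ≤ ∫⁻ _ in ball p (ρ / 4) ∩ closure A, (n : ℝ≥0∞) ^ 2 :=
      setLIntegral_mono measurable_const fun y hy => by
        gcongr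
        exact enorm_le_coe.2 (hLip.norm_gradient_le (hclosure hy)
          (isOpen_ball.mem_nhds (hclosure hy).2) (hu y (hclosure hy).1.1))
    _ < ⊤ := by
      rw [setLIntegral_const]
      exact ENNReal.mul_lt_top (by simp)
        ((measure_mono inter_subset_left).trans_lt measure_ball_lt_top)
  refine hpF.2 ⟨ρ / 4, by positivity, ?_⟩
  rw [← lintegral_inter_add_sdiff _ (ball p (ρ / 4)) isClosed_closure.measurableSet]
  exact ENNReal.add_lt_top.2 ⟨hA, hdiff⟩

end FiniteEnergy

section IntegrationByParts

variable [FiniteDimensional ℝ E] [MeasurableSpace E] [BorelSpace E] {Ω : Set E} {v : E → ℝ}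

lemma IsTest.integrable_inner_gradient (hv : IsTest Ω v) {Y : E → E} (hY : Continuous Y) :
    Integrable fun y => ⟪∇ v y, Y y⟫ := by
  have hK := hv.hasCompactSupport.isCompact
  have hYK : MemLp ((tsupport v).indicator Y) 2 :=
    (memLp_indicator_iff_restrict hK.measurableSet).2
      (isLocL2_of_continuousOn hY.continuousOn _ hK (subset_univ _))
  refine (integrable_inner_of_memLp hv.memLp_gradient hYK).congr (.of_forall fun y => ?_)
  by_cases hy : y ∈ tsupport v
  · simp only [indicator_of_mem hy]
  · simp only [gradient_eq_zero_of_notMem_tsupport hy, inner_zero_left]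

lemma IsTest.integrable_fderiv_apply_mul (hv : IsTest Ω v) {f : E → ℝ} (hf : Continuous f)
    (e : E) : Integrable fun y => fderiv ℝ v y e * f y := by
  refine (hv.integrable_inner_gradient (Y := fun y => f y • e) (hf.smul continuous_const)).congr
    (.of_forall fun y => ?_)
  beta_reduce
  rw [inner_smul_right, inner_gradient_left, mul_comm]

lemma IsTest.integral_mul_fderiv_apply (hv : IsTest Ω v) {f : E → ℝ} (hf : ContDiff ℝ 1 f)
    (e : E) : ∫ y, v y * fderiv ℝ f y e = -∫ y, fderiv ℝ v y e * f y := by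
  refine integral_mul_fderiv_eq_neg_fderiv_mul_of_integrable ?_ ?_ ?_
    (fun y _ => hv.differentiable y) fun y _ => hf.differentiable one_ne_zero y
  · exact hv.integrable_fderiv_apply_mul hf.continuous e
  · exact (hv.differentiable.continuous.mul ((hf.continuous_fderiv one_ne_zero).clm_apply
      continuous_const)).integrable_of_hasCompactSupport hv.hasCompactSupport.mul_right
  · exact (hv.differentiable.continuous.mul hf.continuous).integrable_of_hasCompactSupport
      hv.hasCompactSupport.mul_right

/- The trace of `fderiv ℝ Y y` is the divergence of `Y`. -/
lemma IsTest.integral_mul_trace_fderiv (hv : IsTest Ω v) {Y : E → E} (hY : ContDiff ℝ 1 Y) :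
    ∫ y, v y * LinearMap.trace ℝ E (fderiv ℝ Y y) = -∫ y, ⟪∇ v y, Y y⟫ := by
  let e := stdOrthonormalBasis ℝ E
  have hYe (i) : ContDiff ℝ 1 fun y => ⟪e i, Y y⟫ := contDiff_const.inner ℝ hY
  have hfd (i) (y : E) : fderiv ℝ (fun y => ⟪e i, Y y⟫) y (e i) = ⟪e i, fderiv ℝ Y y (e i)⟫ := by
    rw [fderiv_inner_apply ℝ (differentiableAt_const _) (hY.differentiable one_ne_zero y)]
    simp
  have htrace (y : E) : v y * LinearMap.trace ℝ E (fderiv ℝ Y y)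
      = ∑ i, v y * fderiv ℝ (fun y => ⟪e i, Y y⟫) y (e i) := by
    simp only [hfd, LinearMap.trace_eq_sum_inner _ e, Finset.mul_sum]
    rfl
  have hinner (y : E) : ⟪∇ v y, Y y⟫ = ∑ i, fderiv ℝ v y (e i) * ⟪e i, Y y⟫ := by
    rw [← e.sum_inner_mul_inner]
    simp only [inner_gradient_left]
  simp only [htrace, hinner]
  rw [integral_finsetSum, integral_finsetSum, ← Finset.sum_neg_distrib]
  · exact Finset.sum_congr rfl fun i _ => hv.integral_mul_fderiv_apply (hYe i) (e i)
  · exact fun i _ => hv.integrable_fderiv_apply_mul (hYe i).continuous (e i)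
  · exact fun i _ => (hv.differentiable.continuous.mul (((hYe i).continuous_fderiv
      one_ne_zero).clm_apply continuous_const)).integrable_of_hasCompactSupport
      hv.hasCompactSupport.mul_right

lemma IsTest.integrable_sq (hv : IsTest Ω v) : Integrable fun y => v y ^ 2 := by
  simpa using hv.memLp.integrable_norm_pow (p := 2) (by norm_num)

lemma IsTest.integrable_norm_gradient_sq (hv : IsTest Ω v) :
    Integrable fun y => ‖∇ v y‖ ^ 2 :=
  hv.memLp_gradient.integrable_norm_pow (p := 2) (by norm_num)

lemma IsTest.gradient_sq (hv : IsTest Ω v) (y : E) :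
    ∇ (fun y => v y ^ 2) y = (2 * v y) • ∇ v y := by
  simpa using gradient_comp (hasDerivAt_pow 2 (v y)) (hv.differentiable y)

lemma IsTest.sq (hv : IsTest Ω v) : IsTest Ω fun y => v y ^ 2 := by
  obtain ⟨C, hC⟩ := hv.hasCompactSupport.exists_bound_of_continuous hv.differentiable.continuous
  have hsupp : tsupport (fun y => v y ^ 2) ⊆ tsupport v :=
    closure_mono fun y hy h0 => hy (by simp [h0])
  refine ⟨hv.differentiable.fun_pow 2, hv.hasCompactSupport.of_isClosed_subset
    (isClosed_tsupport _) hsupp, hsupp.trans hv.tsupport_subset,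
    (hv.memLp_gradient.norm.const_mul (2 * C)).mono'
      (measurable_gradient _).aestronglyMeasurable (.of_forall fun y => ?_)⟩
  rw [hv.gradient_sq, norm_smul, norm_mul, Real.norm_ofNat]
  gcongr
  exact hC y

/- The field `y ↦ y - x` has divergence `dim E`. -/
lemma IsTest.poincare {x : E} {R : ℝ} (hv : IsTest Ω v) (hΩ : Ω ⊆ ball x R) :
    (Module.finrank ℝ E : ℝ) ^ 2 * ∫ y, v y ^ 2 ≤ 4 * R ^ 2 * ∫ y, ‖∇ v y‖ ^ 2 := by
  set d : ℝ := (Module.finrank ℝ E : ℝ)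
  have hY : ContDiff ℝ 1 fun y : E => y - x := contDiff_id.sub contDiff_const
  have htrace (y : E) : LinearMap.trace ℝ E (fderiv ℝ (fun y : E => y - x) y) = d := by
    rw [fderiv_sub_const, fderiv_fun_id]
    exact LinearMap.trace_id ℝ E
  have hpoint (y : E) : -(d * ⟪∇ (fun y => v y ^ 2) y, y - x⟫)
      ≤ d ^ 2 / 2 * v y ^ 2 + 2 * R ^ 2 * ‖∇ v y‖ ^ 2 := by
    rw [hv.gradient_sq, real_inner_smul_left]
    have hs : ⟪∇ v y, y - x⟫ ^ 2 ≤ R ^ 2 * ‖∇ v y‖ ^ 2 := by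
      by_cases hy : y ∈ tsupport v
      · rw [mul_comm, ← mul_pow, ← sq_abs]
        gcongr
        refine (abs_real_inner_le_norm _ _).trans (mul_le_mul_of_nonneg_left ?_ (norm_nonneg _))
        exact (mem_ball_iff_norm.1 (hΩ (hv.tsupport_subset hy))).le
      · simp [gradient_eq_zero_of_notMem_tsupport hy]
    linarith [sq_nonneg (d * v y + 2 * ⟪∇ v y, y - x⟫)]
  have hdiv := hv.sq.integral_mul_trace_fderiv hY
  simp only [htrace, integral_mul_const] at hdiv
  have hle : -(d * ∫ y, ⟪∇ (fun y => v y ^ 2) y, y - x⟫)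
      ≤ d ^ 2 / 2 * (∫ y, v y ^ 2) + 2 * R ^ 2 * ∫ y, ‖∇ v y‖ ^ 2 := by
    rw [← integral_const_mul, ← integral_const_mul, ← integral_const_mul, ← integral_neg,
      ← integral_add (hv.integrable_sq.const_mul _) (hv.integrable_norm_gradient_sq.const_mul _)]
    exact integral_mono ((hv.sq.integrable_inner_gradient hY.continuous).const_mul d).neg
      ((hv.integrable_sq.const_mul _).add (hv.integrable_norm_gradient_sq.const_mul _)) hpoint
  linear_combination 2 * hle + 2 * d * hdiv

end IntegrationByParts

lemma hasDerivAt_max_zero_pow (n : ℕ) (s : ℝ) :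
    HasDerivAt (fun s : ℝ => max s 0 ^ (n + 2)) ((n + 2) * max s 0 ^ (n + 1)) s := by
  rcases lt_trichotomy s 0 with hs | rfl | hs
  · have hzero : (fun s : ℝ => max s 0 ^ (n + 2)) =ᶠ[𝓝 s] fun _ => 0 := by
      filter_upwards [gt_mem_nhds hs] with t ht
      simp [max_eq_right ht.le]
    simpa [max_eq_right hs.le] using (hasDerivAt_const s (0 : ℝ)).congr_of_eventuallyEq hzero
  · have hle : (fun s : ℝ => max s 0 ^ (n + 2)) =O[𝓝 0] fun s => s ^ (n + 2) :=
      .of_bound 1 <| .of_forall fun s => by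
        rw [one_mul, norm_pow, norm_pow]
        gcongr
        exact abs_max_le_max_abs_abs.trans (by simp)
    simpa [hasDerivAt_iff_isLittleO] using
      hle.trans_isLittleO (Asymptotics.isLittleO_pow_id (by lia : 1 < n + 2))
  · have hpow : (fun s : ℝ => max s 0 ^ (n + 2)) =ᶠ[𝓝 s] fun s => s ^ (n + 2) := by
      filter_upwards [lt_mem_nhds hs] with t ht
      rw [max_eq_left ht.le]
    simpa [max_eq_left hs.le] using (hasDerivAt_pow (n + 2) s).congr_of_eventuallyEq hpow

lemma hasDerivAt_max_sub_zero_sq (β s : ℝ) :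
    HasDerivAt (fun s : ℝ => max (β - s) 0 ^ 2) (-(2 * max (β - s) 0)) s := by
  simpa using (hasDerivAt_max_zero_pow 0 (β - s)).comp_const_sub β s

section Truncation

variable [FiniteDimensional ℝ E] [MeasurableSpace E] [BorelSpace E]

/-- The regularity of the solution on which the estimates rest: `u` is continuous up to the boundary
of the bounded open set `Ω`, and differentiable in `Ω` with locally square integrable gradient. -/
structure IsAdmissible (Ω : Set E) (u : E → ℝ) : Prop where
  isOpen : IsOpen Ω
  isBounded : Bornology.IsBounded Ω
  continuousOn : ContinuousOn u (closure Ω)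
  differentiableAt : ∀ y ∈ Ω, DifferentiableAt ℝ u y
  isLocL2_gradient : IsLocL2 Ω (∇ u)

namespace IsAdmissible

variable {Ω : Set E} {u : E → ℝ} {β d : ℝ} {Φ Φ' : ℝ → ℝ} {y : E}

lemma isCompact_sublevel (hu : IsAdmissible Ω u) (β : ℝ) :
    IsCompact (closure Ω ∩ u ⁻¹' Iic β) :=
  hu.isBounded.isCompact_closure.of_isClosed_subset
    (hu.continuousOn.preimage_isClosed_of_isClosed isClosed_closure isClosed_Iic) inter_subset_left

lemma sublevel_subset (hu : IsAdmissible Ω u) (hβ : ∀ y ∈ frontier Ω, β < u y) :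
    closure Ω ∩ u ⁻¹' Iic β ⊆ Ω := fun y hy => by
  by_contra hyΩ
  exact (hβ y (hu.isOpen.frontier_eq ▸ ⟨hy.1, hyΩ⟩)).not_ge hy.2

lemma indicator_comp_eventuallyEq (hu : IsAdmissible Ω u) (hy : y ∈ Ω) :
    (Ω.indicator fun y => Φ (u y)) =ᶠ[𝓝 y] fun y => Φ (u y) := by
  filter_upwards [hu.isOpen.mem_nhds hy] with z hz using indicator_of_mem hz _

lemma gradient_indicator_comp (hu : IsAdmissible Ω u) (hy : y ∈ Ω) (hΦ : HasDerivAt Φ d (u y)) :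
    ∇ (Ω.indicator fun y => Φ (u y)) y = d • ∇ u y := by
  rw [(hu.indicator_comp_eventuallyEq hy).gradient_eq, gradient_comp hΦ (hu.differentiableAt y hy)]

lemma tsupport_indicator_comp_subset (hu : IsAdmissible Ω u) (hΦ0 : ∀ s, β ≤ s → Φ s = 0) :
    tsupport (Ω.indicator fun y => Φ (u y)) ⊆ closure Ω ∩ u ⁻¹' Iic β := by
  refine closure_minimal (fun y hy => ?_) (hu.isCompact_sublevel β).isClosed
  obtain ⟨hyΩ, hΦy⟩ : y ∈ Ω ∧ Φ (u y) ≠ 0 := by simpa using hy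
  exact ⟨subset_closure hyΩ, le_of_not_ge fun hle => hΦy (hΦ0 _ hle)⟩

lemma isTest_indicator_comp (hu : IsAdmissible Ω u) (hβ : ∀ y ∈ frontier Ω, β < u y)
    (hΦ0 : ∀ s, β ≤ s → Φ s = 0) (hΦ : ∀ y ∈ Ω, HasDerivAt Φ (Φ' (u y)) (u y))
    (hΦ' : ContinuousOn (fun y => Φ' (u y)) Ω) :
    IsTest Ω (Ω.indicator fun y => Φ (u y)) := by
  set S := closure Ω ∩ u ⁻¹' Iic β
  have hS : IsCompact S := hu.isCompact_sublevel β
  have hSΩ : S ⊆ Ω := hu.sublevel_subset hβ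
  have hsupp := hu.tsupport_indicator_comp_subset hΦ0
  obtain ⟨C, hC⟩ := hS.exists_bound_of_continuousOn (hΦ'.mono hSΩ)
  refine ⟨fun y => ?_, hS.of_isClosed_subset (isClosed_tsupport _) hsupp, hsupp.trans hSΩ, ?_⟩
  · by_cases hy : y ∈ tsupport (Ω.indicator fun y => Φ (u y))
    · have hyΩ := hSΩ (hsupp hy)
      exact (hu.indicator_comp_eventuallyEq hyΩ).differentiableAt_iff.2
        ((hΦ y hyΩ).differentiableAt.comp y (hu.differentiableAt y hyΩ))
    · exact (notMem_tsupport_iff_eventuallyEq.1 hy).differentiableAt_iff.2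
        (differentiableAt_const 0)
  · have hgrad : MemLp (S.indicator (∇ u)) 2 :=
      (memLp_indicator_iff_restrict hS.measurableSet).2 (hu.isLocL2_gradient S hS hSΩ)
    refine (hgrad.norm.const_mul C).mono' (measurable_gradient _).aestronglyMeasurable
      (.of_forall fun y => ?_)
    by_cases hy : y ∈ S
    · rw [hu.gradient_indicator_comp (hSΩ hy) (hΦ y (hSΩ hy)), norm_smul, indicator_of_mem hy]
      gcongr
      exact hC y hy
    · simp [gradient_eq_zero_of_notMem_tsupport fun h => hy (hsupp h), hy]

end IsAdmissible

lemma SolvesWith.integral_nonpos_of_le {Ω : Set E} {M₁ M₂ M₀ β : ℝ} {u c F : E → ℝ} {b : E → E}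
    {Φ Φ' : ℝ → ℝ} (hsol : SolvesWith Ω M₁ M₂ M₀ u b c) (hu : IsAdmissible Ω u)
    (hβ : ∀ y ∈ frontier Ω, β < u y) (hΦ0 : ∀ s, β ≤ s → Φ s = 0)
    (hΦ : ∀ y ∈ Ω, HasDerivAt Φ (-Φ' (u y)) (u y)) (hΦ' : ContinuousOn (fun y => Φ' (u y)) Ω)
    (hΦ_nonneg : ∀ y ∈ Ω, 0 ≤ Φ (u y)) (hΦ'_nonneg : ∀ y ∈ Ω, 0 ≤ Φ' (u y))
    (hF : Integrable F) (hF0 : ∀ y ∉ Ω, F y = 0)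
    (hle : ∀ y ∈ Ω, F y ≤ Φ' (u y) * (‖∇ u y‖ ^ 2 - M₁ * |u y| * ‖∇ u y‖)
      - Φ (u y) * (M₂ * ‖∇ u y‖ + M₀ * |u y|)) : ∫ y, F y ≤ 0 := by
  set v := Ω.indicator fun y => Φ (u y)
  have hv : IsTest Ω v := hu.isTest_indicator_comp (Φ' := fun s => -Φ' s) hβ hΦ0 hΦ hΦ'.neg
  have hpoint (y : E) : F y ≤ -(⟪∇ u y + b y, ∇ v y⟫ + c y * v y) := by
    by_cases hy : y ∈ Ω
    · have hvy : v y = Φ (u y) := indicator_of_mem hy _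
      rw [hu.gradient_indicator_comp hy (hΦ y hy), hvy, real_inner_smul_right, inner_add_left,
        real_inner_self_eq_norm_sq]
      have hb : -(M₁ * |u y| * ‖∇ u y‖) ≤ ⟪b y, ∇ u y⟫ := by
        refine neg_le_of_neg_le <| (neg_le_abs _).trans <| (abs_real_inner_le_norm _ _).trans ?_
        gcongr
        exact hsol.norm_le y hy
      have hc := (le_abs_self _).trans (hsol.abs_le y hy)
      linarith [hle y hy, mul_le_mul_of_nonneg_left hb (hΦ'_nonneg y hy),
        mul_le_mul_of_nonneg_left hc (hΦ_nonneg y hy)]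
    · have hyv : y ∉ tsupport v := fun h => hy (hv.tsupport_subset h)
      simp [hF0 y hy, gradient_eq_zero_of_notMem_tsupport hyv, image_eq_zero_of_notMem_tsupport hyv]
  calc ∫ y, F y ≤ ∫ y, -(⟪∇ u y + b y, ∇ v y⟫ + c y * v y) :=
        integral_mono hF (hsol.integrable v hv).neg hpoint
    _ = 0 := by rw [integral_neg, hsol.integral_eq_zero v hv, neg_zero]

end Truncation

section Nonneg

variable [FiniteDimensional ℝ E] [MeasurableSpace E] [BorelSpace E] {Ω : Set E} {v : E → ℝ}

lemma IsTest.eq_zero_of_integral_sq_nonpos (hv : IsTest Ω v) (h : ∫ y, v y ^ 2 ≤ 0) (y : E) :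
    v y = 0 := by
  by_contra hy
  exact h.not_gt <| hv.sq.differentiable.continuous.integral_pos_of_hasCompactSupport_nonneg_nonzero
    hv.sq.hasCompactSupport (fun z => sq_nonneg (v z)) (pow_ne_zero 2 hy)

lemma IsTest.eq_zero_of_integral_norm_gradient_sq_le {a C₁ C₂ : ℝ} (hv : IsTest Ω v)
    (hpoincare : ∫ y, v y ^ 2 ≤ a ^ 2 * ∫ y, ‖∇ v y‖ ^ 2) (hC₂ : 0 ≤ C₂) (hC : C₂ * a ^ 2 < C₁)
    (h : ∫ y, (C₁ * ‖∇ v y‖ ^ 2 - C₂ * v y ^ 2) ≤ 0) (y : E) : v y = 0 := by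
  rw [integral_sub (hv.integrable_norm_gradient_sq.const_mul _) (hv.integrable_sq.const_mul _),
    integral_const_mul, integral_const_mul] at h
  have hD : 0 ≤ ∫ y, ‖∇ v y‖ ^ 2 := integral_nonneg fun y => sq_nonneg _
  have hD' : (C₁ - C₂ * a ^ 2) * ∫ y, ‖∇ v y‖ ^ 2 ≤ 0 := by
    linarith [mul_le_mul_of_nonneg_left hpoincare hC₂]
  have hD0 : ∫ y, ‖∇ v y‖ ^ 2 = 0 :=
    le_antisymm (nonpos_of_mul_nonpos_right hD' (sub_pos.2 hC)) hD
  exact hv.eq_zero_of_integral_sq_nonpos (by simpa [hD0] using hpoincare) y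

/- The test function is `(u⁻)³`, whose energy controls that of `(u⁻)²`. -/
lemma SolvesWith.integral_sq_max_sub_le {M₁ M₂ M₀ a : ℝ} {u c : E → ℝ} {b : E → E}
    (hsol : SolvesWith Ω M₁ M₂ M₀ u b c) (hu : IsAdmissible Ω u)
    (hpos : ∀ y ∈ frontier Ω, 0 < u y) (hM : 0 ≤ 3 * M₁ + M₂) (ha : 0 < a) {g : E → ℝ}
    (hg : IsTest Ω g) (hgu : g = Ω.indicator fun y => max (0 - u y) 0 ^ 2) :
    ∫ y, ((3 / 4 - (3 * M₁ + M₂) * a / 4) * ‖∇ g y‖ ^ 2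
      - (M₀ + (3 * M₁ + M₂) / (4 * a)) * g y ^ 2) ≤ 0 := by
  have hcube (s : ℝ) :
      HasDerivAt (fun s : ℝ => max (0 - s) 0 ^ 3) (-(3 * max (0 - s) 0 ^ 2)) s := by
    simpa [show (1 : ℝ) + 2 = 3 by norm_num] using
      (hasDerivAt_max_zero_pow 1 (0 - s)).comp_const_sub 0 s
  refine hsol.integral_nonpos_of_le (Φ' := fun s => 3 * max (0 - s) 0 ^ 2) hu hpos
    (fun s hs => by simp [hs]) (fun y _ => hcube (u y)) ?_ (fun y _ => by positivity)
    (fun y _ => by positivity)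
    ((hg.integrable_norm_gradient_sq.const_mul _).sub (hg.integrable_sq.const_mul _)) ?_ ?_
  · have := hu.continuousOn.mono subset_closure
    fun_prop
  · intro y hy
    have hyg : y ∉ tsupport g := fun h => hy (hg.tsupport_subset h)
    simp [gradient_eq_zero_of_notMem_tsupport hyg, image_eq_zero_of_notMem_tsupport hyg]
  · intro y hy
    rw [hgu, hu.gradient_indicator_comp hy (hasDerivAt_max_sub_zero_sq 0 (u y)),
      indicator_of_mem hy, norm_smul, norm_neg, Real.norm_of_nonneg (by positivity)]
    set f := max (0 - u y) 0
    have hf : f * |u y| = f ^ 2 := by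
      rcases le_total (u y) 0 with h | h
      · simp [f, abs_of_nonpos h, h, sq]
      · simp [f, h]
    have hamgm := mul_le_mul_of_nonneg_left
      (two_mul_le_add_mul_sq (a := f * ‖∇ u y‖) (b := f ^ 2) (ε := 2 * a) (by positivity)) hM
    linear_combination hamgm / 2 + (3 * M₁ * f * ‖∇ u y‖ + M₀ * f ^ 2) * hf

lemma SolvesWith.nonneg {M₁ M₂ M₀ a : ℝ} {u c : E → ℝ} {b : E → E}
    (hsol : SolvesWith Ω M₁ M₂ M₀ u b c) (hu : IsAdmissible Ω u)
    (hpos : ∀ y ∈ frontier Ω, 0 < u y) (hM : 0 ≤ 3 * M₁ + M₂) (hM₀ : 0 ≤ M₀) (ha : 0 < a)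
    (hpoincare : ∀ v, IsTest Ω v → ∫ y, v y ^ 2 ≤ a ^ 2 * ∫ y, ‖∇ v y‖ ^ 2)
    (hsmall : 2 * (3 * M₁ + M₂) * a + 4 * M₀ * a ^ 2 < 3) : ∀ y ∈ Ω, 0 ≤ u y := fun y hy => by
  have hcont : ContinuousOn (fun y => -(2 * max (0 - u y) 0)) Ω := by
    have := hu.continuousOn.mono subset_closure
    fun_prop
  have hg : IsTest Ω (Ω.indicator fun y => max (0 - u y) 0 ^ 2) :=
    hu.isTest_indicator_comp (Φ' := fun s => -(2 * max (0 - s) 0)) hpos (fun s hs => by simp [hs])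
      (fun y _ => hasDerivAt_max_sub_zero_sq 0 (u y)) hcont
  have hgy := hg.eq_zero_of_integral_norm_gradient_sq_le (hpoincare _ hg) (by positivity) ?_
    (hsol.integral_sq_max_sub_le hu hpos hM ha hg rfl) y
  · simpa [indicator_of_mem hy] using hgy
  · field_simp
    linarith

end Nonneg

/-- The nonnegative function with derivative `-(β - s)₊ / (s + τ)` on `s ≥ 0` that vanishes for
`s ≥ β`. It behaves like `-log (s + τ)` near `0`, and the truncation `max t 0` in the denominator
makes it total. -/
def truncLog (β τ s : ℝ) : ℝ := ∫ t in s..β, max (β - t) 0 / (max t 0 + τ)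

section TruncLog

variable {β τ s : ℝ}

lemma max_zero_add_pos (hτ : 0 < τ) (t : ℝ) : 0 < max t 0 + τ :=
  add_pos_of_nonneg_of_pos (le_max_right _ _) hτ

lemma continuous_max_sub_div (β : ℝ) (hτ : 0 < τ) :
    Continuous fun t : ℝ => max (β - t) 0 / (max t 0 + τ) :=
  .div (by fun_prop) (by fun_prop) fun t => (max_zero_add_pos hτ t).ne'

lemma truncLog_eq_zero (hs : β ≤ s) : truncLog β τ s = 0 := by
  refine (intervalIntegral.integral_congr fun t ht => ?_).trans intervalIntegral.integral_zero
  have hβt : β - t ≤ 0 := sub_nonpos.2 (uIcc_of_ge hs ▸ ht).1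
  simp [hβt]

lemma integral_max_sub_div_nonneg {r : ℝ} (hτ : 0 < τ) (hsr : s ≤ r) :
    0 ≤ ∫ t in s..r, max (β - t) 0 / (max t 0 + τ) :=
  intervalIntegral.integral_nonneg hsr fun t _ =>
    div_nonneg (le_max_right _ _) (max_zero_add_pos hτ t).le

lemma truncLog_nonneg (hτ : 0 < τ) : 0 ≤ truncLog β τ s := by
  rcases le_total s β with h | h
  · exact integral_max_sub_div_nonneg hτ h
  · rw [truncLog_eq_zero h]

lemma hasDerivAt_truncLog (hτ : 0 < τ) (hs : 0 ≤ s) :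
    HasDerivAt (truncLog β τ) (-(max (β - s) 0 / (s + τ))) s := by
  have hk := continuous_max_sub_div β hτ
  refine (intervalIntegral.integral_hasDerivAt_left (hk.intervalIntegrable s β)
    hk.stronglyMeasurable.stronglyMeasurableAtFilter hk.continuousAt).congr_deriv ?_
  rw [max_eq_left hs]

lemma mul_log_sub_log_le_truncLog (hβ : 0 < β) (hτ : 0 < τ) (hs : 0 ≤ s) (hsβ : s ≤ β / 2) :
    β / 2 * (Real.log (β / 2) - Real.log (s + τ)) ≤ truncLog β τ s := by
  have hk := continuous_max_sub_div β hτ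
  have hpos (t : ℝ) (ht : t ∈ uIcc s (β / 2)) : t + τ ≠ 0 := by
    rw [uIcc_of_le hsβ] at ht
    linarith [ht.1]
  have hcont : ContinuousOn (fun t => β / 2 * (1 / (t + τ))) (uIcc s (β / 2)) := by
    fun_prop (disch := assumption)
  have hderiv (t : ℝ) (ht : t ∈ uIcc s (β / 2)) :
      HasDerivAt (fun t => β / 2 * Real.log (t + τ)) (β / 2 * (1 / (t + τ))) t :=
    (((hasDerivAt_id t).add_const τ).log (hpos t ht)).const_mul _
  calc β / 2 * (Real.log (β / 2) - Real.log (s + τ))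
      ≤ β / 2 * Real.log (β / 2 + τ) - β / 2 * Real.log (s + τ) := by
        rw [← mul_sub]
        gcongr
        linarith
    _ = ∫ t in s..β / 2, β / 2 * (1 / (t + τ)) :=
        (intervalIntegral.integral_eq_sub_of_hasDerivAt hderiv hcont.intervalIntegrable).symm
    _ ≤ ∫ t in s..β / 2, max (β - t) 0 / (max t 0 + τ) := by
        refine intervalIntegral.integral_mono_on hsβ hcont.intervalIntegrable
          (hk.intervalIntegrable _ _) fun t ht => ?_
        have ht0 : 0 ≤ t := hs.trans ht.1
        rw [max_eq_left ht0, mul_one_div]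
        gcongr
        exact le_max_of_le_left (by linarith [ht.2])
    _ ≤ (∫ t in s..β / 2, max (β - t) 0 / (max t 0 + τ))
          + ∫ t in β / 2..β, max (β - t) 0 / (max t 0 + τ) :=
        le_add_of_nonneg_right (integral_max_sub_div_nonneg hτ (by linarith))
    _ = truncLog β τ s := intervalIntegral.integral_add_adjacent_intervals
        (hk.intervalIntegrable _ _) (hk.intervalIntegrable _ _)

lemma half_sq_mul_sub_le {r q P M₁ M₂ M₀ : ℝ} (hr : 0 ≤ r) (hq : 0 ≤ q) (hP : P ≤ 1)
    (hs : 0 ≤ s) (hrs : r * s ≤ P) (hrs' : r * s ≤ r) (hM₁ : 0 ≤ M₁) (hM₂ : 0 ≤ M₂)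
    (hM₀ : 0 ≤ M₀) :
    (r * q) ^ 2 / 2 - ((3 * M₁ + M₂) ^ 2 / 2 + M₀)
      ≤ (2 * r + r ^ 2) * (q ^ 2 - M₁ * s * q) - P * r * (M₂ * q + M₀ * s) := by
  have hM₁' : M₁ * ((2 + r) * (r * s * q)) ≤ M₁ * (3 * (r * q)) := by
    have h₁ : r * s * q ≤ r * q := by gcongr
    have h₂ : r * (r * s * q) ≤ r * (1 * q) := by
      gcongr
      exact hrs.trans hP
    exact mul_le_mul_of_nonneg_left (by linarith) hM₁
  have hM₂' : M₂ * (P * (r * q)) ≤ M₂ * (1 * (r * q)) := by gcongr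
  have hM₀' : M₀ * (P * (r * s)) ≤ M₀ * (1 * 1) := by
    gcongr
    exact hrs.trans hP
  linarith [sq_nonneg (r * q - (3 * M₁ + M₂)), mul_nonneg hr (sq_nonneg q)]

variable [FiniteDimensional ℝ E] [MeasurableSpace E] [BorelSpace E]
  {Ω : Set E} {u c : E → ℝ} {b : E → E} {M₁ M₂ M₀ : ℝ}

lemma IsAdmissible.continuousOn_max_sub_div (hu : IsAdmissible Ω u) (hnn : ∀ y ∈ Ω, 0 ≤ u y)
    (β : ℝ) (hτ : 0 < τ) : ContinuousOn (fun y => max (β - u y) 0 / (u y + τ)) Ω := by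
  have huΩ := hu.continuousOn.mono subset_closure
  exact .div (by fun_prop) (by fun_prop) fun y hy => by linarith [hnn y hy]

lemma IsAdmissible.isTest_truncLog (hu : IsAdmissible Ω u) (hβ : ∀ y ∈ frontier Ω, β < u y)
    (hnn : ∀ y ∈ Ω, 0 ≤ u y) (hτ : 0 < τ) :
    IsTest Ω (Ω.indicator fun y => truncLog β τ (u y)) :=
  hu.isTest_indicator_comp (Φ' := fun s => -(max (β - s) 0 / (s + τ))) hβ
    (fun _ => truncLog_eq_zero) (fun y hy => hasDerivAt_truncLog hτ (hnn y hy))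
    (hu.continuousOn_max_sub_div hnn β hτ).neg

lemma hasDerivAt_max_sub_sq_div (hτ : 0 < τ) (hs : 0 ≤ s) :
    HasDerivAt (fun s => max (β - s) 0 ^ 2 / (s + τ))
      (-(2 * (max (β - s) 0 / (s + τ)) + (max (β - s) 0 / (s + τ)) ^ 2)) s := by
  have hsτ : s + τ ≠ 0 := by linarith
  refine ((hasDerivAt_max_sub_zero_sq β s).fun_div ((hasDerivAt_id' s).add_const τ)
    hsτ).congr_deriv ?_
  field_simp
  ring

/- The test function is `(β - u)₊² / (u + τ)`. -/
lemma SolvesWith.integral_norm_gradient_truncLog_le (hsol : SolvesWith Ω M₁ M₂ M₀ u b c)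
    (hu : IsAdmissible Ω u) (hβ1 : β ≤ 1) (hβ : ∀ y ∈ frontier Ω, β < u y)
    (hnn : ∀ y ∈ Ω, 0 ≤ u y) (hM₁ : 0 ≤ M₁) (hM₂ : 0 ≤ M₂) (hM₀ : 0 ≤ M₀) (hτ : 0 < τ) :
    ∫ y, ‖∇ (Ω.indicator fun y => truncLog β τ (u y)) y‖ ^ 2
      ≤ ((3 * M₁ + M₂) ^ 2 + 2 * M₀) * volume.real Ω := by
  set w := Ω.indicator fun y => truncLog β τ (u y)
  have hw : IsTest Ω w := hu.isTest_truncLog hβ hnn hτ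
  set C := (3 * M₁ + M₂) ^ 2 / 2 + M₀
  have hw2 : Integrable fun y => ‖∇ w y‖ ^ 2 / 2 := hw.integrable_norm_gradient_sq.div_const 2
  have hC : Integrable (Ω.indicator fun _ => C) :=
    (integrable_indicator_iff hu.isOpen.measurableSet).2
      (integrableOn_const hu.isBounded.measure_lt_top.ne)
  have hr := hu.continuousOn_max_sub_div hnn β hτ
  have hle := hsol.integral_nonpos_of_le hu hβ
    (F := fun y => ‖∇ w y‖ ^ 2 / 2 - Ω.indicator (fun _ => C) y)
    (Φ := fun s => max (β - s) 0 ^ 2 / (s + τ))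
    (Φ' := fun s => 2 * (max (β - s) 0 / (s + τ)) + (max (β - s) 0 / (s + τ)) ^ 2)
    (fun s hs => by simp [hs]) (fun y hy => hasDerivAt_max_sub_sq_div hτ (hnn y hy))
    ((hr.const_mul 2).add (hr.pow 2)) (fun y hy => ?_) (fun y hy => ?_) (hw2.sub hC)
    (fun y hy => ?_) fun y hy => ?_
  · rw [integral_sub hw2 hC, integral_div, integral_indicator_const _ hu.isOpen.measurableSet,
      smul_eq_mul] at hle
    linear_combination 2 * hle
  · have := hnn y hy
    positivity
  · have := hnn y hy
    positivity
  · have hyw : y ∉ tsupport w := fun h => hy (hw.tsupport_subset h)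
    simp [gradient_eq_zero_of_notMem_tsupport hyw, hy]
  · have hs := hnn y hy
    rw [hu.gradient_indicator_comp hy (hasDerivAt_truncLog hτ hs), norm_smul, norm_neg,
      Real.norm_of_nonneg (by positivity), indicator_of_mem hy, abs_of_nonneg hs]
    have hrσ : max (β - u y) 0 / (u y + τ) * (u y + τ) = max (β - u y) 0 :=
      div_mul_cancel₀ _ (by positivity)
    have hr0 : 0 ≤ max (β - u y) 0 / (u y + τ) := by positivity
    refine (half_sq_mul_sub_le (P := max (β - u y) 0) hr0 (norm_nonneg _)
      (max_le (by linarith) zero_le_one) hs ?_ ?_ hM₁ hM₂ hM₀).trans_eq (by ring)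
    · linarith [mul_nonneg hr0 hτ.le]
    · rcases le_total β (u y) with h | h
      · simp [h]
      · exact mul_le_of_le_one_right hr0 (h.trans hβ1)

end TruncLog

section LogCapacity

/-- The regularization at scale `r` of the field `(y - p) / ‖y - p‖²`, whose divergence in the
plane is an approximate delta function at `p`. -/
def poleField (p : E) (r : ℝ) (y : E) : E := (‖y - p‖ ^ 2 + r ^ 2)⁻¹ • (y - p)

variable {p : E} {r : ℝ}

lemma contDiff_poleField (p : E) (hr : 0 < r) : ContDiff ℝ 1 (poleField p r) := by
  have hsub : ContDiff ℝ 1 fun y : E => y - p := contDiff_id.sub contDiff_const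
  exact (((hsub.norm_sq ℝ).add contDiff_const).inv fun y => by positivity).smul hsub

lemma norm_poleField_sq_le (p : E) (hr : 0 < r) (y : E) :
    ‖poleField p r y‖ ^ 2 ≤ (‖y - p‖ ^ 2 + r ^ 2)⁻¹ := by
  set ρ := ‖y - p‖ ^ 2 + r ^ 2
  have hρ0 : 0 < ρ := by positivity
  calc ‖poleField p r y‖ ^ 2 = ρ⁻¹ ^ 2 * ‖y - p‖ ^ 2 := by
        rw [poleField, norm_smul, Real.norm_of_nonneg (by positivity), mul_pow]
    _ ≤ ρ⁻¹ ^ 2 * ρ := by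
        gcongr
        exact le_add_of_nonneg_right (sq_nonneg r)
    _ = ρ⁻¹ := by field_simp

variable [FiniteDimensional ℝ E]

lemma trace_fderiv_poleField (hE : Module.finrank ℝ E = 2) (p : E) (hr : 0 < r) (y : E) :
    LinearMap.trace ℝ E (fderiv ℝ (poleField p r) y)
      = 2 * r ^ 2 / (‖y - p‖ ^ 2 + r ^ 2) ^ 2 := by
  set ρ := ‖y - p‖ ^ 2 + r ^ 2 with hρ
  have hρ0 : ρ ≠ 0 := by positivity
  have hsub : HasFDerivAt (fun y : E => y - p) (.id ℝ E) y := (hasFDerivAt_id y).sub_const p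
  have hY : HasFDerivAt (poleField p r) (ρ⁻¹ • .id ℝ E
      + (-(ρ ^ 2)⁻¹ • 2 • innerSL ℝ (y - p)).smulRight (y - p)) y :=
    ((hasDerivAt_inv hρ0).comp_hasFDerivAt y (hsub.norm_sq.add_const (r ^ 2))).fun_smul hsub
  calc LinearMap.trace ℝ E (fderiv ℝ (poleField p r) y)
      = LinearMap.trace ℝ E (ρ⁻¹ • LinearMap.id
          + (-(ρ ^ 2)⁻¹ • 2 • innerSL ℝ (y - p)).toLinearMap.smulRight (y - p)) := by
        rw [hY.fderiv]
        rfl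
    _ = ρ⁻¹ * 2 - (ρ ^ 2)⁻¹ * (2 * ‖y - p‖ ^ 2) := by
        rw [map_add, map_smul, LinearMap.trace_id, LinearMap.trace_smulRight, hE]
        generalize y - p = z
        simp [sub_eq_add_neg]
    _ = 2 * r ^ 2 / ρ ^ 2 := by
        rw [eq_sub_of_add_eq hρ.symm]
        field_simp
        ring

variable [MeasurableSpace E] [BorelSpace E]

lemma setIntegral_ball_inv_norm_sub_sq_add_sq (hE : Module.finrank ℝ E = 2) {R : ℝ} (p : E)
    (hR : 0 ≤ R) (hr : 0 < r) :
    ∫ y in ball p R, (‖y - p‖ ^ 2 + r ^ 2)⁻¹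
      = volume.real (ball (0 : E) 1) * Real.log ((R ^ 2 + r ^ 2) / r ^ 2) := by
  have : Nontrivial E := Module.nontrivial_of_finrank_pos (R := ℝ) (by lia)
  let f : ℝ → ℝ := (Iio R).indicator fun t => (t ^ 2 + r ^ 2)⁻¹
  have hball : (ball p R).indicator (fun y => (‖y - p‖ ^ 2 + r ^ 2)⁻¹) = fun y => f ‖y - p‖ := by
    ext y
    simp only [f, indicator, mem_ball_iff_norm, mem_Iio]
  have hf : (fun t => t ^ (Module.finrank ℝ E - 1) • f t)
      = (Iio R).indicator fun t => t * (t ^ 2 + r ^ 2)⁻¹ := by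
    ext t
    simp [f, indicator, hE]
  have hderiv (t : ℝ) :
      HasDerivAt (fun t => 1 / 2 * Real.log (t ^ 2 + r ^ 2)) (t * (t ^ 2 + r ^ 2)⁻¹) t := by
    have hne : t ^ 2 + r ^ 2 ≠ 0 := by positivity
    refine ((((hasDerivAt_pow 2 t).add_const (r ^ 2)).log hne).const_mul (1 / 2)).congr_deriv ?_
    field_simp
    norm_num
  have hcont : Continuous fun t : ℝ => t * (t ^ 2 + r ^ 2)⁻¹ :=
    continuous_id.mul (.inv₀ (by fun_prop) fun t => by positivity)
  rw [← integral_indicator measurableSet_ball, hball,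
    integral_sub_right_eq_self (fun y : E => f ‖y‖) p, integral_fun_norm_addHaar, hf,
    setIntegral_indicator measurableSet_Iio, Ioi_inter_Iio, ← integral_Ioc_eq_integral_Ioo,
    ← intervalIntegral.integral_of_le hR,
    intervalIntegral.integral_eq_sub_of_hasDerivAt (fun t _ => hderiv t)
      (hcont.intervalIntegrable _ _), hE, Real.log_div (by positivity) (by positivity)]
  simp
  ring

variable {Ω : Set E} {w : E → ℝ} {R l m : ℝ}

lemma IsTest.mul_le_integral_mul_trace_fderiv_poleField (hE : Module.finrank ℝ E = 2)
    (hw : IsTest Ω w) (hw0 : ∀ y, 0 ≤ w y) (hr : 0 < r) (hm : ∀ y ∈ ball p r, m ≤ w y) :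
    volume.real (ball (0 : E) 1) / 2 * m
      ≤ ∫ y, w y * LinearMap.trace ℝ E (fderiv ℝ (poleField p r) y) := by
  have hvol : volume.real (ball p r) = r ^ 2 * volume.real (ball (0 : E) 1) := by
    simp [Measure.real, Measure.addHaar_ball_of_pos _ p hr, hE, (sq_nonneg r)]
  have hlow (y : E) : (ball p r).indicator (fun _ => m * (1 / (2 * r ^ 2))) y
      ≤ w y * (2 * r ^ 2 / (‖y - p‖ ^ 2 + r ^ 2) ^ 2) := by
    by_cases hy : y ∈ ball p r
    swap
    · rw [indicator_of_notMem hy]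
      exact mul_nonneg (hw0 y) (by positivity)
    rw [indicator_of_mem hy]
    refine mul_le_mul (hm y hy) ?_ (by positivity) (hw0 y)
    have hρ : ‖y - p‖ ^ 2 + r ^ 2 ≤ 2 * r ^ 2 := by
      have : ‖y - p‖ ^ 2 ≤ r ^ 2 := by
        gcongr
        exact (mem_ball_iff_norm.1 hy).le
      linarith
    calc 1 / (2 * r ^ 2) = 2 * r ^ 2 / (2 * r ^ 2) ^ 2 := by field_simp
      _ ≤ 2 * r ^ 2 / (‖y - p‖ ^ 2 + r ^ 2) ^ 2 := by gcongr
  simp only [trace_fderiv_poleField hE p hr]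
  calc volume.real (ball (0 : E) 1) / 2 * m
      = ∫ y, (ball p r).indicator (fun _ => m * (1 / (2 * r ^ 2))) y := by
        rw [integral_indicator_const _ measurableSet_ball, hvol, smul_eq_mul]
        field_simp
    _ ≤ ∫ y, w y * (2 * r ^ 2 / (‖y - p‖ ^ 2 + r ^ 2) ^ 2) := by
        refine integral_mono ((integrable_indicator_iff measurableSet_ball).2
          (integrableOn_const measure_ball_lt_top.ne)) ?_ hlow
        refine (hw.differentiable.continuous.mul (.div (by fun_prop) (by fun_prop) fun y => ?_)
          ).integrable_of_hasCompactSupport hw.hasCompactSupport.mul_right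
        positivity

lemma IsTest.mul_le_mul_integral_norm_gradient_sq_add_log (hE : Module.finrank ℝ E = 2)
    (hw : IsTest Ω w) (hw0 : ∀ y, 0 ≤ w y) (hΩ : Ω ⊆ ball p R) (hr : 0 < r) (hR : 0 ≤ R)
    (hl : 0 < l) (hm : ∀ y ∈ ball p r, m ≤ w y) :
    volume.real (ball (0 : E) 1) * m ≤ l * (∫ y, ‖∇ w y‖ ^ 2)
      + l⁻¹ * (volume.real (ball (0 : E) 1) * Real.log ((R ^ 2 + r ^ 2) / r ^ 2)) := by
  have hcont : Continuous fun y : E => (‖y - p‖ ^ 2 + r ^ 2)⁻¹ :=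
    .inv₀ (by fun_prop) fun y => by positivity
  have hρ : Integrable ((ball p R).indicator fun y => (‖y - p‖ ^ 2 + r ^ 2)⁻¹) :=
    (integrable_indicator_iff measurableSet_ball).2
      ((hcont.continuousOn.integrableOn_compact (isCompact_closedBall p R)).mono_set
        ball_subset_closedBall)
  have hcs (y : E) : -2 * ⟪∇ w y, poleField p r y⟫ ≤ l * ‖∇ w y‖ ^ 2
      + l⁻¹ * (ball p R).indicator (fun y => (‖y - p‖ ^ 2 + r ^ 2)⁻¹) y := by
    by_cases hy : y ∈ tsupport w
    · rw [indicator_of_mem (hΩ (hw.tsupport_subset hy))]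
      calc -2 * ⟪∇ w y, poleField p r y⟫ ≤ 2 * ‖∇ w y‖ * ‖poleField p r y‖ := by
            linarith [neg_le_of_abs_le (abs_real_inner_le_norm (∇ w y) (poleField p r y))]
        _ ≤ l * ‖∇ w y‖ ^ 2 + l⁻¹ * ‖poleField p r y‖ ^ 2 := two_mul_le_add_mul_sq hl
        _ ≤ l * ‖∇ w y‖ ^ 2 + l⁻¹ * (‖y - p‖ ^ 2 + r ^ 2)⁻¹ := by
            gcongr
            exact norm_poleField_sq_le p hr y
    · rw [gradient_eq_zero_of_notMem_tsupport hy]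
      have : 0 ≤ (ball p R).indicator (fun y => (‖y - p‖ ^ 2 + r ^ 2)⁻¹) y :=
        indicator_nonneg (fun y _ => by positivity) y
      simp only [inner_zero_left, norm_zero, mul_zero]
      positivity
  have hY := contDiff_poleField p hr
  have hlow := hw.mul_le_integral_mul_trace_fderiv_poleField hE hw0 hr hm
  rw [hw.integral_mul_trace_fderiv hY] at hlow
  calc volume.real (ball (0 : E) 1) * m ≤ ∫ y, -2 * ⟪∇ w y, poleField p r y⟫ := by
        rw [integral_const_mul]
        linarith
    _ ≤ ∫ y, (l * ‖∇ w y‖ ^ 2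
          + l⁻¹ * (ball p R).indicator (fun y => (‖y - p‖ ^ 2 + r ^ 2)⁻¹) y) :=
        integral_mono ((hw.integrable_inner_gradient hY.continuous).const_mul _)
          ((hw.integrable_norm_gradient_sq.const_mul l).add (hρ.const_mul l⁻¹)) hcs
    _ = _ := by
        rw [integral_add (hw.integrable_norm_gradient_sq.const_mul l) (hρ.const_mul l⁻¹),
          integral_const_mul, integral_const_mul, integral_indicator measurableSet_ball,
          setIntegral_ball_inv_norm_sub_sq_add_sq hE p hR hr]

end LogCapacity

section StrictPositivity

lemma exists_eventually_norm_sub_le_mul {F G : Type*} [NormedAddCommGroup F]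
    [NormedSpace ℝ F] [NormedAddCommGroup G] [NormedSpace ℝ G] {f : F → G} {p : F}
    (hf : DifferentiableAt ℝ f p) :
    ∃ L, 0 ≤ L ∧ ∀ᶠ r : ℝ in 𝓝[>] 0, ∀ y ∈ ball p r, ‖f y - f p‖ ≤ L * r := by
  obtain ⟨L, hL, hbound⟩ := hf.isBigO_sub.exists_nonneg
  obtain ⟨r₀, hr₀, hball⟩ := Metric.eventually_nhds_iff_ball.1 hbound.bound
  refine ⟨L, hL, ?_⟩
  filter_upwards [Ioo_mem_nhdsGT hr₀] with r hr y hy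
  refine (hball y (ball_subset_ball hr.2.le hy)).trans ?_
  gcongr
  exact (mem_ball_iff_norm.1 hy).le

lemma eventually_mul_add_log_lt_mul_log {κ β : ℝ} (hκ : 0 < κ) (hβ : 0 < β) (A R : ℝ) {L : ℝ}
    (hL : 0 < L) :
    ∀ᶠ r : ℝ in 𝓝[>] 0, 8 / β * A + (8 / β)⁻¹ * (κ * Real.log ((R ^ 2 + r ^ 2) / r ^ 2))
      < κ * (β / 2 * (Real.log (β / 2) - Real.log (L * r))) := by
  set K := 8 / β * A + (8 / β)⁻¹ * (κ * Real.log (R ^ 2 + 1))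
    - κ * (β / 2 * (Real.log (β / 2) - Real.log L))
  filter_upwards [Ioo_mem_nhdsGT one_pos,
    Real.tendsto_log_nhdsGT_zero.eventually_lt_atBot (-(K / (κ * β / 4)))] with r hr hlog
  have hr0 : 0 < r := hr.1
  have hK : K < κ * β / 4 * -Real.log r := by
    rw [← div_lt_iff₀' (by positivity)]
    linarith
  have hR : (8 / β)⁻¹ * (κ * Real.log (R ^ 2 + r ^ 2))
      ≤ (8 / β)⁻¹ * (κ * Real.log (R ^ 2 + 1)) := by
    gcongr
    exact pow_le_one₀ hr0.le hr.2.le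
  have hβ8 : (8 / β)⁻¹ = β / 8 := inv_div _ _
  rw [Real.log_mul hL.ne' hr0.ne', Real.log_div (by positivity) (by positivity), Real.log_pow,
    Nat.cast_ofNat]
  linear_combination hK + hR - 2 * κ * Real.log r * hβ8

variable [FiniteDimensional ℝ E] [MeasurableSpace E] [BorelSpace E]
  {Ω : Set E} {u c : E → ℝ} {b : E → E} {M₁ M₂ M₀ β : ℝ}

/- At a zero `p`, `truncLog β r ∘ u` is of size `-log r` on `ball p r` with energy bounded
independently of `r`, which is incompatible with the logarithmic capacity estimate. -/
lemma SolvesWith.pos_of_nonneg (hE : Module.finrank ℝ E = 2) (hsol : SolvesWith Ω M₁ M₂ M₀ u b c)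
    (hu : IsAdmissible Ω u) (hβ0 : 0 < β) (hβ1 : β ≤ 1) (hβ : ∀ y ∈ frontier Ω, β < u y)
    (hnn : ∀ y ∈ Ω, 0 ≤ u y) (hM₁ : 0 ≤ M₁) (hM₂ : 0 ≤ M₂) (hM₀ : 0 ≤ M₀) :
    ∀ y ∈ Ω, 0 < u y := by
  intro p hp
  refine (hnn p hp).lt_of_ne' fun h0 => ?_
  set κ := volume.real (ball (0 : E) 1)
  have hκ : 0 < κ := ENNReal.toReal_pos (measure_ball_pos _ _ one_pos).ne' measure_ball_lt_top.ne
  obtain ⟨R, hR, hΩR⟩ := hu.isBounded.subset_ball_lt 0 p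
  obtain ⟨L, hL, hlip⟩ := exists_eventually_norm_sub_le_mul (hu.differentiableAt p hp)
  obtain ⟨r₀, hr₀, hball⟩ := Metric.isOpen_iff.1 hu.isOpen p hp
  have hlog := eventually_mul_add_log_lt_mul_log hκ hβ0
    (((3 * M₁ + M₂) ^ 2 + 2 * M₀) * volume.real Ω) R (L := L + 1) (by positivity)
  have hsmall : ∀ᶠ r : ℝ in 𝓝[>] 0, 0 < r ∧ r < min r₀ (β / 2 / (L + 1)) :=
    Ioo_mem_nhdsGT (lt_min hr₀ (by positivity))
  obtain ⟨r, hlip, hlog, hr, hr'⟩ := (hlip.and (hlog.and hsmall)).exists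
  obtain ⟨hrr₀, hLr⟩ := lt_min_iff.1 hr'
  have hlarge (y : E) (hy : y ∈ ball p r) : β / 2 * (Real.log (β / 2) - Real.log ((L + 1) * r))
      ≤ Ω.indicator (fun y => truncLog β r (u y)) y := by
    have hyΩ : y ∈ Ω := hball (ball_subset_ball hrr₀.le hy)
    have huy : u y ≤ L * r := by
      simpa only [h0, sub_zero] using (Real.le_norm_self _).trans (hlip y hy)
    have hu0 : 0 ≤ u y := hnn y hyΩ
    have hLr' : r * (L + 1) < β / 2 := (lt_div_iff₀ (by positivity)).1 hLr
    rw [indicator_of_mem hyΩ]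
    refine le_trans ?_ (mul_log_sub_log_le_truncLog hβ0 hr hu0 (by linarith))
    gcongr
    linarith
  have hcap := (hu.isTest_truncLog hβ hnn hr).mul_le_mul_integral_norm_gradient_sq_add_log hE
    (indicator_nonneg fun y _ => truncLog_nonneg hr) hΩR hr hR.le (l := 8 / β) (by positivity)
    hlarge
  have henergy := hsol.integral_norm_gradient_truncLog_le hu hβ1 hβ hnn hM₁ hM₂ hM₀ hr
  refine hlog.not_ge (hcap.trans ?_)
  gcongr

end StrictPositivity

lemma IsAdmissible.exists_forall_lt [FiniteDimensional ℝ E] [MeasurableSpace E] [BorelSpace E]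
    {Ω : Set E} {u : E → ℝ} (hu : IsAdmissible Ω u) (hpos : ∀ y ∈ frontier Ω, 0 < u y) :
    ∃ β, 0 < β ∧ β ≤ 1 ∧ ∀ y ∈ frontier Ω, β < u y := by
  obtain ⟨a, ha, hau⟩ := (hu.isBounded.isCompact_closure.of_isClosed_subset isClosed_frontier
    frontier_subset_closure).exists_forall_le' (hu.continuousOn.mono frontier_subset_closure) hpos
  refine ⟨min 1 (a / 2), by positivity, min_le_left _ _, fun y hy => ?_⟩
  linarith [hau y hy, min_le_right 1 (a / 2)]

theorem stmt7_general {Ω : Set V2} {x : V2} {ε : ℝ} {W₁ W₂ : V2 → V2} {V u : V2 → ℝ}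
    {M₁ M₂ MV : ℝ} (hΩ : IsOpen Ω) (hΩx : Ω ⊆ ball x ε)
    (hW₁ : ∀ y ∈ Ω, ‖W₁ y‖ ≤ M₁) (hW₂ : ∀ y ∈ Ω, ‖W₂ y‖ ≤ M₂) (hV : ∀ y ∈ Ω, |V y| ≤ MV)
    (hsmall : 2 * (3 * M₁ + M₂) * ε + 4 * MV * ε ^ 2 < 3)
    (hu : ContinuousOn u (closure Ω)) (hu' : ∀ y ∈ Ω, DifferentiableAt ℝ u y)
    (hsol : IsWeakSol Ω W₁ W₂ V u) (hpos : ∀ y ∈ frontier Ω, 0 < u y) :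
    ∀ y ∈ Ω, 0 < u y := by
  intro y hy
  have hε : 0 < ε := pos_of_mem_ball (hΩx hy)
  have hM₁ : 0 ≤ M₁ := (norm_nonneg _).trans (hW₁ y hy)
  have hM₂ : 0 ≤ M₂ := (norm_nonneg _).trans (hW₂ y hy)
  have hMV : 0 ≤ MV := (abs_nonneg _).trans (hV y hy)
  have hadm : IsAdmissible Ω u :=
    ⟨hΩ, isBounded_ball.subset hΩx, hu, hu', hsol.isLocL2_gradient hΩ hu' hW₁ hW₂ hV⟩
  obtain ⟨b, c, hbc⟩ := hsol.exists_solvesWith hΩ (hu.mono subset_closure) hadm.isLocL2_gradient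
    hW₁ hW₂ hV
  have hE : Module.finrank ℝ V2 = 2 := finrank_euclideanSpace_fin
  have hpoincare (v : V2 → ℝ) (hv : IsTest Ω v) : ∫ y, v y ^ 2 ≤ ε ^ 2 * ∫ y, ‖∇ v y‖ ^ 2 := by
    have := hv.poincare hΩx
    rw [hE] at this
    push_cast at this
    linarith
  have hnn := hbc.nonneg hadm hpos (by positivity) hMV hε hpoincare hsmall
  obtain ⟨β, hβ0, hβ1, hβ⟩ := hadm.exists_forall_lt hpos
  exact hbc.pos_of_nonneg hE hadm hβ0 hβ1 hβ hnn hM₁ hM₂ hMV y hy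

lemma small_of_rpow_small {δ ε M₁ M₂ MV : ℝ} (hδ : 0 < δ) (hε : 0 < ε) (hM₁ : 0 ≤ M₁)
    (hM₂ : 0 ≤ M₂) (hMV : 0 ≤ MV)
    (h : ε + ε ^ (2 / (2 + δ)) * M₁ + ε * M₂ + ε ^ 2 * MV ≤ 1 / 4) :
    2 * (3 * M₁ + M₂) * ε + 4 * MV * ε ^ 2 < 3 := by
  have hterm₁ : 0 ≤ ε ^ (2 / (2 + δ)) * M₁ := by positivity
  have hterm₂ : 0 ≤ ε * M₂ := by positivity
  have hterm₃ : 0 ≤ ε ^ 2 * MV := by positivity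
  have hpow : ε ≤ ε ^ (2 / (2 + δ)) := by
    have hδ' : 2 / (2 + δ) ≤ 1 := (div_le_one (by positivity)).2 (by linarith)
    simpa only [Real.rpow_one] using
      Real.rpow_le_rpow_of_exponent_ge hε (by linarith) hδ'
  have hM₁' : ε * M₁ ≤ ε ^ (2 / (2 + δ)) * M₁ := by gcongr
  linarith

/-- Maximum principle on small balls: a weak solution of the elliptic equation on
`B(x,ε)`, continuous up to the boundary and positive on `∂B(x,ε)`, is positive in
`B(x,ε)`, under the smallness condition on `ε`. -/
theorem stmt7 : ∃ c : ℝ, 0 < c ∧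
    ∀ (δ : ℝ), 0 < δ → ∀ (ε : ℝ), 0 < ε →
    ∀ (x : V2) (W₁ W₂ : V2 → V2) (V : V2 → ℝ) (M₁ M₂ MV : ℝ),
      0 ≤ M₁ → 0 ≤ M₂ → 0 ≤ MV →
      (∀ y ∈ ball x ε, ‖W₁ y‖ ≤ M₁) → (∀ y ∈ ball x ε, ‖W₂ y‖ ≤ M₂) →
      (∀ y ∈ ball x ε, |V y| ≤ MV) →
      ε + ε ^ (2/(2+δ)) * M₁ + ε * M₂ + ε^2 * MV ≤ c →
    ∀ u : V2 → ℝ, ContinuousOn u (closedBall x ε) →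
      (∀ y ∈ ball x ε, DifferentiableAt ℝ u y) →
      IsWeakSol (ball x ε) W₁ W₂ V u →
      (∀ y ∈ sphere x ε, 0 < u y) →
      ∀ y ∈ ball x ε, 0 < u y :=
  ⟨1 / 4, by norm_num, fun δ hδ ε hε x W₁ W₂ V M₁ M₂ MV hM₁ hM₂ hMV hW₁ hW₂ hV hsmall u hu hu' hsol
    hpos => stmt7_general isOpen_ball subset_rfl hW₁ hW₂ hV
      (small_of_rpow_small hδ hε hM₁ hM₂ hMV hsmall) (by rwa [closure_ball x hε.ne']) hu' hsol
      (by rwa [frontier_ball x hε.ne'])⟩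
end
end

section
/- Carleman-type estimate in a set with small Poincaré constant: For every ε > 0 and C′ ≥ 1 there exists C > 0 independent of ε such that for every bounded open Ω ⊂ ℝ² with C_P(Ω) ≤ C′ε, every s ≥ 1, every φ ∈ C^∞(Ω;ℝ) with −Δφ ≥ s on Ω, and every u ∈ H²₀(Ω;ℝ): ε^{−4}∫_Ω e^{−φ}|u|² + s²∫_Ω e^{−φ}|u|² + ε^{−2}∫_Ω e^{−φ}|∇u|² + s∫_Ω e^{−φ}|∇u|² ≤ C∫_Ω e^{−φ}|Δu|². -/
open MeasureTheory Metric
open scoped RealInnerProductSpace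

noncomputable section

/-- The Laplacian `Δf = ∑ᵢ ∂²f/∂xᵢ²` on `ℝ²`. -/
def lap (f : V2 → ℝ) (x : V2) : ℝ :=
  ∑ i : Fin 2,
    fderiv ℝ (fun y => fderiv ℝ f y (EuclideanSpace.single i (1:ℝ))) x
      (EuclideanSpace.single i (1:ℝ))

/-!
Let `y` be a test function and `z = e^{-φ/2} y`. Then `e^{-φ/2} ∂̄y = ½(D₀ + iD₁)z`, where
`D_j = ∂_j + iA_j` is the covariant derivative of the magnetic potential `A = ½(∂₁φ, -∂₀φ)`, whose
field is `-½Δφ`. Commuting `D₀` with `D₁` shows that `4 ∫ |½(D₀ + iD₁)z|²` exceeds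
`4 ∫ |½(D₀ - iD₁)z|²` by `∫ -Δφ |z|²`; this gives the factor `s`. It also gives
`∫ |D₀z|² + |D₁z|² ≤ 4 ∫ |½(D₀ + iD₁)z|²`, and since `|∇|z|| ≤ |Dz|` (the diamagnetic inequality)
the Poincaré inequality applied to `|z|` gives the factor `ε⁻²`, with no auxiliary potential `Φ`.
Both estimates for `∂̄` are used twice, for `y = u` and for `y = ∂u`.
-/

open Filter Set
open scoped ContDiff Topology

section TestFunction

variable {E F G : Type*} [NormedAddCommGroup E] [NormedSpace ℝ E]
  [NormedAddCommGroup F] [NormedSpace ℝ F] [NormedAddCommGroup G] [NormedSpace ℝ G]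
  {Ω : Set E} {f g : E → F}

/-- Smooth functions with compact support in `Ω`; `H10c Ω` is by definition the case of real-valued
functions on the plane. -/
def IsTestFunction (Ω : Set E) (f : E → F) : Prop :=
  ContDiff ℝ ∞ f ∧ HasCompactSupport f ∧ tsupport f ⊆ Ω

namespace IsTestFunction

lemma eq_zero_of_notMem (hf : IsTestFunction Ω f) {x : E} (hx : x ∉ Ω) : f x = 0 :=
  image_eq_zero_of_notMem_tsupport fun h => hx (hf.2.2 h)

lemma differentiable (hf : IsTestFunction Ω f) : Differentiable ℝ f :=
  hf.1.differentiable (by simp)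

protected lemma add (hf : IsTestFunction Ω f) (hg : IsTestFunction Ω g) :
    IsTestFunction Ω (fun x => f x + g x) :=
  ⟨hf.1.add hg.1, hf.2.1.add hg.2.1, (tsupport_add f g).trans (union_subset hf.2.2 hg.2.2)⟩

lemma comp_left (hf : IsTestFunction Ω f) {k : F → G} (hk : ContDiff ℝ ∞ k) (hk0 : k 0 = 0) :
    IsTestFunction Ω (fun x => k (f x)) :=
  ⟨hk.comp hf.1, hf.2.1.comp_left hk0, (tsupport_comp_subset hk0 f).trans hf.2.2⟩

lemma const_mul {z : E → ℂ} (hz : IsTestFunction Ω z) (c : ℂ) :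
    IsTestFunction Ω (fun x => c * z x) :=
  hz.comp_left (contDiff_const.mul contDiff_id) (mul_zero c)

lemma fderiv_apply (hf : IsTestFunction Ω f) (v : E) :
    IsTestFunction Ω (fun x => fderiv ℝ f x v) :=
  ⟨(hf.1.fderiv_right (m := ∞) (by simp)).clm_apply contDiff_const, hf.2.1.fderiv_apply ℝ v,
    (tsupport_fderiv_apply_subset ℝ v).trans hf.2.2⟩

protected lemma smul (hΩ : IsOpen Ω) {a : E → ℝ} (ha : ContDiffOn ℝ ∞ a Ω)
    (hf : IsTestFunction Ω f) : IsTestFunction Ω (fun x => a x • f x) := by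
  have hsupp : tsupport (fun x => a x • f x) ⊆ tsupport f := tsupport_smul_subset_right a f
  refine ⟨contMDiff_iff_contDiff.1 (contMDiff_of_tsupport fun x hx => ?_),
    hf.2.1.smul_left, hsupp.trans hf.2.2⟩
  exact ((ha.contDiffAt (hΩ.mem_nhds (hf.2.2 (hsupp hx)))).smul hf.1.contDiffAt).contMDiffAt

lemma integrable [MeasurableSpace E] [BorelSpace E] {μ : Measure E}
    [IsFiniteMeasureOnCompacts μ] (hf : IsTestFunction Ω f) : Integrable f μ :=
  hf.1.continuous.integrable_of_hasCompactSupport hf.2.1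

end IsTestFunction

lemma fderiv_fderiv_apply_comm {x : E} (hf : ContDiffAt ℝ 2 f x) (v w : E) :
    fderiv ℝ (fun y => fderiv ℝ f y w) x v = fderiv ℝ (fun y => fderiv ℝ f y v) x w := by
  have hd : DifferentiableAt ℝ (fderiv ℝ f) x :=
    (hf.fderiv_right (m := 1) (by norm_num)).differentiableAt (by simp)
  have second_deriv : ∀ v w, fderiv ℝ (fun y => fderiv ℝ f y w) x v
      = fderiv ℝ (fderiv ℝ f) x v w := fun v w => by
    simp [fderiv_clm_apply hd (differentiableAt_const _)]
  rw [second_deriv, second_deriv, (hf.isSymmSndFDerivAt (by simp)).eq]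

end TestFunction

section IntegrationByParts

variable {E F : Type*} [NormedAddCommGroup E] [NormedSpace ℝ E]
  [NormedAddCommGroup F] [InnerProductSpace ℝ F] {Ω : Set E} {f g : E → F}

namespace IsTestFunction

protected lemma inner (hf : IsTestFunction Ω f) (hg : IsTestFunction Ω g) :
    IsTestFunction Ω (fun x => ⟪f x, g x⟫) := by
  have hsupp : Function.support (fun x => ⟪f x, g x⟫) ⊆ Function.support f := fun x hx hfx =>
    hx (by simp [hfx])
  exact ⟨hf.1.inner ℝ hg.1, hf.2.1.mono hsupp, (closure_mono hsupp).trans hf.2.2⟩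

lemma norm_sq (hf : IsTestFunction Ω f) : IsTestFunction Ω (fun x => ‖f x‖ ^ 2) :=
  hf.comp_left (contDiff_norm_sq ℝ) (by simp)

variable [FiniteDimensional ℝ E] [MeasurableSpace E] [BorelSpace E] {μ : Measure E}
  [μ.IsAddHaarMeasure]

lemma setIntegral_inner_fderiv_right (hf : IsTestFunction Ω f) (hg : IsTestFunction Ω g) (v : E) :
    ∫ x in Ω, ⟪f x, fderiv ℝ g x v⟫ ∂μ = -∫ x in Ω, ⟪fderiv ℝ f x v, g x⟫ ∂μ := by
  rw [setIntegral_eq_integral_of_forall_compl_eq_zero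
      fun x hx => (hf.inner (hg.fderiv_apply v)).eq_zero_of_notMem hx,
    setIntegral_eq_integral_of_forall_compl_eq_zero
      fun x hx => ((hf.fderiv_apply v).inner hg).eq_zero_of_notMem hx]
  exact integral_bilinear_fderiv_right_eq_neg_left_of_integrable (B := innerSL ℝ)
    ((hf.fderiv_apply v).inner hg).integrable (hf.inner (hg.fderiv_apply v)).integrable
    (hf.inner hg).integrable (fun x _ => hf.differentiable x) fun x _ => hg.differentiable x

lemma setIntegral_mul_inner_fderiv_self (hΩ : IsOpen Ω) {a : E → ℝ} (ha : ContDiffOn ℝ ∞ a Ω)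
    (hf : IsTestFunction Ω f) (v : E) :
    2 * ∫ x in Ω, a x * ⟪f x, fderiv ℝ f x v⟫ ∂μ = -∫ x in Ω, fderiv ℝ a x v * ‖f x‖ ^ 2 ∂μ := by
  have haf := hf.smul hΩ ha
  have product_rule : ∀ x ∈ Ω, ⟪f x, fderiv ℝ (fun y => a y • f y) x v⟫
      = a x * ⟪f x, fderiv ℝ f x v⟫ + fderiv ℝ a x v * ‖f x‖ ^ 2 := fun x hx => by
    have hax : DifferentiableAt ℝ a x :=
      (ha.contDiffAt (hΩ.mem_nhds hx)).differentiableAt (by simp)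
    rw [fderiv_fun_smul hax (hf.differentiable x)]
    simp [inner_add_right, real_inner_smul_right]
  have hint : IntegrableOn (fun x => a x * ⟪f x, fderiv ℝ f x v⟫) Ω μ :=
    ((hf.inner (hf.fderiv_apply v)).smul hΩ ha).integrable.integrableOn
  have hint' : IntegrableOn (fun x => fderiv ℝ a x v * ‖f x‖ ^ 2) Ω μ :=
    (hf.norm_sq.smul hΩ ((ha.fderiv_of_isOpen hΩ (m := ∞) (by simp)).clm_apply
      contDiffOn_const)).integrable.integrableOn
  have parts := hf.setIntegral_inner_fderiv_right haf v (μ := μ)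
  rw [setIntegral_congr_fun hΩ.measurableSet product_rule, integral_add hint hint'] at parts
  have symm : ∀ x, ⟪fderiv ℝ f x v, a x • f x⟫ = a x * ⟪f x, fderiv ℝ f x v⟫ := fun x => by
    rw [real_inner_smul_right, real_inner_comm]
  simp only [symm] at parts
  linarith

end IsTestFunction

lemma real_inner_I_mul_left (w z : ℂ) : ⟪Complex.I * w, z⟫ = -⟪w, Complex.I * z⟫ := by
  simp only [Complex.inner, map_mul, Complex.conj_I, Complex.mul_re, Complex.mul_im, Complex.neg_re,
    Complex.neg_im, Complex.I_re, Complex.I_im, Complex.conj_re, Complex.conj_im]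
  ring

lemma IsTestFunction.setIntegral_inner_fderiv_I_mul_fderiv [FiniteDimensional ℝ E]
    [MeasurableSpace E] [BorelSpace E] {μ : Measure E} [μ.IsAddHaarMeasure] {z : E → ℂ}
    (hz : IsTestFunction Ω z) (v w : E) :
    ∫ x in Ω, ⟪fderiv ℝ z x v, Complex.I * fderiv ℝ z x w⟫ ∂μ = 0 := by
  have fderiv_iz : ∀ x v, fderiv ℝ (fun y => Complex.I * z y) x v = Complex.I * fderiv ℝ z x v :=
    fun x v => by simp [fderiv_const_mul (hz.differentiable x)]
  have symmetric : ∀ v w, ∫ x in Ω, ⟪fderiv ℝ z x v, Complex.I * fderiv ℝ z x w⟫ ∂μ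
      = -∫ x in Ω, ⟪fderiv ℝ (fun y => fderiv ℝ z y v) x w, Complex.I * z x⟫ ∂μ := fun v w => by
    simpa only [fderiv_iz] using (hz.fderiv_apply v).setIntegral_inner_fderiv_right
      (hz.const_mul Complex.I) w (μ := μ)
  have skew : ∫ x in Ω, ⟪fderiv ℝ z x v, Complex.I * fderiv ℝ z x w⟫ ∂μ
      = -∫ x in Ω, ⟪fderiv ℝ z x w, Complex.I * fderiv ℝ z x v⟫ ∂μ := by
    rw [← integral_neg]
    congr with x
    rw [← real_inner_I_mul_left, real_inner_comm]
  have second_deriv_comm : ∀ x,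
      fderiv ℝ (fun y => fderiv ℝ z y v) x w = fderiv ℝ (fun y => fderiv ℝ z y w) x v := fun x =>
    fderiv_fderiv_apply_comm (contDiff_infty.1 hz.1 2).contDiffAt w v
  have exchange := symmetric v w
  simp only [second_deriv_comm] at exchange
  linarith [symmetric w v]

end IntegrationByParts

section SmoothedNorm

variable {F : Type*} [NormedAddCommGroup F] {δ : ℝ}

/-- The smooth approximation `√(‖w‖² + δ²) - δ` of the norm, shifted so that it vanishes at `0` and
hence preserves supports. -/
def smoothedNorm (δ : ℝ) (w : F) : ℝ := √(‖w‖ ^ 2 + δ ^ 2) - δ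

lemma smoothedNorm_zero (hδ : 0 ≤ δ) : smoothedNorm δ (0 : F) = 0 := by
  simp [smoothedNorm, Real.sqrt_sq hδ]

lemma norm_sq_sub_le_smoothedNorm_sq (hδ : 0 ≤ δ) (w : F) :
    ‖w‖ ^ 2 - 2 * δ * ‖w‖ ≤ smoothedNorm δ w ^ 2 := by
  have sq_root : √(‖w‖ ^ 2 + δ ^ 2) ^ 2 = ‖w‖ ^ 2 + δ ^ 2 := Real.sq_sqrt (by positivity)
  have root_le : √(‖w‖ ^ 2 + δ ^ 2) ≤ ‖w‖ + δ := by
    rw [Real.sqrt_le_left (by positivity)]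
    nlinarith [norm_nonneg w]
  rw [smoothedNorm]
  nlinarith

variable [InnerProductSpace ℝ F]

lemma contDiff_smoothedNorm (hδ : δ ≠ 0) : ContDiff ℝ ∞ (smoothedNorm δ : F → ℝ) :=
  (((contDiff_norm_sq ℝ).add contDiff_const).sqrt fun w => by positivity).sub contDiff_const

lemma fderiv_smoothedNorm (hδ : δ ≠ 0) (w h : F) :
    fderiv ℝ (smoothedNorm δ) w h = ⟪w, h⟫ / √(‖w‖ ^ 2 + δ ^ 2) := by
  have hpos : ‖w‖ ^ 2 + δ ^ 2 ≠ 0 := by positivity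
  have deriv := ((((hasFDerivAt_id w).norm_sq).add_const (δ ^ 2)).sqrt hpos).sub_const δ
  rw [show fderiv ℝ (smoothedNorm δ) w = _ from deriv.fderiv]
  simp only [id_eq, ContinuousLinearMap.comp_id, smul_apply, coe_innerSL_apply, smul_eq_mul,
    nsmul_eq_mul, Nat.cast_ofNat]
  field_simp

lemma abs_fderiv_smoothedNorm_le (hδ : δ ≠ 0) {w k : F} (hk : ⟪w, k⟫ = 0) (h : F) :
    |fderiv ℝ (smoothedNorm δ) w h| ≤ ‖h + k‖ := by
  have norm_le : ‖w‖ ≤ √(‖w‖ ^ 2 + δ ^ 2) := Real.le_sqrt_of_sq_le (by nlinarith)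
  have root_pos : 0 < √(‖w‖ ^ 2 + δ ^ 2) := Real.sqrt_pos.2 (by positivity)
  have inner_eq : ⟪w, h⟫ = ⟪w, h + k⟫ := by rw [inner_add_right, hk, add_zero]
  rw [fderiv_smoothedNorm hδ, abs_div, abs_of_pos root_pos, div_le_iff₀ root_pos, inner_eq]
  calc |⟪w, h + k⟫| ≤ ‖w‖ * ‖h + k‖ := abs_real_inner_le_norm _ _
    _ ≤ ‖h + k‖ * √(‖w‖ ^ 2 + δ ^ 2) := by rw [mul_comm]; gcongr

end SmoothedNorm

section Plane

variable {F : Type*} [NormedAddCommGroup F] [NormedSpace ℝ F]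

/-- The partial derivative `∂ᵢf` of a function on the plane. -/
def partialDeriv (i : Fin 2) (f : V2 → F) (x : V2) : F :=
  fderiv ℝ f x (EuclideanSpace.single i 1)

lemma lap_eq_partialDeriv (f : V2 → ℝ) (x : V2) :
    lap f x = partialDeriv 0 (partialDeriv 0 f) x + partialDeriv 1 (partialDeriv 1 f) x :=
  Fin.sum_univ_two _

lemma norm_gradient_sq (f : V2 → ℝ) (x : V2) :
    ‖gradient f x‖ ^ 2 = partialDeriv 0 f x ^ 2 + partialDeriv 1 f x ^ 2 := by
  have coord : ∀ i, gradient f x i = partialDeriv i f x := fun i => by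
    rw [partialDeriv, ← InnerProductSpace.toDual_symm_apply (𝕜 := ℝ) (y := fderiv ℝ f x),
      EuclideanSpace.inner_single_right]
    simp [gradient]
  simp [EuclideanSpace.norm_sq_eq, Fin.sum_univ_two, coord]

lemma contDiffOn_partialDeriv {Ω : Set V2} (hΩ : IsOpen Ω) {f : V2 → F} (hf : ContDiffOn ℝ ∞ f Ω)
    (i : Fin 2) : ContDiffOn ℝ ∞ (partialDeriv i f) Ω :=
  (hf.fderiv_of_isOpen hΩ (by simp)).clm_apply contDiffOn_const

lemma partialDeriv_sub {f g : V2 → F} {x : V2} (hf : DifferentiableAt ℝ f x)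
    (hg : DifferentiableAt ℝ g x) (i : Fin 2) :
    partialDeriv i (fun y => f y - g y) x = partialDeriv i f x - partialDeriv i g x := by
  rw [partialDeriv, fderiv_fun_sub hf hg, sub_apply, partialDeriv, partialDeriv]

lemma partialDeriv_const_mul {𝔸 : Type*} [NormedRing 𝔸] [NormedAlgebra ℝ 𝔸] {f : V2 → 𝔸} {x : V2}
    (hf : DifferentiableAt ℝ f x) (c : 𝔸) (i : Fin 2) :
    partialDeriv i (fun y => c * f y) x = c * partialDeriv i f x := by
  simp only [partialDeriv, fderiv_const_mul hf, smul_apply, smul_eq_mul]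

protected lemma IsTestFunction.partialDeriv {Ω : Set V2} {f : V2 → F} (hf : IsTestFunction Ω f)
    (i : Fin 2) : IsTestFunction Ω (partialDeriv i f) :=
  hf.fderiv_apply _

end Plane

section MagneticDerivative

variable {Ω : Set V2} {A : Fin 2 → V2 → ℝ} {z : V2 → ℂ} {x : V2}

/-- The covariant derivative `Dⱼz = (∂ⱼ + iAⱼ)z` of the magnetic potential `A`. -/
def covDeriv (A : Fin 2 → V2 → ℝ) (j : Fin 2) (z : V2 → ℂ) (x : V2) : ℂ :=
  partialDeriv j z x + A j x • (Complex.I * z x)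

/-- The magnetic field `∂₀A₁ - ∂₁A₀` of the potential `A`. -/
def magneticField (A : Fin 2 → V2 → ℝ) (x : V2) : ℝ :=
  partialDeriv 0 (A 1) x - partialDeriv 1 (A 0) x

/-- The magnetic Cauchy-Riemann operator `½(D₀ + iD₁)`. -/
def magneticDbar (A : Fin 2 → V2 → ℝ) (z : V2 → ℂ) (x : V2) : ℂ :=
  (1 / 2) * (covDeriv A 0 z x + Complex.I * covDeriv A 1 z x)

/-- The operator `½(D₀ - iD₁)`, minus the formal adjoint of `magneticDbar`. -/
def magneticDel (A : Fin 2 → V2 → ℝ) (z : V2 → ℂ) (x : V2) : ℂ :=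
  (1 / 2) * (covDeriv A 0 z x - Complex.I * covDeriv A 1 z x)

lemma norm_covDeriv_sq_add (A : Fin 2 → V2 → ℝ) (z : V2 → ℂ) (x : V2) :
    ‖covDeriv A 0 z x‖ ^ 2 + ‖covDeriv A 1 z x‖ ^ 2
      = 2 * (‖magneticDbar A z x‖ ^ 2 + ‖magneticDel A z x‖ ^ 2) := by
  have parallelogram := parallelogram_law_with_norm ℝ (covDeriv A 0 z x)
    (Complex.I * covDeriv A 1 z x)
  simp only [norm_mul, Complex.norm_I, one_mul] at parallelogram
  simp only [magneticDbar, magneticDel, norm_mul, mul_pow]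
  norm_num
  linarith

lemma norm_magneticDbar_sq_sub (A : Fin 2 → V2 → ℝ) (z : V2 → ℂ) (x : V2) :
    ‖magneticDbar A z x‖ ^ 2 - ‖magneticDel A z x‖ ^ 2
      = ⟪partialDeriv 0 z x, Complex.I * partialDeriv 1 z x⟫
        + A 0 x * ⟪z x, partialDeriv 1 z x⟫ - A 1 x * ⟪z x, partialDeriv 0 z x⟫ := by
  have polarization : ‖magneticDbar A z x‖ ^ 2 - ‖magneticDel A z x‖ ^ 2
      = ⟪covDeriv A 0 z x, Complex.I * covDeriv A 1 z x⟫ := by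
    simp only [magneticDbar, magneticDel, norm_mul, mul_pow, norm_add_sq_real, norm_sub_sq_real]
    norm_num
    ring
  rw [polarization]
  simp only [covDeriv, Complex.inner, Complex.real_smul, map_add, map_mul, Complex.conj_ofReal,
    Complex.conj_I, Complex.mul_re, Complex.mul_im, Complex.add_re, Complex.add_im, Complex.neg_re,
    Complex.neg_im, Complex.I_re, Complex.I_im, Complex.ofReal_re, Complex.ofReal_im,
    Complex.conj_re, Complex.conj_im]
  ring

namespace IsTestFunction

protected lemma covDeriv (hΩ : IsOpen Ω) (hA : ∀ j, ContDiffOn ℝ ∞ (A j) Ω)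
    (hz : IsTestFunction Ω z) (j : Fin 2) : IsTestFunction Ω (covDeriv A j z) :=
  (hz.partialDeriv j).add ((hz.const_mul Complex.I).smul hΩ (hA j))

protected lemma magneticDbar (hΩ : IsOpen Ω) (hA : ∀ j, ContDiffOn ℝ ∞ (A j) Ω)
    (hz : IsTestFunction Ω z) : IsTestFunction Ω (magneticDbar A z) :=
  ((hz.covDeriv hΩ hA 0).add ((hz.covDeriv hΩ hA 1).const_mul Complex.I)).const_mul (1 / 2)

protected lemma magneticDel (hΩ : IsOpen Ω) (hA : ∀ j, ContDiffOn ℝ ∞ (A j) Ω)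
    (hz : IsTestFunction Ω z) : IsTestFunction Ω (magneticDel A z) := by
  simpa only [magneticDel, sub_eq_add_neg, neg_mul] using!
    ((hz.covDeriv hΩ hA 0).add ((hz.covDeriv hΩ hA 1).const_mul (-Complex.I))).const_mul (1 / 2)

end IsTestFunction

lemma setIntegral_magneticField_mul_norm_sq (hΩ : IsOpen Ω) (hA : ∀ j, ContDiffOn ℝ ∞ (A j) Ω)
    (hz : IsTestFunction Ω z) :
    ∫ x in Ω, magneticField A x * ‖z x‖ ^ 2 = 2 * (∫ x in Ω, A 0 x * ⟪z x, partialDeriv 1 z x⟫)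
      - 2 * ∫ x in Ω, A 1 x * ⟪z x, partialDeriv 0 z x⟫ := by
  have hint : ∀ i j, IntegrableOn (fun x => partialDeriv i (A j) x * ‖z x‖ ^ 2) Ω := fun i j =>
    (hz.norm_sq.smul hΩ (contDiffOn_partialDeriv hΩ (hA j) i)).integrable.integrableOn
  have by_parts : ∀ i j, 2 * ∫ x in Ω, A j x * ⟪z x, partialDeriv i z x⟫
      = -∫ x in Ω, partialDeriv i (A j) x * ‖z x‖ ^ 2 := fun i j =>
    hz.setIntegral_mul_inner_fderiv_self hΩ (hA j) _
  rw [by_parts, by_parts]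
  simp only [magneticField, sub_mul]
  rw [integral_sub (hint 0 1) (hint 1 0)]
  ring

lemma setIntegral_norm_magneticDbar_sq (hΩ : IsOpen Ω) (hA : ∀ j, ContDiffOn ℝ ∞ (A j) Ω)
    (hz : IsTestFunction Ω z) :
    ∫ x in Ω, ‖magneticDbar A z x‖ ^ 2 = (∫ x in Ω, ‖magneticDel A z x‖ ^ 2)
      + (∫ x in Ω, magneticField A x * ‖z x‖ ^ 2) / 2 := by
  have dbar_int : IntegrableOn (fun x => ‖magneticDbar A z x‖ ^ 2) Ω :=
    (hz.magneticDbar hΩ hA).norm_sq.integrable.integrableOn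
  have del_int : IntegrableOn (fun x => ‖magneticDel A z x‖ ^ 2) Ω :=
    (hz.magneticDel hΩ hA).norm_sq.integrable.integrableOn
  have curl_int : IntegrableOn (fun x => ⟪partialDeriv 0 z x, Complex.I * partialDeriv 1 z x⟫) Ω :=
    ((hz.partialDeriv 0).inner ((hz.partialDeriv 1).const_mul _)).integrable.integrableOn
  have potential_int : ∀ i j, IntegrableOn (fun x => A j x * ⟪z x, partialDeriv i z x⟫) Ω :=
    fun i j => ((hz.inner (hz.partialDeriv i)).smul hΩ (hA j)).integrable.integrableOn
  have difference : (∫ x in Ω, ‖magneticDbar A z x‖ ^ 2) - ∫ x in Ω, ‖magneticDel A z x‖ ^ 2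
      = (∫ x in Ω, A 0 x * ⟪z x, partialDeriv 1 z x⟫)
        - ∫ x in Ω, A 1 x * ⟪z x, partialDeriv 0 z x⟫ := by
    rw [← integral_sub dbar_int del_int]
    simp only [norm_magneticDbar_sq_sub]
    have curl_zero : ∫ x in Ω, ⟪partialDeriv 0 z x, Complex.I * partialDeriv 1 z x⟫ = 0 :=
      hz.setIntegral_inner_fderiv_I_mul_fderiv _ _
    rw [integral_sub (by exact curl_int.add (potential_int 1 0)) (potential_int 0 1),
      integral_add curl_int (potential_int 1 0), curl_zero, zero_add]
  linarith [setIntegral_magneticField_mul_norm_sq hΩ hA hz]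

/-- The inequality `C_P(Ω) ≤ P` for the Poincaré constant of `Ω`. -/
def PoincareInequality (Ω : Set V2) (P : ℝ) : Prop :=
  ∀ v, H10c Ω v → ∫ x in Ω, v x ^ 2 ≤ P ^ 2 * ∫ x in Ω, ‖gradient v x‖ ^ 2

lemma norm_gradient_smoothedNorm_comp_sq_le {δ : ℝ} (hδ : δ ≠ 0) (hz : DifferentiableAt ℝ z x) :
    ‖gradient (fun y => smoothedNorm δ (z y)) x‖ ^ 2
      ≤ ‖covDeriv A 0 z x‖ ^ 2 + ‖covDeriv A 1 z x‖ ^ 2 := by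
  have orthogonal : ∀ j, ⟪z x, A j x • (Complex.I * z x)⟫ = 0 := fun j => by
    have := real_inner_I_mul_left (z x) (z x)
    rw [real_inner_comm] at this
    rw [real_inner_smul_right]
    linear_combination A j x / 2 * this
  have diamagnetic : ∀ j,
      |partialDeriv j (fun y => smoothedNorm δ (z y)) x| ≤ ‖covDeriv A j z x‖ := fun j => by
    rw [partialDeriv, fderiv_fun_comp x ((contDiff_smoothedNorm hδ).differentiable (by simp) _) hz]
    exact abs_fderiv_smoothedNorm_le hδ (orthogonal j) _
  rw [norm_gradient_sq]
  exact add_le_add (sq_le_sq' (neg_le_of_abs_le (diamagnetic 0)) (le_of_abs_le (diamagnetic 0)))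
    (sq_le_sq' (neg_le_of_abs_le (diamagnetic 1)) (le_of_abs_le (diamagnetic 1)))

theorem PoincareInequality.setIntegral_norm_sq_le_covDeriv {P : ℝ} (hP : PoincareInequality Ω P)
    (hΩ : IsOpen Ω) (hA : ∀ j, ContDiffOn ℝ ∞ (A j) Ω) (hz : IsTestFunction Ω z) :
    ∫ x in Ω, ‖z x‖ ^ 2
      ≤ P ^ 2 * ∫ x in Ω, (‖covDeriv A 0 z x‖ ^ 2 + ‖covDeriv A 1 z x‖ ^ 2) := by
  have norm_int : IntegrableOn (fun x => ‖z x‖) Ω := hz.integrable.integrableOn.norm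
  have norm_sq_int : IntegrableOn (fun x => ‖z x‖ ^ 2) Ω := hz.norm_sq.integrable.integrableOn
  have cov_int : IntegrableOn (fun x => ‖covDeriv A 0 z x‖ ^ 2 + ‖covDeriv A 1 z x‖ ^ 2) Ω :=
    ((hz.covDeriv hΩ hA 0).norm_sq.add (hz.covDeriv hΩ hA 1).norm_sq).integrable.integrableOn
  have approx : ∀ δ ∈ Ioi (0 : ℝ), (∫ x in Ω, ‖z x‖ ^ 2) - 2 * δ * ∫ x in Ω, ‖z x‖
      ≤ P ^ 2 * ∫ x in Ω, (‖covDeriv A 0 z x‖ ^ 2 + ‖covDeriv A 1 z x‖ ^ 2) := fun δ hδ => by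
    have hδ0 : δ ≠ 0 := (mem_Ioi.1 hδ).ne'
    have hρ : IsTestFunction Ω (fun x => smoothedNorm δ (z x)) :=
      hz.comp_left (contDiff_smoothedNorm hδ0) (smoothedNorm_zero hδ.le)
    calc (∫ x in Ω, ‖z x‖ ^ 2) - 2 * δ * ∫ x in Ω, ‖z x‖
        = ∫ x in Ω, (‖z x‖ ^ 2 - 2 * δ * ‖z x‖) := by
          rw [integral_sub norm_sq_int (norm_int.const_mul _), integral_const_mul]
      _ ≤ ∫ x in Ω, smoothedNorm δ (z x) ^ 2 := by
          have hρ_int : IntegrableOn (fun x => smoothedNorm δ (z x) ^ 2) Ω := by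
            simpa using hρ.norm_sq.integrable.integrableOn
          exact integral_mono (norm_sq_int.sub (norm_int.const_mul _)) hρ_int
            fun x => norm_sq_sub_le_smoothedNorm_sq hδ.le (z x)
      _ ≤ P ^ 2 * ∫ x in Ω, ‖gradient (fun y => smoothedNorm δ (z y)) x‖ ^ 2 := hP _ hρ
      _ ≤ _ := by
          refine mul_le_mul_of_nonneg_left (integral_mono_of_nonneg (ae_of_all _ fun x => ?_)
            cov_int (ae_of_all _ fun x => ?_)) (sq_nonneg P)
          · positivity
          · exact norm_gradient_smoothedNorm_comp_sq_le hδ0 (hz.differentiable x)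
  have limit : Tendsto (fun δ : ℝ => (∫ x in Ω, ‖z x‖ ^ 2) - 2 * δ * ∫ x in Ω, ‖z x‖) (𝓝[>] 0)
      (𝓝 (∫ x in Ω, ‖z x‖ ^ 2)) := by
    have : Continuous fun δ : ℝ => (∫ x in Ω, ‖z x‖ ^ 2) - 2 * δ * ∫ x in Ω, ‖z x‖ := by fun_prop
    simpa [ContinuousWithinAt] using this.continuousWithinAt (s := Ioi 0) (x := 0)
  exact le_of_tendsto limit (eventually_mem_nhdsWithin.mono approx)

theorem mul_setIntegral_norm_sq_le_magneticDbar {s : ℝ} (hΩ : IsOpen Ω)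
    (hA : ∀ j, ContDiffOn ℝ ∞ (A j) Ω) (hs : ∀ x ∈ Ω, s ≤ 2 * magneticField A x)
    (hz : IsTestFunction Ω z) :
    s * ∫ x in Ω, ‖z x‖ ^ 2 ≤ 4 * ∫ x in Ω, ‖magneticDbar A z x‖ ^ 2 := by
  have field_smooth : ContDiffOn ℝ ∞ (magneticField A) Ω :=
    (contDiffOn_partialDeriv hΩ (hA 1) 0).sub (contDiffOn_partialDeriv hΩ (hA 0) 1)
  have del_nonneg : 0 ≤ ∫ x in Ω, ‖magneticDel A z x‖ ^ 2 := by positivity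
  have field_ge : s * ∫ x in Ω, ‖z x‖ ^ 2 ≤ 2 * ∫ x in Ω, magneticField A x * ‖z x‖ ^ 2 := by
    rw [← integral_const_mul, ← integral_const_mul]
    refine setIntegral_mono_on (hz.norm_sq.integrable.integrableOn.const_mul s)
      ((hz.norm_sq.smul hΩ field_smooth).integrable.integrableOn.const_mul 2)
      hΩ.measurableSet fun x hx => ?_
    rw [← mul_assoc]
    exact mul_le_mul_of_nonneg_right (hs x hx) (by positivity)
  linarith [setIntegral_norm_magneticDbar_sq hΩ hA hz]

theorem PoincareInequality.setIntegral_norm_sq_le_magneticDbar {P : ℝ}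
    (hP : PoincareInequality Ω P) (hΩ : IsOpen Ω) (hA : ∀ j, ContDiffOn ℝ ∞ (A j) Ω)
    (hB : ∀ x ∈ Ω, 0 ≤ magneticField A x) (hz : IsTestFunction Ω z) :
    ∫ x in Ω, ‖z x‖ ^ 2 ≤ P ^ 2 * (4 * ∫ x in Ω, ‖magneticDbar A z x‖ ^ 2) := by
  have field_nonneg : 0 ≤ ∫ x in Ω, magneticField A x * ‖z x‖ ^ 2 :=
    setIntegral_nonneg hΩ.measurableSet fun x hx => mul_nonneg (hB x hx) (by positivity)
  refine (hP.setIntegral_norm_sq_le_covDeriv hΩ hA hz).trans ?_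
  gcongr
  simp only [norm_covDeriv_sq_add]
  rw [integral_const_mul, integral_add (hz.magneticDbar hΩ hA).norm_sq.integrable.integrableOn
    (hz.magneticDel hΩ hA).norm_sq.integrable.integrableOn]
  linarith [setIntegral_norm_magneticDbar_sq hΩ hA hz]

end MagneticDerivative

section CauchyRiemann

variable {Ω : Set V2} {φ : V2 → ℝ} {y : V2 → ℂ}

/-- The Cauchy-Riemann operator `∂̄ = ½(∂₀ + i∂₁)`. -/
def dbar (y : V2 → ℂ) (x : V2) : ℂ :=
  (1 / 2) * (partialDeriv 0 y x + Complex.I * partialDeriv 1 y x)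

/-- The magnetic potential `½(∂₁φ, -∂₀φ)` produced by conjugating `dbar` with `e^{-φ/2}`. -/
def weightPotential (φ : V2 → ℝ) : Fin 2 → V2 → ℝ :=
  ![fun x => (1 / 2) * partialDeriv 1 φ x, fun x => -(1 / 2) * partialDeriv 0 φ x]

lemma contDiffOn_weightPotential (hΩ : IsOpen Ω) (hφ : ContDiffOn ℝ ∞ φ Ω) (j : Fin 2) :
    ContDiffOn ℝ ∞ (weightPotential φ j) Ω := by
  fin_cases j
  · exact contDiffOn_const.mul (contDiffOn_partialDeriv hΩ hφ 1)
  · exact contDiffOn_const.mul (contDiffOn_partialDeriv hΩ hφ 0)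

lemma magneticField_weightPotential (hΩ : IsOpen Ω) (hφ : ContDiffOn ℝ ∞ φ Ω) {x : V2}
    (hx : x ∈ Ω) : magneticField (weightPotential φ) x = -lap φ x / 2 := by
  have hd : ∀ j, DifferentiableAt ℝ (partialDeriv j φ) x := fun j =>
    ((contDiffOn_partialDeriv hΩ hφ j).contDiffAt (hΩ.mem_nhds hx)).differentiableAt (by simp)
  simp only [magneticField, weightPotential, Matrix.cons_val_zero, Matrix.cons_val_one,
    partialDeriv_const_mul (hd _), lap_eq_partialDeriv]
  ring

lemma magneticDbar_weightPotential_exp_smul {x : V2} (hφ : DifferentiableAt ℝ φ x)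
    (hy : DifferentiableAt ℝ y x) :
    magneticDbar (weightPotential φ) (fun x => Real.exp (-φ x / 2) • y x) x
      = Real.exp (-φ x / 2) • dbar y x := by
  have product_rule : ∀ j, partialDeriv j (fun x => Real.exp (-φ x / 2) • y x) x
      = Real.exp (-φ x / 2) • (partialDeriv j y x - (partialDeriv j φ x / 2) • y x) := fun j => by
    have hexp : HasFDerivAt (fun x => Real.exp (-φ x / 2))
        (Real.exp (-φ x / 2) • (2⁻¹ : ℝ) • -fderiv ℝ φ x) x :=
      (hφ.hasFDerivAt.neg.mul_const (2⁻¹ : ℝ)).exp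
    rw [partialDeriv, fderiv_fun_smul hexp.differentiableAt hy, hexp.fderiv]
    simp only [partialDeriv, add_apply, smul_apply, neg_apply, ContinuousLinearMap.smulRight_apply,
      smul_eq_mul, Complex.real_smul]
    push_cast
    ring
  simp only [magneticDbar, covDeriv, product_rule, weightPotential, dbar, Matrix.cons_val_zero,
    Matrix.cons_val_one]
  generalize Real.exp (-φ x / 2) = r
  simp only [Complex.real_smul]
  push_cast
  linear_combination (-(r * partialDeriv 0 φ x * y x / 4) : ℂ) * Complex.I_sq

lemma norm_exp_neg_half_smul_sq (t : ℝ) (w : ℂ) :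
    ‖Real.exp (-t / 2) • w‖ ^ 2 = Real.exp (-t) * ‖w‖ ^ 2 := by
  rw [norm_smul, mul_pow, Real.norm_eq_abs, Real.abs_exp, ← Real.exp_nat_mul]
  congr 2
  push_cast
  ring

protected lemma IsTestFunction.exp_neg_half_smul (hΩ : IsOpen Ω) (hφ : ContDiffOn ℝ ∞ φ Ω)
    (hy : IsTestFunction Ω y) : IsTestFunction Ω (fun x => Real.exp (-φ x / 2) • y x) :=
  hy.smul hΩ (hφ.neg.div_const 2).exp

lemma setIntegral_norm_magneticDbar_weightPotential_sq (hΩ : IsOpen Ω) (hφ : ContDiffOn ℝ ∞ φ Ω)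
    (hy : IsTestFunction Ω y) :
    ∫ x in Ω, ‖magneticDbar (weightPotential φ) (fun x => Real.exp (-φ x / 2) • y x) x‖ ^ 2
      = ∫ x in Ω, Real.exp (-φ x) * ‖dbar y x‖ ^ 2 :=
  setIntegral_congr_fun hΩ.measurableSet fun x hx => by
    have hφx := (hφ.contDiffAt (hΩ.mem_nhds hx)).differentiableAt (by simp)
    simp only [magneticDbar_weightPotential_exp_smul hφx (hy.differentiable x),
      norm_exp_neg_half_smul_sq]

theorem mul_setIntegral_exp_neg_mul_norm_sq_le_dbar {s : ℝ} (hΩ : IsOpen Ω)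
    (hφ : ContDiffOn ℝ ∞ φ Ω) (hs : ∀ x ∈ Ω, s ≤ -lap φ x) (hy : IsTestFunction Ω y) :
    s * ∫ x in Ω, Real.exp (-φ x) * ‖y x‖ ^ 2
      ≤ 4 * ∫ x in Ω, Real.exp (-φ x) * ‖dbar y x‖ ^ 2 := by
  have field_ge : ∀ x ∈ Ω, s ≤ 2 * magneticField (weightPotential φ) x := fun x hx => by
    rw [magneticField_weightPotential hΩ hφ hx]
    linarith [hs x hx]
  simpa only [norm_exp_neg_half_smul_sq, setIntegral_norm_magneticDbar_weightPotential_sq hΩ hφ hy]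
    using mul_setIntegral_norm_sq_le_magneticDbar hΩ (contDiffOn_weightPotential hΩ hφ) field_ge
      (hy.exp_neg_half_smul hΩ hφ)

theorem PoincareInequality.setIntegral_exp_neg_mul_norm_sq_le_dbar {P : ℝ}
    (hP : PoincareInequality Ω P) (hΩ : IsOpen Ω) (hφ : ContDiffOn ℝ ∞ φ Ω)
    (hlap : ∀ x ∈ Ω, 0 ≤ -lap φ x) (hy : IsTestFunction Ω y) :
    ∫ x in Ω, Real.exp (-φ x) * ‖y x‖ ^ 2
      ≤ P ^ 2 * (4 * ∫ x in Ω, Real.exp (-φ x) * ‖dbar y x‖ ^ 2) := by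
  have field_nonneg : ∀ x ∈ Ω, 0 ≤ magneticField (weightPotential φ) x := fun x hx => by
    rw [magneticField_weightPotential hΩ hφ hx]
    linarith [hlap x hx]
  simpa only [norm_exp_neg_half_smul_sq, setIntegral_norm_magneticDbar_weightPotential_sq hΩ hφ hy]
    using hP.setIntegral_norm_sq_le_magneticDbar hΩ (contDiffOn_weightPotential hΩ hφ) field_nonneg
      (hy.exp_neg_half_smul hΩ hφ)

end CauchyRiemann

section RealValued

variable {Ω : Set V2} {u : V2 → ℝ}

/-- The Wirtinger derivative `∂u = ½(∂₀u - i∂₁u)` of a real-valued function. -/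
def del (u : V2 → ℝ) (x : V2) : ℂ :=
  (1 / 2) * (partialDeriv 0 u x - Complex.I * partialDeriv 1 u x)

lemma norm_half_mul_add_I_mul_sq (a b : ℝ) :
    ‖(1 / 2) * (a + Complex.I * b)‖ ^ 2 = (a ^ 2 + b ^ 2) / 4 := by
  rw [norm_mul, mul_pow, mul_comm Complex.I, Complex.norm_add_mul_I, Real.sq_sqrt (by positivity)]
  norm_num
  ring

lemma norm_del_sq (u : V2 → ℝ) (x : V2) : ‖del u x‖ ^ 2 = ‖gradient u x‖ ^ 2 / 4 := by
  have := norm_half_mul_add_I_mul_sq (partialDeriv 0 u x) (-partialDeriv 1 u x)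
  rw [Complex.ofReal_neg, mul_neg, ← sub_eq_add_neg, neg_sq] at this
  rw [norm_gradient_sq, ← this, del]

lemma partialDeriv_ofReal {x : V2} (hu : DifferentiableAt ℝ u x) (i : Fin 2) :
    partialDeriv i (fun y => (u y : ℂ)) x = partialDeriv i u x :=
  congrArg (fun L : V2 →L[ℝ] ℂ => L (EuclideanSpace.single i 1))
    (Complex.ofRealCLM.hasFDerivAt.comp x hu.hasFDerivAt).fderiv

lemma norm_dbar_ofReal_sq {x : V2} (hu : DifferentiableAt ℝ u x) :
    ‖dbar (fun y => (u y : ℂ)) x‖ ^ 2 = ‖gradient u x‖ ^ 2 / 4 := by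
  rw [norm_gradient_sq, ← norm_half_mul_add_I_mul_sq, dbar, partialDeriv_ofReal hu,
    partialDeriv_ofReal hu]

lemma IsTestFunction.ofReal (hu : IsTestFunction Ω u) : IsTestFunction Ω (fun x => (u x : ℂ)) :=
  hu.comp_left Complex.ofRealCLM.contDiff Complex.ofReal_zero

protected lemma IsTestFunction.del (hu : IsTestFunction Ω u) : IsTestFunction Ω (del u) := by
  simpa only [del, sub_eq_add_neg, neg_mul] using! ((hu.partialDeriv 0).ofReal.add
    ((hu.partialDeriv 1).ofReal.const_mul (-Complex.I))).const_mul (1 / 2)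

lemma dbar_del (hu : IsTestFunction Ω u) (x : V2) : dbar (del u) x = lap u x / 4 := by
  have second_deriv_comm : partialDeriv 1 (partialDeriv 0 u) x
      = partialDeriv 0 (partialDeriv 1 u) x :=
    fderiv_fderiv_apply_comm (contDiff_infty.1 hu.1 2).contDiffAt _ _
  have hd : ∀ j, DifferentiableAt ℝ (fun x => ((partialDeriv j u x : ℝ) : ℂ)) x := fun j =>
    (hu.partialDeriv j).ofReal.differentiable x
  have partial_del : ∀ i, partialDeriv i (del u) x
      = (1 / 2) * ((partialDeriv i (partialDeriv 0 u) x : ℝ)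
        - Complex.I * (partialDeriv i (partialDeriv 1 u) x : ℝ)) := fun i => by
    rw [← partialDeriv_ofReal ((hu.partialDeriv 0).differentiable x),
      ← partialDeriv_ofReal ((hu.partialDeriv 1).differentiable x),
      ← partialDeriv_const_mul (hd 1), ← partialDeriv_sub (hd 0) ((hd 1).const_mul _),
      ← partialDeriv_const_mul ((hd 0).fun_sub ((hd 1).const_mul _))]
    rfl
  rw [dbar, partial_del, partial_del, second_deriv_comm, lap_eq_partialDeriv]
  push_cast
  linear_combination (-((partialDeriv 1 (partialDeriv 1 u) x : ℝ) : ℂ) / 4) * Complex.I_sq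

lemma norm_dbar_del_sq (hu : IsTestFunction Ω u) (x : V2) :
    ‖dbar (del u) x‖ ^ 2 = lap u x ^ 2 / 16 := by
  rw [dbar_del hu, norm_div, div_pow, Complex.norm_real, Real.norm_eq_abs, sq_abs]
  norm_num

variable {φ : V2 → ℝ} {s P : ℝ}

lemma mul_setIntegral_exp_neg_mul_sq_le_gradient (hΩ : IsOpen Ω) (hφ : ContDiffOn ℝ ∞ φ Ω)
    (hs : ∀ x ∈ Ω, s ≤ -lap φ x) (hu : IsTestFunction Ω u) :
    s * ∫ x in Ω, Real.exp (-φ x) * u x ^ 2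
      ≤ ∫ x in Ω, Real.exp (-φ x) * ‖gradient u x‖ ^ 2 := by
  have := mul_setIntegral_exp_neg_mul_norm_sq_le_dbar hΩ hφ hs hu.ofReal
  simp only [Complex.norm_real, Real.norm_eq_abs, sq_abs, norm_dbar_ofReal_sq (hu.differentiable _),
    ← mul_div_assoc, integral_div] at this
  linarith

lemma mul_setIntegral_exp_neg_mul_norm_gradient_sq_le_lap (hΩ : IsOpen Ω)
    (hφ : ContDiffOn ℝ ∞ φ Ω) (hs : ∀ x ∈ Ω, s ≤ -lap φ x) (hu : IsTestFunction Ω u) :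
    s * ∫ x in Ω, Real.exp (-φ x) * ‖gradient u x‖ ^ 2
      ≤ ∫ x in Ω, Real.exp (-φ x) * lap u x ^ 2 := by
  have := mul_setIntegral_exp_neg_mul_norm_sq_le_dbar hΩ hφ hs hu.del
  simp only [norm_del_sq, norm_dbar_del_sq hu, ← mul_div_assoc, integral_div] at this
  linarith

namespace PoincareInequality

lemma setIntegral_exp_neg_mul_sq_le_gradient (hP : PoincareInequality Ω P) (hΩ : IsOpen Ω)
    (hφ : ContDiffOn ℝ ∞ φ Ω) (hlap : ∀ x ∈ Ω, 0 ≤ -lap φ x) (hu : IsTestFunction Ω u) :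
    ∫ x in Ω, Real.exp (-φ x) * u x ^ 2
      ≤ P ^ 2 * ∫ x in Ω, Real.exp (-φ x) * ‖gradient u x‖ ^ 2 := by
  have := hP.setIntegral_exp_neg_mul_norm_sq_le_dbar hΩ hφ hlap hu.ofReal
  simp only [Complex.norm_real, Real.norm_eq_abs, sq_abs, norm_dbar_ofReal_sq (hu.differentiable _),
    ← mul_div_assoc, integral_div] at this
  linarith

lemma setIntegral_exp_neg_mul_norm_gradient_sq_le_lap (hP : PoincareInequality Ω P)
    (hΩ : IsOpen Ω) (hφ : ContDiffOn ℝ ∞ φ Ω) (hlap : ∀ x ∈ Ω, 0 ≤ -lap φ x)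
    (hu : IsTestFunction Ω u) :
    ∫ x in Ω, Real.exp (-φ x) * ‖gradient u x‖ ^ 2
      ≤ P ^ 2 * ∫ x in Ω, Real.exp (-φ x) * lap u x ^ 2 := by
  have := hP.setIntegral_exp_neg_mul_norm_sq_le_dbar hΩ hφ hlap hu.del
  simp only [norm_del_sq, norm_dbar_del_sq hu, ← mul_div_assoc, integral_div] at this
  linarith

end PoincareInequality

end RealValued

theorem stmt17_general {Ω : Set V2} {C' ε s : ℝ} {φ u : V2 → ℝ} (hε : 0 < ε) (hΩ : IsOpen Ω)
    (hP : PoincareInequality Ω (C' * ε)) (hs : 0 ≤ s) (hφ : ContDiffOn ℝ ∞ φ Ω)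
    (hlap : ∀ x ∈ Ω, s ≤ -lap φ x) (hu : H10c Ω u) :
    ε ^ (-4 : ℤ) * (∫ x in Ω, Real.exp (-φ x) * u x ^ 2)
        + s ^ 2 * (∫ x in Ω, Real.exp (-φ x) * u x ^ 2)
        + ε ^ (-2 : ℤ) * (∫ x in Ω, Real.exp (-φ x) * ‖gradient u x‖ ^ 2)
        + s * (∫ x in Ω, Real.exp (-φ x) * ‖gradient u x‖ ^ 2)
      ≤ (C' ^ 4 + C' ^ 2 + 2) * ∫ x in Ω, Real.exp (-φ x) * lap u x ^ 2 := by
  have hlap0 : ∀ x ∈ Ω, 0 ≤ -lap φ x := fun x hx => hs.trans (hlap x hx)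
  have poincare_u := hP.setIntegral_exp_neg_mul_sq_le_gradient hΩ hφ hlap0 hu
  have poincare_grad := hP.setIntegral_exp_neg_mul_norm_gradient_sq_le_lap hΩ hφ hlap0 hu
  have carleman_u := mul_setIntegral_exp_neg_mul_sq_le_gradient hΩ hφ hlap hu
  have carleman_grad := mul_setIntegral_exp_neg_mul_norm_gradient_sq_le_lap hΩ hφ hlap hu
  set U := ∫ x in Ω, Real.exp (-φ x) * u x ^ 2
  set G := ∫ x in Ω, Real.exp (-φ x) * ‖gradient u x‖ ^ 2
  set D := ∫ x in Ω, Real.exp (-φ x) * lap u x ^ 2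
  have eps_U : ε ^ (-4 : ℤ) * U ≤ C' ^ 4 * D := calc
    ε ^ (-4 : ℤ) * U ≤ ε ^ (-4 : ℤ) * ((C' * ε) ^ 2 * ((C' * ε) ^ 2 * D)) := by
      gcongr
      exact poincare_u.trans (by gcongr)
    _ = C' ^ 4 * D := by field_simp
  have eps_G : ε ^ (-2 : ℤ) * G ≤ C' ^ 2 * D := calc
    ε ^ (-2 : ℤ) * G ≤ ε ^ (-2 : ℤ) * ((C' * ε) ^ 2 * D) := by gcongr
    _ = C' ^ 2 * D := by field_simp
  have s_U : s ^ 2 * U ≤ D := calc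
    s ^ 2 * U = s * (s * U) := by ring
    _ ≤ s * G := by gcongr
    _ ≤ D := carleman_grad
  linarith

/-- Carleman-type estimate in a bounded open set with small Poincaré constant:
for `-Δφ ≥ s ≥ 1`,
`ε⁻⁴∫e^{-φ}u² + s²∫e^{-φ}u² + ε⁻²∫e^{-φ}|∇u|² + s∫e^{-φ}|∇u|² ≤ C∫e^{-φ}|Δu|²`. -/
theorem stmt17 (C' : ℝ) (hC' : 1 ≤ C') : ∃ C : ℝ, 0 < C ∧
    ∀ (ε : ℝ), 0 < ε → ∀ (Ω : Set V2), IsOpen Ω → Bornology.IsBounded Ω →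
    (∀ v, H10c Ω v → (∫ x in Ω, (v x)^2) ≤ (C'*ε)^2 * ∫ x in Ω, ‖gradient v x‖^2) →
    ∀ (s : ℝ), 1 ≤ s → ∀ (φ : V2 → ℝ), ContDiffOn ℝ (⊤ : ℕ∞) φ Ω →
      (∀ x ∈ Ω, s ≤ -(lap φ x)) →
    ∀ u, H10c Ω u →
      ε^(-4 : ℤ) * (∫ x in Ω, Real.exp (-(φ x)) * (u x)^2)
        + s^2 * (∫ x in Ω, Real.exp (-(φ x)) * (u x)^2)
        + ε^(-2 : ℤ) * (∫ x in Ω, Real.exp (-(φ x)) * ‖gradient u x‖^2)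
        + s * (∫ x in Ω, Real.exp (-(φ x)) * ‖gradient u x‖^2)
      ≤ C * ∫ x in Ω, Real.exp (-(φ x)) * (lap u x)^2 :=
  ⟨C' ^ 4 + C' ^ 2 + 2, by positivity, fun _ hε _ hΩ _ hP _ hs _ hφ hlap _ hu =>
    stmt17_general hε hΩ hP (zero_le_one.trans hs) hφ hlap hu⟩
end
end
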